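/- arXiv:1605.07873 — 4 statements merged into one kernel-verified Lean document; each statement's English description precedes it below -/
import Mathlib

section
/- Let (qₙ) satisfy Hypothesis (H) with parameters (γ,ν). For n ≥ 2 define p(n,k) = Σ_{λ∈𝒫ₙ} qₙ(λ)·m_k(λ)·(k/n) for 1 ≤ k ≤ n, and p(n,0) = 0. Let μ be the measure on [0,1] determined by ∫_{[0,1]} g dμ = ∫_{𝒮↓} Σ_{i≥1} s_i(1−s_i) g(s_i) ν(ds) for bounded measurable g : [0,1] → ℝ. Then μ is a nonzero finite measure on [0,1], p(n,·) is a probability measure on {0,1,…,n} for each n ≥ 2, and for every continuous g : [0,1] → ℝ, n^γ Σ_{k=0}^{n} p(n,k)(1−k/n) g(k/n) → ∫_{[0,1]} g dμ as n → ∞; that is, (p(n,·)) satisfies Hypothesis (H') with parameters (γ,μ). -/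
open MeasureTheory Filter Real Set

/-- The space `𝒮↓` of nonincreasing nonnegative sequences summing to `1`.
(On this set, the topology of the uniform distance `d(s,s') = supᵢ|sᵢ−s'ᵢ|` coincides with
the product (pointwise) topology inherited from `ℕ → ℝ`, since `sᵢ ≤ 1/(i+1)` uniformly.) -/
def Sdown : Set (ℕ → ℝ) :=
  {s | (∀ i, 0 ≤ s i) ∧ (∀ i j, i ≤ j → s j ≤ s i) ∧ HasSum s 1}

/-- The sequence `(1,0,0,…)`. -/
def oneSeq : ℕ → ℝ := fun i => if i = 0 then 1 else 0

lemma oneSeq_mem_Sdown : oneSeq ∈ Sdown := by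
  refine ⟨fun i => ?_, fun i j hij => ?_, ?_⟩
  · unfold oneSeq; split <;> norm_num
  · unfold oneSeq
    rcases Nat.eq_zero_or_pos j with hj | hj
    · have hi : i = 0 := by omega
      simp [hi, hj]
    · have hj' : j ≠ 0 := by omega
      simp only [hj', if_false]
      split <;> norm_num
  · exact hasSum_ite_eq 0 1

-- Interpret a sequence as an element of `𝒮↓` (junk value `(1,0,0,…)` if it is not in `𝒮↓`).
open Classical in
noncomputable def toSdown (s : ℕ → ℝ) : ↥Sdown :=
  if h : s ∈ Sdown then ⟨s, h⟩ else ⟨oneSeq, oneSeq_mem_Sdown⟩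

/-- `partVec n λ` is the element `λ/n = (λ₁/n, …, λ_p/n, 0, 0, …)` of `𝒮↓`: the parts of the
partition `λ` of `n`, in decreasing order, padded with zeros and divided by `n`. -/
noncomputable def partVec (n : ℕ) (lam : Nat.Partition n) : ℕ → ℝ :=
  fun i => (((lam.parts.sort (· ≤ ·)).reverse.getD i 0 : ℕ) : ℝ) / n

/-- Hypothesis (H) of Haas–Miermont for a sequence of splitting probabilities `(qₙ)`, with
parameters `γ > 0` and `ν` a nonzero σ-finite measure on `𝒮↓` with `∫(1−s₁)ν(ds) < ∞` and
`ν({(1,0,…)}) = 0`: for every bounded continuous `f : 𝒮↓ → ℝ`,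
`n^γ Σ_{λ∈𝒫ₙ} qₙ(λ)(1−λ₁/n) f(λ/n) → ∫_{𝒮↓} (1−s₁) f(s) ν(ds)`. -/
def HypH (q : ∀ n, Nat.Partition n → ℝ) (γ : ℝ) (ν : Measure ↥Sdown) : Prop :=
  ∀ f : ↥Sdown → ℝ, Continuous f → (∃ C, ∀ s, |f s| ≤ C) →
    Tendsto (fun n : ℕ => (n : ℝ) ^ γ * ∑ lam : Nat.Partition n,
        q n lam * (1 - partVec n lam 0) * f (toSdown (partVec n lam)))
      atTop (nhds (∫ s, (1 - s.1 0) * f s ∂ν))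

lemma Sdown.nonneg (s : ↥Sdown) (i : ℕ) : 0 ≤ s.1 i := s.2.1 i

lemma Sdown.tail_hasSum (s : ↥Sdown) : HasSum (fun i => s.1 (i+1)) (1 - s.1 0) := by
  have h := (hasSum_nat_add_iff' 1).2 s.2.2.2
  simpa using h

lemma Sdown.tail_le (s : ↥Sdown) (i : ℕ) : s.1 (i+1) ≤ 1 - s.1 0 :=
  le_hasSum (Sdown.tail_hasSum s) i (fun j _ => Sdown.nonneg s _)

lemma Sdown.le_one (s : ↥Sdown) (i : ℕ) : s.1 i ≤ 1 :=
  le_hasSum s.2.2.2 i (fun j _ => Sdown.nonneg s _)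

lemma Sdown.le_inv (s : ↥Sdown) (i : ℕ) : s.1 i ≤ 1 / ((i:ℝ) + 1) := by
  have h1 : ∑ j ∈ Finset.range (i+1), s.1 j ≤ 1 :=
    sum_le_hasSum _ (fun j _ => Sdown.nonneg s _) s.2.2.2
  have h2 : ∑ j ∈ Finset.range (i+1), s.1 i ≤ ∑ j ∈ Finset.range (i+1), s.1 j :=
    Finset.sum_le_sum fun j hj => s.2.2.1 j i (by simp at hj; omega)
  simp at h2
  rw [le_div_iff₀ (by positivity)]
  linarith

lemma Sdown.cont (i : ℕ) : Continuous (fun s : ↥Sdown => s.1 i) :=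
  (continuous_apply i).comp continuous_subtype_val

lemma Sdown.tailfrac (s : ↥Sdown) :
    Summable (fun i => s.1 (i+1) / (1 - s.1 0)) ∧ ∑' i, s.1 (i+1) / (1 - s.1 0) ≤ 1 := by
  have h := (Sdown.tail_hasSum s).div_const (1 - s.1 0)
  refine ⟨h.summable, ?_⟩
  rw [h.tsum_eq]
  exact div_self_le_one _

lemma Sdown.frac_nonneg (s : ↥Sdown) (i : ℕ) : 0 ≤ s.1 (i+1) / (1 - s.1 0) :=
  div_nonneg (Sdown.nonneg s _) (by linarith [Sdown.le_one s 0])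

lemma Sdown.frac_le (s : ↥Sdown) (i : ℕ) : s.1 (i+1) / (1 - s.1 0) ≤ 1 :=
  div_le_one_of_le₀ (Sdown.tail_le s i) (by linarith [Sdown.le_one s 0])

/-- one term of the remainder is continuous -/
lemma term_cont (r : ℝ → ℝ) (hr : Continuous r) (hr0 : r 0 = 0) (i : ℕ) :
    Continuous (fun s : ↥Sdown => s.1 (i+1) / (1 - s.1 0) * r (s.1 (i+1))) := by
  rw [continuous_iff_continuousAt]
  intro s
  by_cases hs : 1 - s.1 0 = 0
  · have hz : s.1 (i+1) = 0 := le_antisymm (hs ▸ Sdown.tail_le s i) (Sdown.nonneg s _)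
    have hc : Tendsto (fun t : ↥Sdown => |r (t.1 (i+1))|) (nhds s) (nhds 0) := by
      have : Continuous (fun t : ↥Sdown => |r (t.1 (i+1))|) :=
        (hr.comp (Sdown.cont (i+1))).abs
      have h2 := this.tendsto s
      simpa [hz, hr0] using h2
    unfold ContinuousAt
    beta_reduce
    rw [hz, hr0, mul_zero]
    refine squeeze_zero_norm (fun t => ?_) hc
    rw [Real.norm_eq_abs, abs_mul, abs_of_nonneg (Sdown.frac_nonneg t i)]
    exact mul_le_of_le_one_left (abs_nonneg _) (Sdown.frac_le t i)
  · exact ((Sdown.cont (i+1)).continuousAt.div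
      (continuous_const.sub (Sdown.cont 0)).continuousAt hs).mul
      (hr.comp (Sdown.cont (i+1))).continuousAt

lemma term_summable (r : ℝ → ℝ) (C : ℝ) (hC : ∀ x ∈ Set.Icc (0:ℝ) 1, |r x| ≤ C) (s : ↥Sdown) :
    Summable (fun i => s.1 (i+1) / (1 - s.1 0) * r (s.1 (i+1))) := by
  refine Summable.of_norm_bounded ((Sdown.tailfrac s).1.mul_right C) (fun i => ?_)
  rw [Real.norm_eq_abs, abs_mul, abs_of_nonneg (Sdown.frac_nonneg s i)]
  exact mul_le_mul_of_nonneg_left (hC _ ⟨Sdown.nonneg s _, Sdown.le_one s _⟩)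
    (Sdown.frac_nonneg s i)

lemma term_tail (r : ℝ → ℝ) (N : ℕ) (C : ℝ) (hC0 : 0 ≤ C) (s : ↥Sdown)
    (hC : ∀ i, |r (s.1 (i+N+1))| ≤ C) :
    |∑' i, s.1 (i+N+1) / (1 - s.1 0) * r (s.1 (i+N+1))| ≤ C := by
  have hS : Summable (fun i => s.1 (i+N+1) / (1 - s.1 0)) :=
    (summable_nat_add_iff N).2 (Sdown.tailfrac s).1
  have hle : ∑' i, s.1 (i+N+1) / (1 - s.1 0) ≤ 1 := by
    refine le_trans ?_ (Sdown.tailfrac s).2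
    rw [← (Sdown.tailfrac s).1.sum_add_tsum_nat_add N]
    have : 0 ≤ ∑ i ∈ Finset.range N, s.1 (i+1) / (1 - s.1 0) :=
      Finset.sum_nonneg fun i _ => Sdown.frac_nonneg s i
    linarith
  have := tsum_of_norm_bounded (hS.hasSum.mul_right C)
    (f := fun i => s.1 (i+N+1) / (1 - s.1 0) * r (s.1 (i+N+1))) (fun i => by
      rw [Real.norm_eq_abs, abs_mul, abs_of_nonneg (Sdown.frac_nonneg s (i+N))]
      exact mul_le_mul_of_nonneg_left (hC i) (Sdown.frac_nonneg s (i+N)))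
  rw [Real.norm_eq_abs] at this
  exact this.trans (mul_le_of_le_one_left hC0 hle)

lemma rem_cont (r : ℝ → ℝ) (hr : Continuous r) (hr0 : r 0 = 0) (C : ℝ)
    (hC : ∀ x ∈ Set.Icc (0:ℝ) 1, |r x| ≤ C) :
    Continuous (fun s : ↥Sdown => ∑' i, s.1 (i+1) / (1 - s.1 0) * r (s.1 (i+1))) := by
  have hu : TendstoUniformly (fun (N : ℕ) (s : ↥Sdown) =>
      ∑ i ∈ Finset.range N, s.1 (i+1) / (1 - s.1 0) * r (s.1 (i+1)))
      (fun s : ↥Sdown => ∑' i, s.1 (i+1) / (1 - s.1 0) * r (s.1 (i+1))) atTop := by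
    rw [Metric.tendstoUniformly_iff]
    intro ε hε
    obtain ⟨δ, hδ, hδ'⟩ := Metric.continuousAt_iff.1 (hr.continuousAt (x := 0)) (ε/2) (half_pos hε)
    obtain ⟨N0, hN0⟩ := exists_nat_one_div_lt hδ
    filter_upwards [eventually_ge_atTop N0] with N hN s
    have hsplit := (term_summable r C hC s).sum_add_tsum_nat_add N
    rw [Real.dist_eq, ← hsplit, add_sub_cancel_left]
    refine lt_of_le_of_lt (term_tail r N (ε/2) (half_pos hε).le s (fun i => ?_)) (half_lt_self hε)
    have h1 : dist (s.1 (i+N+1)) 0 < δ := by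
      rw [Real.dist_eq, sub_zero, abs_of_nonneg (Sdown.nonneg s _)]
      refine lt_of_le_of_lt (Sdown.le_inv s _) (lt_of_le_of_lt ?_ hN0)
      apply one_div_le_one_div_of_le (by positivity)
      push_cast
      have : (N0:ℝ) ≤ N := by exact_mod_cast hN
      have : (0:ℝ) ≤ i := by positivity
      linarith
    have h2 := hδ' h1
    rw [hr0, Real.dist_eq, sub_zero] at h2
    exact h2.le
  refine hu.continuous (Frequently.of_forall fun N => ?_)
  exact continuous_finsetSum _ fun i _ => term_cont r hr hr0 i

/-- For continuous `g`, the function `Σ sᵢ(1-sᵢ)g(sᵢ)/(1-s₁)` extends to a bounded continuous one. -/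
lemma key (g : ℝ → ℝ) (hg : Continuous g) : ∃ f : ↥Sdown → ℝ, Continuous f ∧
    (∃ C, ∀ s, |f s| ≤ C) ∧
    ∀ s : ↥Sdown, (1 - s.1 0) * f s = ∑' i, s.1 i * (1 - s.1 i) * g (s.1 i) := by
  obtain ⟨C, hC⟩ := isCompact_Icc.exists_bound_of_continuousOn (hg.continuousOn (s := Set.Icc (0:ℝ) 1))
  have hr : Continuous (fun x => (1 - x) * g x - g 0) := by fun_prop
  obtain ⟨D, hD⟩ := isCompact_Icc.exists_bound_of_continuousOn (hr.continuousOn (s := Set.Icc (0:ℝ) 1))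
  set r : ℝ → ℝ := fun x => (1 - x) * g x - g 0 with hrdef
  have hr0 : r 0 = 0 := by simp [hrdef]
  have hD0 : 0 ≤ D := (norm_nonneg _).trans (hD 0 (by simp))
  have hC0 : 0 ≤ C := (norm_nonneg _).trans (hC 0 (by simp))
  refine ⟨fun s => s.1 0 * g (s.1 0) + g 0 +
    ∑' i, s.1 (i+1) / (1 - s.1 0) * r (s.1 (i+1)), ?_, ⟨C + C + D, fun s => ?_⟩, fun s => ?_⟩
  · exact (((Sdown.cont 0).mul (hg.comp (Sdown.cont 0))).add continuous_const).add
      (rem_cont r hr hr0 D hD)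
  · have h1 := term_tail r 0 D hD0 s (fun i => hD _ ⟨Sdown.nonneg s _, Sdown.le_one s _⟩)
    simp only [add_zero] at h1
    have h2 : |g 0| ≤ C := hC 0 (by simp)
    have h3 : |s.1 0 * g (s.1 0)| ≤ C := by
      rw [abs_mul, abs_of_nonneg (Sdown.nonneg s _)]
      exact (mul_le_of_le_one_left (abs_nonneg _) (Sdown.le_one s 0)).trans
        (hC _ ⟨Sdown.nonneg s _, Sdown.le_one s _⟩)
    exact (abs_add_le _ _).trans (add_le_add ((abs_add_le _ _).trans (add_le_add h3 h2)) h1)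
  · have hterm : ∀ i, (1 - s.1 0) * (s.1 (i+1) / (1 - s.1 0) * r (s.1 (i+1)))
        = s.1 (i+1) * r (s.1 (i+1)) := by
      intro i
      by_cases hs : 1 - s.1 0 = 0
      · have hz : s.1 (i+1) = 0 := le_antisymm (hs ▸ Sdown.tail_le s i) (Sdown.nonneg s _)
        simp [hz]
      · field_simp
    have hS := (term_summable r D hD s).hasSum.mul_left (1 - s.1 0)
    simp only [hterm] at hS
    have hS2 := hS.add ((Sdown.tail_hasSum s).mul_right (g 0))
    have hS3 : HasSum (fun i => s.1 (i+1) * (1 - s.1 (i+1)) * g (s.1 (i+1)))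
      ((1 - s.1 0) * (∑' i, s.1 (i+1) / (1 - s.1 0) * r (s.1 (i+1))) + (1 - s.1 0) * g 0) := by
      have he : (fun i => s.1 (i+1) * (1 - s.1 (i+1)) * g (s.1 (i+1)))
          = fun i => s.1 (i+1) * r (s.1 (i+1)) + s.1 (i+1) * g 0 := by
        funext i
        simp only [hrdef]; ring
      rw [he]
      exact hS2
    have hS4 := (hasSum_nat_add_iff (f := fun i => s.1 i * (1 - s.1 i) * g (s.1 i)) 1).1 hS3
    rw [hS4.tsum_eq]
    simp
    ring

lemma list_hasSum (ψ : ℕ → ℝ) (h0 : ψ 0 = 0) (l : List ℕ) :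
    HasSum (fun i => ψ (l.getD i 0)) (l.map ψ).sum := by
  induction l with
  | nil => simpa [h0] using hasSum_zero
  | cons a l ih =>
    have := (hasSum_nat_add_iff (f := fun i => ψ ((a :: l).getD i 0)) 1).1 (by simpa using ih)
    simpa [add_comm] using this

lemma part_hasSum (n : ℕ) (lam : Nat.Partition n) (φ : ℝ → ℝ) (h0 : φ 0 = 0) :
    HasSum (fun i => φ (partVec n lam i))
      (∑ k ∈ Finset.range (n+1), (lam.parts.count k : ℝ) * φ ((k:ℝ) / n)) := by
  have h := list_hasSum (fun k => φ ((k:ℝ)/n)) (by simp [h0]) (lam.parts.sort (· ≤ ·)).reverse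
  have h1 : (((lam.parts.sort (· ≤ ·)).reverse).map (fun k : ℕ => φ ((k:ℝ)/n))).sum
      = (lam.parts.map (fun k : ℕ => φ ((k:ℝ)/n))).sum := by
    conv_rhs => rw [← Multiset.sort_eq lam.parts (· ≤ ·)]
    rw [Multiset.map_coe, Multiset.sum_coe, List.map_reverse, List.sum_reverse]
  rw [h1, Finset.sum_multiset_map_count] at h
  simp only [nsmul_eq_mul] at h
  refine Eq.subst (motive := fun x => HasSum (fun i => φ (partVec n lam i)) x) ?_ h
  apply Finset.sum_subset
  · intro k hk
    rw [Multiset.mem_toFinset] at hk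
    have := Multiset.le_sum_of_mem hk
    rw [lam.parts_sum] at this
    simp; omega
  · intro k _ hk
    rw [Multiset.mem_toFinset] at hk
    simp [Multiset.count_eq_zero_of_notMem hk]

lemma part_sum (n : ℕ) (lam : Nat.Partition n) :
    ∑ k ∈ Finset.range (n+1), lam.parts.count k * k = n := by
  conv_rhs => rw [← lam.parts_sum]
  rw [← Multiset.map_id lam.parts, Finset.sum_multiset_map_count, Multiset.map_id]
  symm
  apply Finset.sum_subset
  · intro k hk
    rw [Multiset.mem_toFinset] at hk
    have := Multiset.le_sum_of_mem hk
    rw [lam.parts_sum] at this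
    simp; omega
  · intro k _ hk
    rw [Multiset.mem_toFinset] at hk
    simp [Multiset.count_eq_zero_of_notMem hk]

lemma part_sum_real (n : ℕ) (hn : 1 ≤ n) (lam : Nat.Partition n) :
    ∑ k ∈ Finset.range (n+1), (lam.parts.count k : ℝ) * ((k:ℝ) / n) = 1 := by
  have hn' : (n:ℝ) ≠ 0 := by positivity
  have := part_sum n lam
  have h2 : ∑ k ∈ Finset.range (n+1), (lam.parts.count k : ℝ) * (k:ℝ) = n := by exact_mod_cast this
  simp only [← mul_div_assoc]
  rw [← Finset.sum_div, h2, div_self hn']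

lemma getD_antitone (l : List ℕ) (h : l.Pairwise (· ≥ ·)) (i j : ℕ) (hij : i ≤ j) :
    l.getD j 0 ≤ l.getD i 0 := by
  rcases hij.eq_or_lt with rfl | hlt
  · exact le_rfl
  by_cases hj : j < l.length
  · rw [List.getD_eq_getElem _ _ hj, List.getD_eq_getElem _ _ (hlt.trans hj)]
    exact List.pairwise_iff_getElem.1 h i j (hlt.trans hj) hj hlt
  · rw [List.getD_eq_default _ _ (by omega)]
    exact Nat.zero_le _

lemma partVec_mem (n : ℕ) (hn : 1 ≤ n) (lam : Nat.Partition n) : partVec n lam ∈ Sdown := by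
  refine ⟨fun i => ?_, fun i j hij => ?_, ?_⟩
  · unfold partVec; positivity
  · unfold partVec
    have : (lam.parts.sort (· ≤ ·)).reverse.Pairwise (· ≥ ·) := by
      rw [List.pairwise_reverse]
      exact Multiset.pairwise_sort _ _
    have := getD_antitone _ this i j hij
    gcongr
  · have := part_hasSum n lam id rfl
    simp only [id] at this
    rwa [part_sum_real n hn lam] at this

/-- let `(qₙ)` satisfy Hypothesis (H) with parameters `(γ,ν)`. Define
`p(n,k) = Σ_{λ∈𝒫ₙ} qₙ(λ)·m_k(λ)·(k/n)` for `1 ≤ k ≤ n` and `p(n,0) = 0` (`n ≥ 2`), and let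
`μ` be the measure on `[0,1]` determined by
`∫ g dμ = ∫_{𝒮↓} Σᵢ sᵢ(1−sᵢ)g(sᵢ) ν(ds)` for bounded measurable `g`. Then `μ` is a nonzero
finite measure, `p(n,·)` is a probability measure on `{0,…,n}` for each `n ≥ 2`, and
`(p(n,·))` satisfies Hypothesis (H') with parameters `(γ,μ)`: for every continuous
`g : [0,1] → ℝ`, `n^γ Σ_{k=0}^{n} p(n,k)(1−k/n) g(k/n) → ∫_{[0,1]} g dμ`. -/
theorem stmt2 (q : ∀ n, Nat.Partition n → ℝ) (γ : ℝ) (hγ : 0 < γ)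
    (ν : Measure ↥Sdown) [SigmaFinite ν] (hν0 : ν ≠ 0)
    (hνint : Integrable (fun s : ↥Sdown => 1 - s.1 0) ν)
    (hνone : ν {⟨oneSeq, oneSeq_mem_Sdown⟩} = 0)
    (hq0 : ∀ n lam, 0 ≤ q n lam)
    (hq1 : ∀ n, 1 ≤ n → ∑ lam : Nat.Partition n, q n lam = 1)
    (hqlt : ∀ n, 2 ≤ n → q n (Nat.Partition.indiscrete n) < 1)
    (hH : HypH q γ ν)
    (μ : Measure ℝ) (hsupp : μ (Set.Icc (0:ℝ) 1)ᶜ = 0)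
    (hμ : ∀ g : ℝ → ℝ, Measurable g → (∃ C, ∀ x, |g x| ≤ C) →
      ∫ x, g x ∂μ = ∫ s, (∑' i, s.1 i * (1 - s.1 i) * g (s.1 i)) ∂ν)
    (p : ℕ → ℕ → ℝ)
    (hp : ∀ n, 2 ≤ n → p n 0 = 0 ∧ ∀ k, 1 ≤ k → k ≤ n →
      p n k = ∑ lam : Nat.Partition n, q n lam * (lam.parts.count k : ℝ) * ((k : ℝ) / n)) :
    (μ ≠ 0 ∧ IsFiniteMeasure μ) ∧
    (∀ n, 2 ≤ n → (∀ k, k ≤ n → 0 ≤ p n k) ∧ ∑ k ∈ Finset.range (n + 1), p n k = 1) ∧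
    (∀ g : ℝ → ℝ, ContinuousOn g (Set.Icc 0 1) →
      Tendsto (fun n : ℕ => (n : ℝ) ^ γ * ∑ k ∈ Finset.range (n + 1),
          p n k * (1 - (k : ℝ) / n) * g ((k : ℝ) / n))
        atTop (nhds (∫ x in Set.Icc (0:ℝ) 1, g x ∂μ))) := by
  have hsum : ∀ n, 2 ≤ n → ∀ g : ℝ → ℝ, ∑ k ∈ Finset.range (n + 1), p n k * g ((k : ℝ) / n)
      = ∑ lam : Nat.Partition n, q n lam *
        ∑ k ∈ Finset.range (n+1), (lam.parts.count k : ℝ) * (((k:ℝ) / n) * g ((k:ℝ)/n)) := by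
    intro n hn g
    simp only [Finset.mul_sum]
    rw [Finset.sum_comm]
    refine Finset.sum_congr rfl fun k hk => ?_
    rcases Nat.eq_zero_or_pos k with rfl | hk0
    · simp [(hp n hn).1]
    · rw [(hp n hn).2 k hk0 (by simp at hk; omega), Finset.sum_mul]
      exact Finset.sum_congr rfl fun lam _ => by ring
  have hfin : μ.real univ > 0 := by
    have h1 := hμ (fun _ => 1) measurable_const ⟨1, fun _ => by simp⟩
    simp only [integral_const, smul_eq_mul, mul_one] at h1
    rw [h1]
    obtain ⟨f, hf, ⟨C, hC⟩, hfe⟩ := key (fun _ => 1) continuous_const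
    simp only [mul_one] at hfe
    have hint : Integrable (fun s : ↥Sdown => ∑' i, s.1 i * (1 - s.1 i)) ν := by
      simp only [← hfe]
      exact hνint.mul_bdd (c := C) hf.measurable.aestronglyMeasurable (ae_of_all _ hC)
    have hnn : ∀ (s : ↥Sdown) i, 0 ≤ s.1 i * (1 - s.1 i) := fun s i =>
      mul_nonneg (Sdown.nonneg s i) (by linarith [Sdown.le_one s i])
    have hnn' : ∀ s : ↥Sdown, 0 ≤ ∑' i, s.1 i * (1 - s.1 i) := fun s => tsum_nonneg (hnn s)
    refine lt_of_le_of_ne (integral_nonneg hnn') fun h0 => hν0 ?_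
    have h2 := (integral_eq_zero_iff_of_nonneg hnn' hint).1 h0.symm
    rw [← Measure.measure_univ_eq_zero]
    refine measure_mono_null (t := {s : ↥Sdown | ¬ (∑' i, s.1 i * (1 - s.1 i)) = 0} ∪
      {⟨oneSeq, oneSeq_mem_Sdown⟩}) (fun s _ => ?_) (measure_union_null h2 hνone)
    by_cases hs : (∑' i, s.1 i * (1 - s.1 i)) = 0
    · right
      have hsm : Summable fun i => s.1 i * (1 - s.1 i) := by
        refine Summable.of_nonneg_of_le (hnn s) (fun i => ?_) s.2.2.2.summable
        exact mul_le_of_le_one_right (Sdown.nonneg s i) (by linarith [Sdown.nonneg s i])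
      have h00 : s.1 0 * (1 - s.1 0) = 0 :=
        le_antisymm (hs ▸ hsm.le_tsum 0 (fun j _ => hnn s j)) (hnn s 0)
      have hs1 : s.1 0 = 1 := by
        rcases mul_eq_zero.1 h00 with h | h
        · exfalso
          have hz : s.1 = fun _ => 0 := by
            funext i
            exact le_antisymm (h ▸ s.2.2.1 0 i (Nat.zero_le i)) (Sdown.nonneg s i)
          have h5 := s.2.2.2
          rw [hz] at h5
          exact zero_ne_one (hasSum_zero.unique h5)
        · linarith
      refine Subtype.ext ?_
      funext i
      cases i with
      | zero => simpa [oneSeq] using hs1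
      | succ i =>
        have := Sdown.tail_le s i
        have := Sdown.nonneg s (i+1)
        simp only [oneSeq]
        simp
        linarith
    · left; exact hs
  refine ⟨⟨?_, ?_⟩, ?_, ?_⟩
  · rintro rfl
    simp at hfin
  · constructor
    by_contra h
    rw [not_lt, top_le_iff] at h
    simp [Measure.real, h] at hfin
  · intro n hn
    refine ⟨fun k hk => ?_, ?_⟩
    · rcases Nat.eq_zero_or_pos k with rfl | hk0
      · rw [(hp n hn).1]
      · rw [(hp n hn).2 k hk0 hk]
        exact Finset.sum_nonneg fun lam _ =>
          mul_nonneg (mul_nonneg (hq0 n lam) (by positivity)) (by positivity)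
    · have h := hsum n hn (fun _ => 1)
      simp only [mul_one] at h
      rw [h]
      simp only [part_sum_real n (by omega : 1 ≤ n), mul_one]
      exact hq1 n (by omega)
  · intro g hg
    set G : ℝ → ℝ := Set.IccExtend zero_le_one ((Set.Icc (0:ℝ) 1).domRestrict g) with hG
    have hGc : Continuous G := (continuousOn_iff_continuous_domRestrict.1 hg).Icc_extend'
    have hGe : ∀ x ∈ Set.Icc (0:ℝ) 1, G x = g x := fun x hx => by
      rw [hG, Set.IccExtend_of_mem _ _ hx]; rfl
    have hGb : ∃ C, ∀ x, |G x| ≤ C := by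
      obtain ⟨C, hC⟩ := isCompact_Icc.exists_bound_of_continuousOn hg
      exact ⟨C, fun x => hC _ (Set.projIcc 0 1 zero_le_one x).2⟩
    obtain ⟨f, hf, hfb, hfe⟩ := key G hGc
    have hlim := hH f hf hfb
    have hRHS : ∫ x in Set.Icc (0:ℝ) 1, g x ∂μ = ∫ s, (1 - s.1 0) * f s ∂ν := by
      simp only [hfe]
      rw [← hμ G hGc.measurable hGb, ← setIntegral_congr_fun measurableSet_Icc hGe,
        Measure.restrict_eq_self_of_ae_mem]
      exact hsupp
    rw [hRHS]
    refine hlim.congr' ?_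
    filter_upwards [eventually_ge_atTop 2] with n hn
    have hmem : ∀ k ∈ Finset.range (n+1), ((k:ℝ)/n) ∈ Set.Icc (0:ℝ) 1 := fun k hk => by
      refine ⟨by positivity, div_le_one_of_le₀ ?_ (by positivity)⟩
      simp at hk
      exact_mod_cast (by omega : k ≤ n)
    have h1 : ∑ k ∈ Finset.range (n + 1), p n k * (1 - (k : ℝ) / n) * g ((k : ℝ) / n)
        = ∑ k ∈ Finset.range (n + 1), p n k * ((fun x => (1 - x) * G x) ((k : ℝ) / n)) :=
      Finset.sum_congr rfl fun k hk => by
        simp only [hGe _ (hmem k hk)]; ring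
    rw [h1, hsum n hn (fun x => (1 - x) * G x)]
    congr 1
    refine Finset.sum_congr rfl fun lam _ => ?_
    have hm := partVec_mem n (by omega) lam
    have hto : toSdown (partVec n lam) = ⟨partVec n lam, hm⟩ := by
      unfold toSdown; rw [dif_pos hm]
    rw [hto, mul_assoc]
    congr 1
    rw [hfe ⟨partVec n lam, hm⟩]
    have h2 := part_hasSum n lam (fun x => x * ((1 - x) * G x)) (by simp)
    rw [← h2.tsum_eq]
    exact tsum_congr fun i => by ring
end

section
/- Let (p(n,·)) satisfy Hypothesis (H') with parameters (γ,μ). For λ > 0 set φ(λ) = μ({0}) + λ·μ({1}) + ∫_{(0,1)} (1−x^λ)/(1−x) μ(dx). Then for every λ > 0, n^γ·(1 − Σ_{k=0}^{n} p(n,k)·(k/n)^λ) → φ(λ) as n → ∞ (with the convention 0^λ = 0); equivalently, if X_n(1) has law p(n,·) and G_n(λ) := 𝔼[(X_n(1)/n)^λ], then 1 − G_n(λ) ~ n^{−γ}·φ(λ). -/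
open MeasureTheory Filter Real Set

/-- Hypothesis (H') for a family `p(n,·)` of probability measures on `{0,…,n}`, with
parameters `γ > 0` and a nonzero finite measure `μ` on `[0,1]` (a measure on `ℝ` supported
on `[0,1]`): for every continuous `f : [0,1] → ℝ`,
`n^γ Σ_{k=0}^{n} p(n,k)(1−k/n) f(k/n) → ∫_{[0,1]} f dμ`. -/
def HypHprime (p : ℕ → ℕ → ℝ) (γ : ℝ) (μ : Measure ℝ) : Prop :=
  ∀ f : ℝ → ℝ, ContinuousOn f (Set.Icc 0 1) →
    Tendsto (fun n : ℕ => (n : ℝ) ^ γ * ∑ k ∈ Finset.range (n + 1),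
        p n k * (1 - (k : ℝ) / n) * f ((k : ℝ) / n))
      atTop (nhds (∫ x in Set.Icc (0:ℝ) 1, f x ∂μ))

/-- The Laplace exponent `φ(λ) = μ({0}) + λ·μ({1}) + ∫_{(0,1)} (1−x^λ)/(1−x) μ(dx)`. -/
noncomputable def phi (μ : Measure ℝ) (l : ℝ) : ℝ :=
  (μ {0}).toReal + l * (μ {1}).toReal + ∫ x in Set.Ioo (0:ℝ) 1, (1 - x ^ l) / (1 - x) ∂μ

/-- under Hypothesis (H') with parameters `(γ,μ)`, for every `λ > 0`,
`n^γ·(1 − Σ_{k=0}^{n} p(n,k)·(k/n)^λ) → φ(λ)` (with `0^λ = 0`); that is, if `Xₙ(1)` has law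
`p(n,·)` and `Gₙ(λ) = 𝔼[(Xₙ(1)/n)^λ]`, then `1 − Gₙ(λ) ~ n^{−γ}·φ(λ)`. -/
theorem stmt3 (p : ℕ → ℕ → ℝ) (γ : ℝ) (hγ : 0 < γ)
    (μ : Measure ℝ) [IsFiniteMeasure μ] (hμ0 : μ ≠ 0) (hsupp : μ (Set.Icc (0:ℝ) 1)ᶜ = 0)
    (hp0 : ∀ n k : ℕ, k ≤ n → 0 ≤ p n k)
    (hp1 : ∀ n : ℕ, 1 ≤ n → ∑ k ∈ Finset.range (n + 1), p n k = 1)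
    (hH : HypHprime p γ μ) :
    ∀ l : ℝ, 0 < l →
      Tendsto (fun n : ℕ => (n : ℝ) ^ γ *
          (1 - ∑ k ∈ Finset.range (n + 1), p n k * ((k : ℝ) / n) ^ l))
        atTop (nhds (phi μ l)) := by
  intro l hl
  set g : ℝ → ℝ := fun x => x ^ l with hg
  have hgc : Continuous g := Real.continuous_rpow_const hl.le
  have hgd : HasDerivAt g l 1 := by
    have := Real.hasDerivAt_rpow_const (x := 1) (p := l) (Or.inl one_ne_zero)
    simpa using this
  have hfc : Continuous (dslope g 1) := by
    rw [← continuousOn_univ, continuousOn_dslope univ_mem]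
    exact ⟨hgc.continuousOn, hgd.differentiableAt⟩
  have h0 : dslope g 1 0 = 1 := by
    rw [dslope_of_ne _ (by norm_num), slope_def_field]
    simp [hg, Real.zero_rpow hl.ne']
  have h1 : dslope g 1 1 = l := by rw [dslope_same, hgd.deriv]
  have hI : ∀ s : Set ℝ, s ⊆ Icc 0 1 → IntegrableOn (dslope g 1) s μ := fun s hs =>
    (hfc.continuousOn.integrableOn_compact isCompact_Icc).mono_set hs
  have hint : ∫ x in Set.Icc (0:ℝ) 1, dslope g 1 x ∂μ = phi μ l := by
    rw [← Ioc_insert_left (zero_le_one' ℝ), ← Ioo_insert_right (zero_lt_one' ℝ),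
      ← singleton_union, setIntegral_union (by simp) (by measurability)
        (hI _ (by simp)) (hI _ (by
          rintro x (rfl | hx)
          · simp
          · exact Ioo_subset_Icc_self hx)),
      ← singleton_union, setIntegral_union (by simp) measurableSet_Ioo
        (hI _ (by simp)) (hI _ Ioo_subset_Icc_self)]
    have hio : ∫ x in Set.Ioo (0:ℝ) 1, dslope g 1 x ∂μ
        = ∫ x in Set.Ioo (0:ℝ) 1, (1 - x ^ l) / (1 - x) ∂μ := by
      refine setIntegral_congr_fun measurableSet_Ioo fun x hx => ?_
      rw [dslope_of_ne _ hx.2.ne, slope_def_field, ← neg_div_neg_eq]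
      simp [hg]
    rw [hio, integral_singleton, integral_singleton, h0, h1, phi]
    simp only [Measure.real, smul_eq_mul]
    ring
  have := hH _ hfc.continuousOn
  rw [hint] at this
  refine this.congr' ?_
  filter_upwards [eventually_ge_atTop 1] with n hn
  congr 1
  have hsum : 1 - ∑ k ∈ Finset.range (n + 1), p n k * ((k : ℝ) / n) ^ l
      = ∑ k ∈ Finset.range (n + 1), (p n k - p n k * ((k : ℝ) / n) ^ l) := by
    rw [Finset.sum_sub_distrib, hp1 n hn]
  rw [hsum]
  refine Finset.sum_congr rfl fun k _ => ?_
  have h := sub_smul_dslope g 1 ((k:ℝ) / n)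
  have e1 : g ((k:ℝ) / n) = ((k:ℝ) / n) ^ l := rfl
  have e2 : g 1 = 1 := Real.one_rpow l
  rw [smul_eq_mul, e1, e2] at h
  linear_combination (-p n k) * h
end

section
/- Let (ξ_i)_{i≥1} be i.i.d. random variables taking values in {−1,0,1,2,…}, let S_0 = 0 and S_m = ξ₁ + ⋯ + ξ_m, and let T = inf{m ≥ 1 : S_m = −1} be the first hitting time of −1 by the walk. Then for every n ≥ 1, ℙ(T = n) = (1/n)·ℙ(S_n = −1) (the Otter–Dwass formula, also called the cyclic lemma). -/
open MeasureTheory ProbabilityTheory Filter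

/-- The path `f` sums to `-1` at time `n`, staying nonnegative before. -/
def GoodPath (n : ℕ) (f : ℕ → ℤ) : Prop :=
  (∑ i ∈ Finset.range n, f i) = -1 ∧ ∀ m < n, 0 ≤ ∑ i ∈ Finset.range m, f i

theorem sum_per (n : ℕ) (y : ℕ → ℤ) (hper : ∀ i, y (i + n) = y i)
    (hs : (∑ i ∈ Finset.range n, y i) = -1) (m : ℕ) :
    (∑ i ∈ Finset.range (m + n), y i) = (∑ i ∈ Finset.range m, y i) - 1 := by
  rw [add_comm m n, Finset.sum_range_add, hs]
  have : ∀ i, y (n + i) = y i := fun i => by rw [add_comm, hper]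
  simp only [this]
  ring

theorem good_shift_iff (n : ℕ) (y : ℕ → ℤ) (hper : ∀ i, y (i + n) = y i)
    (hs : (∑ i ∈ Finset.range n, y i) = -1) (k : ℕ) :
    GoodPath n (fun i => y (k + i)) ↔
      ∀ m < n, (∑ i ∈ Finset.range k, y i) ≤ ∑ i ∈ Finset.range (k + m), y i := by
  have h1 := sum_per n y hper hs k
  rw [Finset.sum_range_add] at h1
  unfold GoodPath
  constructor
  · rintro ⟨-, h⟩ m hm
    have := h m hm
    rw [Finset.sum_range_add]
    linarith
  · intro h
    refine ⟨by linarith, fun m hm => ?_⟩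
    have := h m hm
    rw [Finset.sum_range_add] at this
    linarith

theorem good_unique (n : ℕ) (y : ℕ → ℤ) (hper : ∀ i, y (i + n) = y i)
    (hs : (∑ i ∈ Finset.range n, y i) = -1) (k l : ℕ) (hkl : k < l) (hl : l < n)
    (hk : GoodPath n (fun i => y (k + i))) (hl' : GoodPath n (fun i => y (l + i))) : False := by
  rw [good_shift_iff n y hper hs] at hk hl'
  have h1 := hk (l - k) (by omega)
  have h2 := hl' (k + n - l) (by omega)
  rw [show k + (l - k) = l by omega] at h1
  rw [show l + (k + n - l) = k + n by omega, sum_per n y hper hs] at h2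
  linarith

theorem good_exists (n : ℕ) (hn : 1 ≤ n) (y : ℕ → ℤ) (hper : ∀ i, y (i + n) = y i)
    (hs : (∑ i ∈ Finset.range n, y i) = -1) :
    ∃ k < n, GoodPath n (fun i => y (k + i)) := by
  classical
  have hex : ∃ k, k < n ∧ ∀ j < n,
      (∑ i ∈ Finset.range k, y i) ≤ ∑ i ∈ Finset.range j, y i := by
    obtain ⟨k, hk, h⟩ := Finset.exists_min_image (Finset.range n)
      (fun k => ∑ i ∈ Finset.range k, y i) ⟨0, Finset.mem_range.2 hn⟩
    exact ⟨k, by simpa using hk, fun j hj => h j (by simpa using hj)⟩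
  obtain ⟨hk, hmin⟩ := Nat.find_spec hex
  have hfirst := fun j hj => Nat.find_min hex (m := j) hj
  set k := Nat.find hex
  refine ⟨k, hk, ?_⟩
  rw [good_shift_iff n y hper hs]
  intro m hm
  by_cases h : k + m < n
  · exact hmin _ h
  · obtain ⟨j, hj⟩ : ∃ j, k + m = j + n := ⟨k + m - n, by omega⟩
    rw [hj, sum_per n y hper hs]
    by_contra hlt
    exact hfirst j (by omega) ⟨by omega, fun i hi => by have := hmin i hi; linarith⟩

theorem hit_of_neg (f : ℕ → ℤ) (hf : ∀ i, -1 ≤ f i) (m : ℕ)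
    (h : (∑ i ∈ Finset.range m, f i) < 0) :
    ∃ j, 1 ≤ j ∧ j ≤ m ∧ (∑ i ∈ Finset.range j, f i) = -1 := by
  induction m with
  | zero => simp at h
  | succ m ih =>
    by_cases h' : (∑ i ∈ Finset.range m, f i) < 0
    · obtain ⟨j, h1, h2, h3⟩ := ih h'
      exact ⟨j, h1, by omega, h3⟩
    · refine ⟨m + 1, by omega, le_rfl, ?_⟩
      have := hf m
      rw [Finset.sum_range_succ] at h ⊢
      omega

theorem sInf_eq_iff_good (f : ℕ → ℤ) (hf : ∀ i, -1 ≤ f i) (n : ℕ) (hn : 1 ≤ n) :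
    sInf {m : ℕ | 1 ≤ m ∧ (∑ i ∈ Finset.range m, f i) = -1} = n ↔ GoodPath n f := by
  constructor
  · intro h
    have hne : {m : ℕ | 1 ≤ m ∧ (∑ i ∈ Finset.range m, f i) = -1}.Nonempty :=
      Nat.nonempty_of_pos_sInf (by omega)
    have hmem := Nat.sInf_mem hne
    rw [h] at hmem
    refine ⟨hmem.2, fun m hm => ?_⟩
    by_contra hneg
    obtain ⟨j, h1, h2, h3⟩ := hit_of_neg f hf m (by omega)
    have := Nat.sInf_le (s := {m : ℕ | 1 ≤ m ∧ (∑ i ∈ Finset.range m, f i) = -1}) ⟨h1, h3⟩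
    omega
  · rintro ⟨h1, h2⟩
    apply le_antisymm
    · exact Nat.sInf_le ⟨hn, h1⟩
    · refine le_csInf (s := {m : ℕ | 1 ≤ m ∧ (∑ i ∈ Finset.range m, f i) = -1}) ⟨n, ⟨hn, h1⟩⟩ ?_
      rintro m ⟨-, hm⟩
      by_contra hlt
      have := h2 m (by omega)
      omega

/-- Otter–Dwass formula / cyclic lemma: if `(ξᵢ)` are i.i.d. random variables
with values in `{−1,0,1,2,…}`, `Sₘ = ξ₁ + ⋯ + ξₘ` and `T = inf{m ≥ 1 : Sₘ = −1}`, then for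
every `n ≥ 1`, `ℙ(T = n) = (1/n)·ℙ(Sₙ = −1)`. -/
theorem stmt9 {Ω : Type*} [MeasurableSpace Ω] (P : Measure Ω) [IsProbabilityMeasure P]
    (ξ : ℕ → Ω → ℤ) (hmeas : ∀ i, Measurable (ξ i))
    (hindep : iIndepFun ξ P)
    (hident : ∀ i, Measure.map (ξ i) P = Measure.map (ξ 0) P)
    (hval : ∀ i, ∀ ω, -1 ≤ ξ i ω)
    (T : Ω → ℕ)
    (hT : ∀ ω, T ω = sInf {m : ℕ | 1 ≤ m ∧ (∑ i ∈ Finset.range m, ξ i ω) = -1}) :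
    ∀ n : ℕ, 1 ≤ n →
      P {ω | T ω = n} = P {ω | (∑ i ∈ Finset.range n, ξ i ω) = -1} / n := by
  intro n hn
  have hn0 : 0 < n := hn
  let X : ℕ → Ω → (Fin n → ℤ) := fun k ω i => ξ ((k + i) % n) ω
  have hX : ∀ k, Measurable (X k) := fun k => measurable_pi_lambda _ fun i => hmeas _
  have hlaw : ∀ k, Measure.map (X k) P =
      Measure.pi (fun _ : Fin n => Measure.map (ξ 0) P) := by
    intro k
    have hinj : Function.Injective (fun i : Fin n => (k + (i : ℕ)) % n) := by
      intro i j hij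
      have h1 : (k + (i : ℕ)) ≡ (k + (j : ℕ)) [MOD n] := hij
      have h2 := Nat.ModEq.add_left_cancel' k h1
      exact Fin.ext (Nat.ModEq.eq_of_lt_of_lt h2 i.2 j.2)
    have h := hindep.precomp hinj
    rw [iIndepFun_iff_map_fun_eq_pi_map (fun i => (hmeas _).aemeasurable)] at h
    simp only [hident] at h
    exact h
  let A : Set (Fin n → ℤ) := {x | GoodPath n (fun i => x ⟨i % n, Nat.mod_lt _ hn0⟩)}
  have hA : MeasurableSet A := (Set.to_countable A).measurableSet
  let E : ℕ → Set Ω := fun k => {ω | GoodPath n (fun i => ξ ((k + i) % n) ω)}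
  have hE : ∀ k, E k = X k ⁻¹' A := by
    intro k
    ext ω
    simp [E, X, A]
  have hEm : ∀ k, MeasurableSet (E k) := fun k => by rw [hE]; exact hX k hA
  have hPE : ∀ k, P (E k) = P (E 0) := by
    intro k
    rw [hE, hE, ← Measure.map_apply (hX k) hA, ← Measure.map_apply (hX 0) hA, hlaw, hlaw]
  have hsum : ∀ ω, (∑ i ∈ Finset.range n, ξ (i % n) ω) = ∑ i ∈ Finset.range n, ξ i ω := by
    intro ω
    refine Finset.sum_congr rfl fun i hi => ?_
    rw [Nat.mod_eq_of_lt (Finset.mem_range.1 hi)]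
  have hTE : {ω | T ω = n} = E 0 := by
    ext ω
    have hc : ∀ m ≤ n, (∑ i ∈ Finset.range m, ξ ((0 + i) % n) ω)
        = ∑ i ∈ Finset.range m, ξ i ω := by
      intro m hm
      refine Finset.sum_congr rfl fun i hi => ?_
      rw [zero_add, Nat.mod_eq_of_lt (lt_of_lt_of_le (Finset.mem_range.1 hi) hm)]
    change T ω = n ↔ GoodPath n (fun i => ξ ((0 + i) % n) ω)
    rw [hT, sInf_eq_iff_good (fun i => ξ i ω) (fun i => hval i ω) n hn]
    unfold GoodPath
    rw [hc n le_rfl]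
    exact and_congr_right fun _ => forall₂_congr fun m hm => by rw [hc m hm.le]
  have hper : ∀ ω i, ξ ((i + n) % n) ω = ξ (i % n) ω := fun ω i => by simp
  have hB : {ω | (∑ i ∈ Finset.range n, ξ i ω) = -1} = ⋃ k ∈ Finset.range n, E k := by
    ext ω
    simp only [Set.mem_iUnion, Set.mem_setOf_eq, Finset.mem_range, exists_prop]
    constructor
    · intro h
      exact good_exists n hn (fun i => ξ (i % n) ω) (hper ω) ((hsum ω).trans h)
    · rintro ⟨k, hk, h, -⟩
      rw [← hsum, ← h]
      have key : ∀ k, (∑ i ∈ Finset.range n, ξ (i % n) ω)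
          = ∑ i ∈ Finset.range n, ξ ((k + i) % n) ω := by
        intro k
        have h1 := Finset.sum_range_add (fun i => ξ (i % n) ω) k n
        have h2 := Finset.sum_range_add (fun i => ξ (i % n) ω) n k
        simp only [Nat.add_mod_left] at h2
        rw [add_comm n k] at h2
        linarith
      exact key k
  have hdisj : Set.PairwiseDisjoint (↑(Finset.range n)) E := by
    intro k hk l hl hkl
    simp only [Finset.coe_range, Set.mem_Iio] at hk hl
    refine Set.disjoint_left.2 fun ω h1 h2 => ?_
    have hs : (∑ i ∈ Finset.range n, ξ (i % n) ω) = -1 := by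
      rw [hsum]
      have : ω ∈ ⋃ k ∈ Finset.range n, E k := by
        simp only [Set.mem_iUnion, Finset.mem_range, exists_prop]
        exact ⟨k, hk, h1⟩
      rw [← hB] at this
      exact this
    rcases lt_or_gt_of_ne hkl with h | h
    · exact good_unique n (fun i => ξ (i % n) ω) (hper ω) hs k l h hl h1 h2
    · exact good_unique n (fun i => ξ (i % n) ω) (hper ω) hs l k h hk h2 h1
  rw [hB, measure_biUnion_finset hdisj (fun k _ => hEm k), hTE]
  simp only [hPE, Finset.sum_const, Finset.card_range, nsmul_eq_mul]
  rw [ENNReal.eq_div_iff (by exact_mod_cast hn0.ne') (ENNReal.natCast_ne_top n)]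
end

section
/- Let η be a probability on ℤ₊ with η(1) < 1, mean Σᵢ i·η(i) = 1 and variance σ² ∈ (0,∞), and assume the law of ξ, defined by ℙ(ξ = i−1) = η(i) for i ≥ 0, has support not contained in any coset a + dℤ with d ≥ 2. Let w(n) = (1/n)·ℙ(S_n = −1), where S_n is the sum of n i.i.d. copies of ξ (by the Otter–Dwass formula, w(n) is the probability that a η-Galton–Watson tree has exactly n vertices). For n such that w(n+1) > 0 (which holds for all n large enough), define the probability p_n on 𝒫ₙ by p_n(λ) = η(p(λ))·(p(λ)!/∏_{i≥1} m_i(λ)!)·(∏_{j=1}^{p(λ)} w(λ_j))/w(n+1). Then (p_n) satisfies Hypothesis (H) with γ = 1/2 and ν = (σ/2)·ν_Br: for every bounded continuous f : 𝒮↓ → ℝ, √n·Σ_{λ∈𝒫ₙ} p_n(λ)(1−λ₁/n) f(λ/n) → (σ/2)·(√2/√π)·∫_{1/2}^{1} (1−x)·f((x,1−x,0,0,…))·x^{−3/2}(1−x)^{−3/2} dx as n → ∞. -/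
open MeasureTheory Filter Real Set

/-- The sequence `(x, 1−x, 0, 0, …)`. -/
noncomputable def pairSeq (x : ℝ) : ℕ → ℝ :=
  fun i => if i = 0 then x else if i = 1 then 1 - x else 0


/-- Coefficients of powers of the offspring generating series. -/
noncomputable def gwQ (η : ℕ → ℝ) (n m : ℕ) : ℝ :=
  PowerSeries.coeff m ((PowerSeries.mk η) ^ n)

/-- First passage weights. -/
noncomputable def gwh (η : ℕ → ℝ) (p n : ℕ) : ℝ :=
  if n = 0 then (if p = 0 then 1 else 0)
  else if p ≤ n then (p : ℝ) / n * gwQ η n (n - p) else 0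

lemma gwQ_zero (η : ℕ → ℝ) (m : ℕ) : gwQ η 0 m = if m = 0 then 1 else 0 := by
  simp [gwQ, PowerSeries.coeff_one]

lemma gwQ_succ (η : ℕ → ℝ) (n m : ℕ) :
    gwQ η (n + 1) m = ∑ x ∈ Finset.HasAntidiagonal.antidiagonal m, η x.1 * gwQ η n x.2 := by
  simp [gwQ, pow_succ', PowerSeries.coeff_mul]

lemma gwQ_deriv (η : ℕ → ℝ) (n m : ℕ) :
    ((n : ℝ) + 1) * ∑ x ∈ Finset.HasAntidiagonal.antidiagonal m, ((x.1 : ℝ) * η x.1) * gwQ η n x.2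
      = m * gwQ η (n + 1) m := by
  have h := PowerSeries.derivative_pow (PowerSeries.mk η) (n + 1)
  cases m with
  | zero => simp
  | succ m =>
    have h2 := congrArg (PowerSeries.coeff m) h
    rw [PowerSeries.coeff_derivative] at h2
    have e1 : ((n + 1 : ℕ) : PowerSeries ℝ) = PowerSeries.C ((n : ℝ) + 1) := by simp
    rw [e1, mul_assoc, PowerSeries.coeff_C_mul, Nat.add_sub_cancel, PowerSeries.coeff_mul,
      Finset.Nat.sum_antidiagonal_swap.symm] at h2
    rw [Finset.Nat.antidiagonal_succ, Finset.sum_cons, Finset.sum_map]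
    simp only [gwQ]
    push_cast
    rw [mul_comm ((m : ℝ) + 1), h2]
    simp only [Nat.cast_zero, zero_mul, zero_add]
    congr 1
    apply Finset.sum_congr rfl
    intro x _
    simp [PowerSeries.coeff_derivative]
    ring

lemma gwQ_nonneg {η : ℕ → ℝ} (h0 : ∀ i, 0 ≤ η i) (n m : ℕ) : 0 ≤ gwQ η n m := by
  induction n generalizing m with
  | zero => rw [gwQ_zero]; split <;> norm_num
  | succ n ih =>
    rw [gwQ_succ]
    exact Finset.sum_nonneg fun x _ => mul_nonneg (h0 _) (ih _)

lemma gwh_nonneg {η : ℕ → ℝ} (h0 : ∀ i, 0 ≤ η i) (p n : ℕ) : 0 ≤ gwh η p n := by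
  unfold gwh
  split_ifs <;> try norm_num
  exact mul_nonneg (by positivity) (gwQ_nonneg h0 _ _)

lemma gwh_of_lt (η : ℕ → ℝ) {p n : ℕ} (h : n < p) : gwh η p n = 0 := by
  unfold gwh
  split_ifs <;> first | rfl | omega

lemma gwh_zero_left (η : ℕ → ℝ) (n : ℕ) : gwh η 0 n = if n = 0 then 1 else 0 := by
  unfold gwh
  split_ifs <;> simp_all

lemma gwh_rec (η : ℕ → ℝ) (p n : ℕ) :
    gwh η (p + 1) (n + 1) = ∑ j ∈ Finset.range (n + 1), η j * gwh η (p + j) n := by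
  rcases Nat.lt_or_ge n p with hlt | hle
  · rw [gwh_of_lt η (by omega), eq_comm]
    exact Finset.sum_eq_zero fun j _ => by rw [gwh_of_lt η (by omega), mul_zero]
  obtain ⟨m, rfl⟩ := Nat.exists_eq_add_of_le hle
  rcases Nat.eq_zero_or_pos (p + m) with h0 | hpos
  · have hp : p = 0 := by omega
    have hm : m = 0 := by omega
    subst hp hm
    simp [gwh, gwQ]
  have hsub : ∑ j ∈ Finset.range (p + m + 1), η j * gwh η (p + j) (p + m)
      = ∑ j ∈ Finset.range (m + 1), η j * gwh η (p + j) (p + m) := by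
    symm
    apply Finset.sum_subset
    · intro j hj; simp at hj ⊢; omega
    · intro j _ hj
      simp at hj
      rw [gwh_of_lt η (by omega), mul_zero]
  rw [hsub]
  have hN : ((p : ℝ) + m) ≠ 0 := by
    have : (0 : ℝ) < ((p + m : ℕ) : ℝ) := by exact_mod_cast hpos
    push_cast at this; linarith
  have hN1 : ((p : ℝ) + m + 1) ≠ 0 := by positivity
  have e1 : ∑ j ∈ Finset.range (m + 1), η j * gwh η (p + j) (p + m)
      = ∑ x ∈ Finset.HasAntidiagonal.antidiagonal m, (((x.1 : ℝ) * η x.1) * gwQ η (p + m) x.2 / (p + m)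
          + p / (p + m) * (η x.1 * gwQ η (p + m) x.2)) := by
    rw [Finset.Nat.sum_antidiagonal_eq_sum_range_succ_mk]
    apply Finset.sum_congr rfl
    intro j hj
    simp at hj
    unfold gwh
    rw [if_neg (by omega), if_pos (by omega)]
    have : p + m - (p + j) = m - j := by omega
    rw [this]
    push_cast
    field_simp
    ring
  rw [e1, Finset.sum_add_distrib, ← Finset.mul_sum, ← gwQ_succ, ← Finset.sum_div]
  have h3 := gwQ_deriv η (p + m) m
  push_cast at h3
  have h4 : ∑ x ∈ Finset.HasAntidiagonal.antidiagonal m, (x.1 : ℝ) * η x.1 * gwQ η (p + m) x.2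
      = m * gwQ η (p + m + 1) m / (p + m + 1) := by
    rw [← h3]; field_simp
  rw [h4]
  unfold gwh
  rw [if_neg (by omega), if_pos (by omega)]
  have : p + m + 1 - (p + 1) = m := by omega
  rw [this]
  push_cast
  field_simp
  ring

lemma gwh_conv (η : ℕ → ℝ) (n : ℕ) : ∀ p q : ℕ,
    ∑ x ∈ Finset.HasAntidiagonal.antidiagonal n, gwh η p x.1 * gwh η q x.2 = gwh η (p + q) n := by
  induction n with
  | zero =>
    intro p q
    simp [gwh]
    split_ifs <;> simp_all
  | succ n ih =>
    intro p q
    cases p with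
    | zero =>
      rw [Finset.Nat.antidiagonal_succ, Finset.sum_cons, Finset.sum_map]
      simp [gwh_zero_left]
    | succ p =>
      rw [Finset.Nat.antidiagonal_succ, Finset.sum_cons, Finset.sum_map]
      have hz : gwh η (p + 1) 0 = 0 := gwh_of_lt η (by omega)
      simp only [hz, zero_mul, zero_add]
      have e : ∀ x ∈ Finset.HasAntidiagonal.antidiagonal n,
          gwh η (p + 1) (x.1 + 1) * gwh η q x.2
            = ∑ j ∈ Finset.range (n + 1), η j * (gwh η (p + j) x.1 * gwh η q x.2) := by
        intro x hx
        rw [Finset.HasAntidiagonal.mem_antidiagonal] at hx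
        rw [gwh_rec, Finset.sum_mul]
        have : ∑ j ∈ Finset.range (x.1 + 1), η j * gwh η (p + j) x.1 * gwh η q x.2
          = ∑ j ∈ Finset.range (n + 1), η j * gwh η (p + j) x.1 * gwh η q x.2 := by
          apply Finset.sum_subset
          · intro j hj; simp at hj ⊢; omega
          · intro j _ hj
            simp at hj
            rw [gwh_of_lt η (by omega)]; ring
        rw [this]
        exact Finset.sum_congr rfl fun j _ => by ring
      have e2 : ∑ x ∈ Finset.HasAntidiagonal.antidiagonal n, gwh η (p + 1) (x.1 + 1) * gwh η q x.2
          = gwh η (p + 1 + q) (n + 1) := by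
        rw [Finset.sum_congr rfl e, Finset.sum_comm]
        rw [show p + 1 + q = (p + q) + 1 by ring, gwh_rec]
        apply Finset.sum_congr rfl
        intro j _
        rw [← Finset.mul_sum, ih, show p + j + q = p + q + j by ring]
      simpa using e2

lemma gwh_partial_le {η : ℕ → ℝ} (h0 : ∀ i, 0 ≤ η i) (hs : HasSum η 1) (N : ℕ) : ∀ p : ℕ,
    ∑ n ∈ Finset.range (N + 1), gwh η p n ≤ 1 := by
  induction N with
  | zero => intro p; simp [gwh]; split_ifs <;> norm_num
  | succ N ih =>
    intro p
    cases p with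
    | zero => simp [gwh_zero_left]
    | succ p =>
      rw [Finset.sum_range_succ', gwh_of_lt η (by omega : 0 < p + 1), add_zero]
      have e : ∀ n ∈ Finset.range (N + 1), gwh η (p + 1) (n + 1)
          = ∑ j ∈ Finset.range (N + 1), η j * gwh η (p + j) n := by
        intro n hn
        rw [Finset.mem_range] at hn
        rw [gwh_rec]
        apply Finset.sum_subset
        · intro j hj; simp at hj ⊢; omega
        · intro j _ hj
          simp at hj
          rw [gwh_of_lt η (by omega)]; ring
      rw [Finset.sum_congr rfl e, Finset.sum_comm]
      calc _ ≤ ∑ j ∈ Finset.range (N + 1), η j := by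
            apply Finset.sum_le_sum
            intro j _
            rw [← Finset.mul_sum]
            exact mul_le_of_le_one_right (h0 j) (ih _)
        _ ≤ 1 := sum_le_hasSum _ (fun i _ => h0 i) hs

lemma gwh_summable {η : ℕ → ℝ} (h0 : ∀ i, 0 ≤ η i) (hs : HasSum η 1) (p : ℕ) :
    Summable (gwh η p) := by
  apply summable_of_sum_range_le (c := 1) (fun n => gwh_nonneg h0 p n)
  intro n
  exact (Finset.sum_le_sum_of_subset_of_nonneg (by intro j hj; simp at hj ⊢; omega)
    (fun i _ _ => gwh_nonneg h0 p i)).trans (gwh_partial_le h0 hs n p)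

lemma gwh_tsum_pow {η : ℕ → ℝ} (h0 : ∀ i, 0 ≤ η i) (hs : HasSum η 1) (p : ℕ) :
    ∑' n, gwh η p n = (∑' n, gwh η 1 n) ^ p := by
  induction p with
  | zero => simp [gwh_zero_left]
  | succ p ih =>
    rw [pow_succ, ← ih, tsum_mul_tsum_eq_tsum_sum_antidiagonal_of_summable_norm]
    · exact tsum_congr fun n => (gwh_conv η n p 1).symm
    · exact (gwh_summable h0 hs p).norm
    · exact (gwh_summable h0 hs 1).norm

lemma gwh_fixed {η : ℕ → ℝ} (h0 : ∀ i, 0 ≤ η i) (hs : HasSum η 1) :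
    HasSum (fun j => η j * (∑' n, gwh η 1 n) ^ j) (∑' n, gwh η 1 n) := by
  set q := ∑' n, gwh η 1 n with hq
  have hq0 : 0 ≤ q := tsum_nonneg fun n => gwh_nonneg h0 1 n
  have hq1 : q ≤ 1 := by
    refine Summable.tsum_le_of_sum_range_le (gwh_summable h0 hs 1) fun n => ?_
    exact (Finset.sum_le_sum_of_subset_of_nonneg (by intro j hj; simp at hj ⊢; omega)
      (fun i _ _ => gwh_nonneg h0 1 i)).trans (gwh_partial_le h0 hs n 1)
  have hsj : Summable (fun j => η j * q ^ j) :=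
    Summable.of_nonneg_of_le (fun j => mul_nonneg (h0 j) (pow_nonneg hq0 j))
      (fun j => mul_le_of_le_one_right (h0 j) (pow_le_one₀ hq0 hq1)) hs.summable
  have hF : ∀ j, HasSum (fun n => η j * gwh η j n) (η j * q ^ j) := by
    intro j
    have := (gwh_summable h0 hs j).hasSum.mul_left (η j)
    rwa [gwh_tsum_pow h0 hs] at this
  have hS : Summable (fun x : ℕ × ℕ => η x.1 * gwh η x.1 x.2) := by
    rw [summable_prod_of_nonneg]
    · refine ⟨fun j => (hF j).summable, ?_⟩
      simpa only [(hF _).tsum_eq] using hsj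
    · intro x; exact mul_nonneg (h0 _) (gwh_nonneg h0 _ _)
  have h1 : ∑' j, η j * q ^ j = q := by
    have e1 : ∑' j, η j * q ^ j = ∑' j, ∑' n, η j * gwh η j n :=
      tsum_congr fun j => (hF j).tsum_eq.symm
    rw [e1, Summable.tsum_comm (f := fun n j => η j * gwh η j n)]
    · rw [hq, (gwh_summable h0 hs 1).tsum_eq_zero_add, gwh_of_lt η (by omega : 0 < 1), zero_add]
      apply tsum_congr
      intro n
      rw [show gwh η 1 (n + 1) = gwh η (0 + 1) (n + 1) from rfl, gwh_rec, tsum_eq_sum (s := Finset.range (n + 1))]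
      · simp
      · intro j hj
        simp at hj
        rw [gwh_of_lt η (by omega), mul_zero]
    · exact hS.prod_symm
  rw [← h1]
  convert hsj.hasSum using 1
  rw [h1]

lemma gwh_tsum_one {η : ℕ → ℝ} (h0 : ∀ i, 0 ≤ η i) (hs : HasSum η 1) (hη1 : η 1 < 1)
    (hmean : HasSum (fun i : ℕ => (i : ℝ) * η i) 1) : HasSum (gwh η 1) 1 := by
  have hfix := gwh_fixed h0 hs
  have hsum := (gwh_summable h0 hs 1).hasSum
  set q := ∑' n, gwh η 1 n with hq
  have hq0 : 0 ≤ q := tsum_nonneg fun n => gwh_nonneg h0 1 n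
  suffices hq1 : q = 1 by rwa [hq1] at hsum
  by_contra hne
  -- there is j ≥ 2 with positive weight
  have hj : ∃ j, 2 ≤ j ∧ η j ≠ 0 := by
    by_contra hcon
    push Not at hcon
    have : HasSum (fun i : ℕ => (i : ℝ) * η i) (1 * η 1) := by
      have := hasSum_single (f := fun i : ℕ => (i : ℝ) * η i) 1 (by
        intro j hj
        rcases Nat.lt_or_ge j 2 with h | h
        · have : j = 0 := by omega
          simp [this]
        · simp [hcon j h])
      simpa using this
    have := hmean.unique this
    linarith
  obtain ⟨j, hj2, hjne⟩ := hj
  have hd : HasSum (fun i : ℕ => η i * (q ^ i - 1 - i * (q - 1))) (q - 1 - (1 * (q - 1))) := by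
    have := (hfix.sub hs).sub (hmean.mul_right (q - 1))
    have e : (fun i : ℕ => η i * (q ^ i - 1 - i * (q - 1)))
        = fun b : ℕ => η b * q ^ b - η b - (b : ℝ) * η b * (q - 1) := by
      funext i; ring
    rw [e]
    exact this
  have hnn : ∀ i : ℕ, 0 ≤ η i * (q ^ i - 1 - i * (q - 1)) := by
    intro i
    apply mul_nonneg (h0 i)
    have := one_add_mul_le_pow (a := q - 1) (by linarith) i
    have e : 1 + (q - 1) = q := by ring
    rw [e] at this
    linarith
  have hz : (q - 1 - (1 * (q - 1))) = 0 := by ring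
  rw [hz] at hd
  have h2 := (hasSum_zero_iff_of_nonneg hnn).1 hd
  have h3 := congrFun h2 j
  simp only [Pi.zero_apply, mul_eq_zero, hjne, false_or] at h3
  have h4 := one_add_mul_self_lt_rpow_one_add (s := q - 1) (by linarith) (sub_ne_zero.2 hne)
    (p := (j : ℝ)) (by exact_mod_cast hj2)
  rw [Real.rpow_natCast] at h4
  have e : 1 + (q - 1) = q := by ring
  rw [e] at h4
  linarith


/-- Characteristic function of the centred offspring law. -/
noncomputable def gwPhi (η : ℕ → ℝ) (t : ℝ) : ℂ :=
  ∑' j : ℕ, (η j : ℂ) * Complex.exp (((((j : ℝ) - 1) * t : ℝ) : ℂ) * Complex.I)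

lemma gwPhi_summable {η : ℕ → ℝ} (h0 : ∀ i, 0 ≤ η i) (hs : HasSum η 1) (t : ℝ) :
    Summable (fun j : ℕ => ‖(η j : ℂ) * Complex.exp (((((j : ℝ) - 1) * t : ℝ) : ℂ) * Complex.I)‖) := by
  have : (fun j : ℕ => ‖(η j : ℂ) * Complex.exp (((((j : ℝ) - 1) * t : ℝ) : ℂ) * Complex.I)‖) = η := by
    funext j
    rw [norm_mul, Complex.norm_exp_ofReal_mul_I, mul_one, Complex.norm_real,
      Real.norm_of_nonneg (h0 j)]
  rw [this]; exact hs.summable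

lemma gwQ_norm {η : ℕ → ℝ} (h0 : ∀ i, 0 ≤ η i) (n m : ℕ) (x : ℝ) :
    ‖(gwQ η n m : ℂ) * Complex.exp ((x : ℂ) * Complex.I)‖ = gwQ η n m := by
  rw [norm_mul, Complex.norm_exp_ofReal_mul_I, mul_one, Complex.norm_real,
      Real.norm_of_nonneg (gwQ_nonneg h0 _ _)]

lemma gwQ_summable {η : ℕ → ℝ} (_h0 : ∀ i, 0 ≤ η i) (hs : HasSum η 1) (n : ℕ) :
    Summable (gwQ η n) := by
  induction n with
  | zero =>
    have : gwQ η 0 = fun m => if m = 0 then (1 : ℝ) else 0 := funext fun m => gwQ_zero η m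
    rw [this]
    exact (hasSum_ite_eq 0 (1 : ℝ)).summable
  | succ n ih =>
    have := summable_norm_sum_mul_antidiagonal_of_summable_norm hs.summable.norm ih.norm
    refine this.of_norm.congr fun m => ?_
    rw [gwQ_succ]

lemma gwPhi_pow {η : ℕ → ℝ} (h0 : ∀ i, 0 ≤ η i) (hs : HasSum η 1) (n : ℕ) (t : ℝ) :
    HasSum (fun m : ℕ => (gwQ η n m : ℂ) *
      Complex.exp (((((m : ℝ) - n) * t : ℝ) : ℂ) * Complex.I)) (gwPhi η t ^ n) := by
  have hsum : ∀ n : ℕ, Summable (fun m : ℕ => ‖(gwQ η n m : ℂ) *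
      Complex.exp (((((m : ℝ) - n) * t : ℝ) : ℂ) * Complex.I)‖) := by
    intro n
    simp_rw [gwQ_norm h0]
    exact gwQ_summable h0 hs n
  induction n with
  | zero =>
    have : (fun m : ℕ => (gwQ η 0 m : ℂ) *
      Complex.exp (((((m : ℝ) - (0 : ℕ)) * t : ℝ) : ℂ) * Complex.I))
        = fun m => if m = 0 then (1 : ℂ) else 0 := by
      funext m
      rw [gwQ_zero]
      split_ifs with h
      · simp [h]
      · simp
    rw [this, pow_zero]
    exact hasSum_ite_eq 0 (1 : ℂ)
  | succ n ih =>
    rw [pow_succ', ← ih.tsum_eq, gwPhi,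
      tsum_mul_tsum_eq_tsum_sum_antidiagonal_of_summable_norm (gwPhi_summable h0 hs t) (hsum n)]
    have := (hsum (n + 1)).of_norm.hasSum
    suffices hh : ∀ m : ℕ, (gwQ η (n + 1) m : ℂ) *
        Complex.exp (((((m : ℝ) - (n + 1 : ℕ)) * t : ℝ) : ℂ) * Complex.I)
        = ∑ kl ∈ Finset.HasAntidiagonal.antidiagonal m, (η kl.1 : ℂ) *
          Complex.exp (((((kl.1 : ℝ) - 1) * t : ℝ) : ℂ) * Complex.I) * ((gwQ η n kl.2 : ℂ) *
          Complex.exp (((((kl.2 : ℝ) - n) * t : ℝ) : ℂ) * Complex.I)) by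
      rw [← tsum_congr hh]
      exact this
    intro m
    rw [gwQ_succ]
    push_cast
    rw [Finset.sum_mul]
    apply Finset.sum_congr rfl
    intro x hx
    rw [Finset.HasAntidiagonal.mem_antidiagonal] at hx
    rw [mul_mul_mul_comm, ← Complex.exp_add]
    congr 2
    rw [← hx]
    push_cast
    ring

lemma gwPhi_continuous {η : ℕ → ℝ} (h0 : ∀ i, 0 ≤ η i) (hs : HasSum η 1) :
    Continuous (gwPhi η) := by
  unfold gwPhi
  refine continuous_tsum (u := η) (fun j => by fun_prop) hs.summable ?_
  intro j t
  rw [norm_mul, Complex.norm_exp_ofReal_mul_I, mul_one, Complex.norm_real,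
      Real.norm_of_nonneg (h0 j)]

lemma gwPhi_norm_le {η : ℕ → ℝ} (h0 : ∀ i, 0 ≤ η i) (hs : HasSum η 1) (t : ℝ) :
    ‖gwPhi η t‖ ≤ 1 := by
  refine (norm_tsum_le_tsum_norm (gwPhi_summable h0 hs t)).trans ?_
  rw [← hs.tsum_eq]
  apply le_of_eq
  apply tsum_congr
  intro j
  rw [norm_mul, Complex.norm_exp_ofReal_mul_I, mul_one, Complex.norm_real,
      Real.norm_of_nonneg (h0 j)]

lemma integral_exp_int (k : ℤ) :
    ∫ t in (-π)..π, Complex.exp (((((k : ℝ)) * t : ℝ) : ℂ) * Complex.I)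
      = if k = 0 then ((2 * π : ℝ) : ℂ) else 0 := by
  split_ifs with h
  · subst h
    simp
    ring
  · have hc : (k : ℂ) * Complex.I ≠ 0 := by
      simp [h]
    have e : (fun t : ℝ => Complex.exp (((((k : ℝ)) * t : ℝ) : ℂ) * Complex.I))
        = fun t : ℝ => Complex.exp ((k : ℂ) * Complex.I * t) := by
      funext t; congr 1; push_cast; ring
    rw [e, integral_exp_mul_complex hc]
    have : Complex.exp ((k : ℂ) * Complex.I * (π : ℝ)) = Complex.exp ((k : ℂ) * Complex.I * ((-π : ℝ) : ℂ)) := by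
      rw [Complex.exp_eq_exp_iff_exists_int]
      exact ⟨k, by push_cast; ring⟩
    rw [this, sub_self, zero_div]

lemma gwQ_integral {η : ℕ → ℝ} (h0 : ∀ i, 0 ≤ η i) (hs : HasSum η 1) (n : ℕ) (hn : 1 ≤ n) :
    ∫ t in (-π)..π, gwPhi η t ^ n * Complex.exp ((t : ℂ) * Complex.I)
      = ((2 * π * gwQ η n (n - 1) : ℝ) : ℂ) := by
  have key := intervalIntegral.hasSum_integral_of_dominated_convergence (a := -π) (b := π)
    (μ := volume) (ι := ℕ)
    (f := fun t => gwPhi η t ^ n * Complex.exp ((t : ℂ) * Complex.I))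
    (F := fun m t => (gwQ η n m : ℂ) *
      Complex.exp ((((((m : ℤ) - n + 1 : ℤ) : ℝ) * t : ℝ) : ℂ) * Complex.I))
    (fun m _ => gwQ η n m) ?_ ?_ ?_ ?_ ?_
  · have e : ∀ m : ℕ, ∫ t in (-π)..π, (gwQ η n m : ℂ) *
      Complex.exp ((((((m : ℤ) - n + 1 : ℤ) : ℝ) * t : ℝ) : ℂ) * Complex.I)
        = if m = n - 1 then ((2 * π * gwQ η n (n - 1) : ℝ) : ℂ) else 0 := by
      intro m
      rw [intervalIntegral.integral_const_mul, integral_exp_int]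
      by_cases hm : m = n - 1
      · rw [if_pos (by omega), if_pos hm, hm]
        push_cast; ring
      · rw [if_neg (by omega), if_neg hm, mul_zero]
    simp_rw [e] at key
    exact key.unique (hasSum_ite_eq (n - 1) _)
  · intro m
    exact (by fun_prop : Continuous _).aestronglyMeasurable
  · intro m
    refine ae_of_all _ fun t _ => ?_
    rw [gwQ_norm h0]
  · exact ae_of_all _ fun t _ => gwQ_summable h0 hs n
  · exact _root_.intervalIntegrable_const
  · refine ae_of_all _ fun t _ => ?_
    have := (gwPhi_pow h0 hs n t).mul_right (Complex.exp ((t : ℂ) * Complex.I))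
    convert! this using 2 with m
    rw [mul_assoc, ← Complex.exp_add]
    congr 2
    push_cast
    ring

lemma exp_I_bound (x : ℝ) : ‖Complex.exp ((x : ℂ) * Complex.I) - 1 - (x : ℂ) * Complex.I‖ ≤ 3 * x ^ 2 := by
  have hn : ‖(x : ℂ) * Complex.I‖ = |x| := by simp
  rcases le_or_gt |x| 1 with h | h
  · have := Complex.norm_exp_sub_one_sub_id_le (x := (x : ℂ) * Complex.I) (by rw [hn]; exact h)
    rw [hn, sq_abs] at this
    nlinarith [sq_nonneg x]
  · calc ‖Complex.exp ((x : ℂ) * Complex.I) - 1 - (x : ℂ) * Complex.I‖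
        ≤ ‖Complex.exp ((x : ℂ) * Complex.I)‖ + ‖(1 : ℂ)‖ + ‖(x : ℂ) * Complex.I‖ :=
          (norm_sub_le _ _).trans (add_le_add_left (norm_sub_le _ _) _)
      _ = 2 + |x| := by rw [Complex.norm_exp_ofReal_mul_I, hn, norm_one]; ring
      _ ≤ 3 * x ^ 2 := by
          rw [← sq_abs x]; nlinarith

lemma exp_I_limit (a : ℝ) :
    Tendsto (fun t : ℝ => (Complex.exp (((a * t : ℝ) : ℂ) * Complex.I) - 1
      - ((a * t : ℝ) : ℂ) * Complex.I) / (t : ℂ) ^ 2) (nhdsWithin 0 {0}ᶜ)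
      (nhds (-(a : ℂ) ^ 2 / 2)) := by
  rw [tendsto_iff_norm_sub_tendsto_zero]
  have hb : ∀ᶠ t : ℝ in nhdsWithin 0 {0}ᶜ, ‖(Complex.exp (((a * t : ℝ) : ℂ) * Complex.I) - 1
      - ((a * t : ℝ) : ℂ) * Complex.I) / (t : ℂ) ^ 2 - (-(a : ℂ) ^ 2 / 2)‖ ≤ |a| ^ 3 * |t| := by
    have h1 : ∀ᶠ t : ℝ in nhdsWithin 0 {0}ᶜ, |a * t| < 1 := by
      apply nhdsWithin_le_nhds
      have : ContinuousAt (fun t : ℝ => |a * t|) 0 := by fun_prop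
      have := this.eventually_lt (continuousAt_const (y := (1 : ℝ))) (by simp)
      exact this
    filter_upwards [h1, self_mem_nhdsWithin] with t ht ht0
    have ht0' : t ≠ 0 := ht0
    have htc : (t : ℂ) ≠ 0 := by exact_mod_cast ht0'
    have hn : ‖((a * t : ℝ) : ℂ) * Complex.I‖ = |a * t| := by
      rw [norm_mul, Complex.norm_I, mul_one, Complex.norm_real, Real.norm_eq_abs]
    have := Complex.exp_bound (x := ((a * t : ℝ) : ℂ) * Complex.I) (by rw [hn]; exact ht.le)
      (n := 3) (by norm_num)
    rw [hn] at this
    have e : (Complex.exp (((a * t : ℝ) : ℂ) * Complex.I) - 1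
      - ((a * t : ℝ) : ℂ) * Complex.I) / (t : ℂ) ^ 2 - (-(a : ℂ) ^ 2 / 2)
      = (Complex.exp (((a * t : ℝ) : ℂ) * Complex.I) - ∑ m ∈ Finset.range 3,
        (((a * t : ℝ) : ℂ) * Complex.I) ^ m / (m.factorial : ℂ)) / (t : ℂ) ^ 2 := by
      simp only [Finset.sum_range_succ, Finset.sum_range_zero, Nat.factorial, mul_pow, Complex.I_sq]
      push_cast
      field_simp
      ring
    rw [e, norm_div, norm_pow, Complex.norm_real, Real.norm_eq_abs,
      div_le_iff₀ (by positivity)]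
    refine this.trans ?_
    rw [abs_mul]
    have : (0 : ℝ) ≤ |a| ^ 3 * |t| ^ 3 := by positivity
    norm_num [Nat.factorial]
    rw [← sq_abs t, mul_pow]
    nlinarith
  refine tendsto_of_tendsto_of_tendsto_of_le_of_le' tendsto_const_nhds ?_
    (Eventually.of_forall fun t => norm_nonneg _) hb
  have : Continuous (fun t : ℝ => |a| ^ 3 * |t|) := by fun_prop
  have := (this.tendsto 0).mono_left (nhdsWithin_le_nhds (s := {0}ᶜ))
  simpa using this

lemma gwPhi_taylor {η : ℕ → ℝ} (h0 : ∀ i, 0 ≤ η i) (hs : HasSum η 1)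
    (hmean : HasSum (fun i : ℕ => (i : ℝ) * η i) 1) {σ : ℝ}
    (hvar : HasSum (fun i : ℕ => ((i : ℝ) - 1) ^ 2 * η i) (σ ^ 2)) :
    Tendsto (fun t : ℝ => (gwPhi η t - 1) / (t : ℂ) ^ 2) (nhdsWithin 0 {0}ᶜ)
      (nhds (-(σ : ℂ) ^ 2 / 2)) := by
  have key := tendsto_tsum_of_dominated_convergence (𝓕 := nhdsWithin (0 : ℝ) {0}ᶜ)
    (f := fun (t : ℝ) (j : ℕ) => (η j : ℂ) *
      ((Complex.exp (((((j : ℝ) - 1) * t : ℝ) : ℂ) * Complex.I) - 1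
      - ((((j : ℝ) - 1) * t : ℝ) : ℂ) * Complex.I) / (t : ℂ) ^ 2))
    (g := fun j : ℕ => (η j : ℂ) * (-(((j : ℝ) - 1 : ℝ) : ℂ) ^ 2 / 2))
    (bound := fun j : ℕ => 3 * (((j : ℝ) - 1) ^ 2 * η j))
    (hvar.summable.mul_left 3) ?_ ?_
  · have hlim : ∑' j : ℕ, (η j : ℂ) * (-(((j : ℝ) - 1 : ℝ) : ℂ) ^ 2 / 2) = -(σ : ℂ) ^ 2 / 2 := by
      have h1 : HasSum (fun j : ℕ => (((((j : ℝ) - 1) ^ 2 * η j * (-1 / 2) : ℝ)) : ℂ))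
          ((σ ^ 2 * (-1 / 2) : ℝ) : ℂ) := by
        exact Complex.hasSum_ofReal.2 (hvar.mul_right _)
      have h2 : (fun j : ℕ => (η j : ℂ) * (-(((j : ℝ) - 1 : ℝ) : ℂ) ^ 2 / 2))
          = fun j : ℕ => (((((j : ℝ) - 1) ^ 2 * η j * (-1 / 2) : ℝ)) : ℂ) := by
        funext j; push_cast; ring
      rw [h2, h1.tsum_eq]; push_cast; ring
    rw [hlim] at key
    refine key.congr' ?_
    filter_upwards with t
    have hm : HasSum (fun j : ℕ => (η j : ℂ) * (((((j : ℝ) - 1) * t : ℝ) : ℂ) * Complex.I)) 0 := by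
      have h1 : HasSum (fun j : ℕ => (((j : ℝ) * η j - η j : ℝ) : ℂ)) ((1 - 1 : ℝ) : ℂ) :=
        Complex.hasSum_ofReal.2 (hmean.sub hs)
      have h2 := h1.mul_right ((t : ℂ) * Complex.I)
      have e : (fun j : ℕ => (η j : ℂ) * (((((j : ℝ) - 1) * t : ℝ) : ℂ) * Complex.I))
        = fun j : ℕ => (((j : ℝ) * η j - η j : ℝ) : ℂ) * ((t : ℂ) * Complex.I) := by
        funext j; push_cast; ring
      rw [e]
      simpa using h2
    have hone : HasSum (fun j : ℕ => (η j : ℂ)) ((1 : ℝ) : ℂ) := Complex.hasSum_ofReal.2 hs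
    have hphi := (gwPhi_summable h0 hs t).of_norm.hasSum
    have h3 := (((hphi.sub hone).sub hm).div_const ((t : ℂ) ^ 2)).tsum_eq
    rw [sub_zero, Complex.ofReal_one] at h3
    rw [gwPhi, ← h3]
    apply tsum_congr
    intro j
    ring
  · intro j
    exact (exp_I_limit ((j : ℝ) - 1)).const_mul _
  · filter_upwards [self_mem_nhdsWithin] with t ht j
    have ht0' : t ≠ 0 := ht
    have hpos : 0 < t ^ 2 := by positivity
    rw [norm_mul, Complex.norm_real, Real.norm_of_nonneg (h0 j), norm_div, norm_pow,
      Complex.norm_real, Real.norm_eq_abs, sq_abs]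
    have := exp_I_bound (((j : ℝ) - 1) * t)
    calc _ ≤ η j * (3 * (((j : ℝ) - 1) * t) ^ 2 / t ^ 2) := by
          have := h0 j
          gcongr
      _ = 3 * (((j : ℝ) - 1) ^ 2 * η j) := by
          field_simp

lemma gwPhi_zero {η : ℕ → ℝ} (hs : HasSum η 1) : gwPhi η 0 = 1 := by
  have hone : HasSum (fun j : ℕ => (η j : ℂ)) ((1 : ℝ) : ℂ) := Complex.hasSum_ofReal.2 hs
  unfold gwPhi
  simp only [mul_zero, Complex.ofReal_zero, zero_mul, Complex.exp_zero, mul_one]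
  simpa using hone.tsum_eq

lemma gwPhi_clt {η : ℕ → ℝ} (h0 : ∀ i, 0 ≤ η i) (hs : HasSum η 1)
    (hmean : HasSum (fun i : ℕ => (i : ℝ) * η i) 1) {σ : ℝ}
    (hvar : HasSum (fun i : ℕ => ((i : ℝ) - 1) ^ 2 * η i) (σ ^ 2)) (t : ℝ) :
    Tendsto (fun n : ℕ => gwPhi η (t / √n) ^ n) atTop
      (nhds ((Real.exp (-(σ ^ 2 / 2) * t ^ 2) : ℝ) : ℂ)) := by
  rcases eq_or_ne t 0 with rfl | ht
  · simp [gwPhi_zero hs]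
  have h1 : Tendsto (fun n : ℕ => t / √(n : ℝ)) atTop (nhdsWithin 0 {0}ᶜ) := by
    rw [tendsto_nhdsWithin_iff]
    constructor
    · exact Tendsto.div_atTop tendsto_const_nhds
        (Real.tendsto_sqrt_atTop.comp tendsto_natCast_atTop_atTop)
    · filter_upwards [eventually_gt_atTop 0] with n hn
      have : (0 : ℝ) < n := by exact_mod_cast hn
      have : √(n : ℝ) ≠ 0 := by positivity
      simp [ht, this]
  have h2 := ((gwPhi_taylor h0 hs hmean hvar).comp h1).mul_const ((t : ℂ) ^ 2)
  have h3 := Complex.tendsto_one_add_pow_exp_of_tendsto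
    (g := fun n : ℕ => gwPhi η (t / √n) - 1) (t := -(σ : ℂ) ^ 2 / 2 * (t : ℂ) ^ 2) ?_
  · have e : ((Real.exp (-(σ ^ 2 / 2) * t ^ 2) : ℝ) : ℂ)
        = Complex.exp (-(σ : ℂ) ^ 2 / 2 * (t : ℂ) ^ 2) := by
      rw [Complex.ofReal_exp]; congr 1; push_cast; ring
    rw [e]
    refine h3.congr fun n => ?_
    congr 1; ring
  · refine h2.congr' ?_
    filter_upwards [eventually_gt_atTop 0] with n hn
    have hn' : (0 : ℝ) < n := by exact_mod_cast hn
    have hc : (n : ℂ) ≠ 0 := by exact_mod_cast hn.ne'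
    have htc : (t : ℂ) ≠ 0 := by exact_mod_cast ht
    have hsq : ((√(n : ℝ) : ℝ) : ℂ) ^ 2 = n := by
      rw [← Complex.ofReal_pow, Real.sq_sqrt hn'.le]; simp
    simp only [Function.comp]
    push_cast
    rw [div_pow, hsq]
    field_simp


lemma gwPhi_norm_lt {η : ℕ → ℝ} (h0 : ∀ i, 0 ≤ η i) (hs : HasSum η 1)
    (haper : ¬ ∃ (a : ℤ) (d : ℤ), 2 ≤ d ∧ ∀ i : ℕ, η i ≠ 0 → d ∣ ((i : ℤ) - 1 - a))
    {t : ℝ} (ht0 : t ≠ 0) (htπ : |t| ≤ π) : ‖gwPhi η t‖ < 1 := by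
  by_contra hcon
  have hs1 : ‖gwPhi η t‖ = 1 := le_antisymm (gwPhi_norm_le h0 hs t) (not_lt.1 hcon)
  set s := gwPhi η t with hsdef
  have hss : (starRingEnd ℂ) s * s = 1 := by
    rw [← Complex.normSq_eq_conj_mul_self, Complex.normSq_eq_norm_sq, hs1]; simp
  have hphi := (gwPhi_summable h0 hs t).of_norm.hasSum
  change HasSum _ (gwPhi η t) at hphi
  rw [← hsdef] at hphi
  have h1 := hphi.mul_left ((starRingEnd ℂ) s)
  rw [hss] at h1
  have h2 := Complex.hasSum_re h1
  have h3 := hs.sub h2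
  rw [Complex.one_re, sub_self] at h3
  have hre : ∀ j : ℕ, ((starRingEnd ℂ) s * ((η j : ℂ) * Complex.exp (((((j : ℝ) - 1) * t : ℝ) : ℂ) * Complex.I))).re
      = η j * ((starRingEnd ℂ) s * Complex.exp (((((j : ℝ) - 1) * t : ℝ) : ℂ) * Complex.I)).re := by
    intro j
    rw [mul_left_comm, Complex.re_ofReal_mul]
  have hnorm : ∀ j : ℕ, ‖(starRingEnd ℂ) s * Complex.exp (((((j : ℝ) - 1) * t : ℝ) : ℂ) * Complex.I)‖ = 1 := by
    intro j
    rw [norm_mul, Complex.norm_exp_ofReal_mul_I, RCLike.norm_conj, hs1, mul_one]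
  have hnn : ∀ j : ℕ, 0 ≤ η j - ((starRingEnd ℂ) s * ((η j : ℂ) * Complex.exp (((((j : ℝ) - 1) * t : ℝ) : ℂ) * Complex.I))).re := by
    intro j
    rw [hre]
    have := Complex.re_le_norm ((starRingEnd ℂ) s * Complex.exp (((((j : ℝ) - 1) * t : ℝ) : ℂ) * Complex.I))
    rw [hnorm] at this
    nlinarith [h0 j]
  have h4 := (hasSum_zero_iff_of_nonneg hnn).1 h3
  have h5 : ∀ j : ℕ, η j ≠ 0 → Complex.exp (((((j : ℝ) - 1) * t : ℝ) : ℂ) * Complex.I) = s := by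
    intro j hj
    have h6 := congrFun h4 j
    simp only [Pi.zero_apply] at h6
    rw [hre] at h6
    have h7 : ((starRingEnd ℂ) s * Complex.exp (((((j : ℝ) - 1) * t : ℝ) : ℂ) * Complex.I)).re = 1 := by
      have : η j * (1 - ((starRingEnd ℂ) s * Complex.exp (((((j : ℝ) - 1) * t : ℝ) : ℂ) * Complex.I)).re) = 0 := by
        linarith
      rcases mul_eq_zero.1 this with h | h
      · exact absurd h hj
      · linarith
    have h8 : (starRingEnd ℂ) s * Complex.exp (((((j : ℝ) - 1) * t : ℝ) : ℂ) * Complex.I) = 1 := by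
      have hn := hnorm j
      set z := (starRingEnd ℂ) s * Complex.exp (((((j : ℝ) - 1) * t : ℝ) : ℂ) * Complex.I)
      have hsq : Complex.normSq z = 1 := by rw [Complex.normSq_eq_norm_sq, hn]; norm_num
      rw [Complex.normSq_apply, h7] at hsq
      have : z.im = 0 := by nlinarith
      exact Complex.ext (by simpa using h7) (by simpa using this)
    calc _ = ((starRingEnd ℂ) s * s) * Complex.exp (((((j : ℝ) - 1) * t : ℝ) : ℂ) * Complex.I) := by
          rw [hss, one_mul]
      _ = s * ((starRingEnd ℂ) s * Complex.exp (((((j : ℝ) - 1) * t : ℝ) : ℂ) * Complex.I)) := by ring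
      _ = s := by rw [h8, mul_one]
  have hex : ∃ j0, η j0 ≠ 0 := by
    by_contra hno
    push Not at hno
    have : η = fun _ => 0 := funext hno
    rw [this] at hs
    exact zero_ne_one (hasSum_zero.unique hs)
  obtain ⟨j0, hj0⟩ := hex
  let K : AddSubgroup ℤ :=
    { carrier := {m : ℤ | ∃ k : ℤ, (m : ℝ) * t = k * (2 * π)}
      add_mem' := by
        rintro a b ⟨k, hk⟩ ⟨l, hl⟩
        exact ⟨k + l, by push_cast; rw [add_mul, add_mul, hk, hl]⟩
      zero_mem' := ⟨0, by simp⟩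
      neg_mem' := by
        rintro a ⟨k, hk⟩
        exact ⟨-k, by push_cast; rw [neg_mul, neg_mul, hk]⟩ }
  have hK : ∀ j : ℕ, η j ≠ 0 → ((j : ℤ) - 1 - ((j0 : ℤ) - 1)) ∈ K := by
    intro j hj
    have := (h5 j hj).trans (h5 j0 hj0).symm
    rw [Complex.exp_eq_exp_iff_exists_int] at this
    obtain ⟨k, hk⟩ := this
    refine ⟨k, ?_⟩
    have h9 := congrArg Complex.im hk
    simp at h9
    push_cast
    linarith
  obtain ⟨d, hd⟩ := Int.subgroup_cyclic K
  have hdvd : ∀ j : ℕ, η j ≠ 0 → d ∣ ((j : ℤ) - 1 - ((j0 : ℤ) - 1)) := by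
    intro j hj
    have := hK j hj
    rw [hd, AddSubgroup.mem_closure_singleton] at this
    obtain ⟨n, hn⟩ := this
    exact ⟨n, by rw [← hn, smul_eq_mul, mul_comm]⟩
  have hdK : d ∈ K := by
    rw [hd]; exact AddSubgroup.mem_closure_of_mem rfl
  have habs : |d| ≠ 1 := by
    intro h1
    have h1K : (1 : ℤ) ∈ K := by
      rcases abs_eq (by norm_num : (0:ℤ) ≤ 1) |>.1 h1 with h | h
      · rwa [h] at hdK
      · rw [h] at hdK; simpa using K.neg_mem hdK
    obtain ⟨k, hk⟩ := h1K
    rw [Int.cast_one, one_mul] at hk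
    have hk0 : k ≠ 0 := by
      rintro rfl; apply ht0; simpa using hk
    have : (1 : ℝ) ≤ |(k : ℝ)| := by
      have := Int.one_le_abs hk0
      exact_mod_cast this
    rw [hk, abs_mul, abs_of_pos (by positivity : (0 : ℝ) < 2 * π)] at htπ
    nlinarith [Real.pi_pos]
  apply haper
  by_cases hd0 : d = 0
  · refine ⟨(j0 : ℤ) - 1, 2, le_refl _, fun i hi => ?_⟩
    have := hdvd i hi
    rw [hd0, zero_dvd_iff] at this
    rw [this]; exact dvd_zero _
  · refine ⟨(j0 : ℤ) - 1, |d|, ?_, fun i hi => (abs_dvd _ _).2 (hdvd i hi)⟩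
    have := Int.one_le_abs hd0
    omega

lemma gwPhi_gauss {η : ℕ → ℝ} (h0 : ∀ i, 0 ≤ η i) (hs : HasSum η 1)
    (hmean : HasSum (fun i : ℕ => (i : ℝ) * η i) 1) {σ : ℝ} (hσ : 0 < σ)
    (hvar : HasSum (fun i : ℕ => ((i : ℝ) - 1) ^ 2 * η i) (σ ^ 2))
    (haper : ¬ ∃ (a : ℤ) (d : ℤ), 2 ≤ d ∧ ∀ i : ℕ, η i ≠ 0 → d ∣ ((i : ℤ) - 1 - a)) :
    ∃ c : ℝ, 0 < c ∧ ∀ t : ℝ, |t| ≤ π → ‖gwPhi η t‖ ≤ Real.exp (-c * t ^ 2) := by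
  have htay := gwPhi_taylor h0 hs hmean hvar
  have h1 : ∃ δ > 0, ∀ t : ℝ, |t| < δ → ‖gwPhi η t‖ ≤ Real.exp (-(σ ^ 2 / 4) * t ^ 2) := by
    have ev := Metric.tendsto_nhds.1 htay (σ ^ 2 / 4) (by positivity)
    rw [eventually_nhdsWithin_iff, Metric.eventually_nhds_iff] at ev
    obtain ⟨δ, hδ, hev⟩ := ev
    refine ⟨min δ (1 / σ), lt_min hδ (by positivity), fun t ht => ?_⟩
    rcases eq_or_ne t 0 with rfl | ht0
    · simp [gwPhi_zero hs]
    have htδ := ht.trans_le (min_le_left _ _)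
    have htσ := ht.trans_le (min_le_right _ _)
    have h2 := hev (y := t) (by simpa using htδ) ht0
    rw [dist_eq_norm] at h2
    have htc : (t : ℂ) ≠ 0 := by exact_mod_cast ht0
    have e : gwPhi η t = ((1 - σ ^ 2 * t ^ 2 / 2 : ℝ) : ℂ) +
        ((gwPhi η t - 1) / (t : ℂ) ^ 2 - -(σ : ℂ) ^ 2 / 2) * ((t ^ 2 : ℝ) : ℂ) := by
      push_cast
      field_simp
      ring
    have hst : σ ^ 2 * t ^ 2 ≤ 1 := by
      rw [lt_div_iff₀ hσ] at htσ
      have : |t| * σ = |t * σ| := by rw [abs_mul, abs_of_pos hσ]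
      rw [this] at htσ
      have := (sq_lt_one_iff_abs_lt_one _).2 htσ
      nlinarith
    calc ‖gwPhi η t‖ ≤ |1 - σ ^ 2 * t ^ 2 / 2| + (σ ^ 2 / 4) * t ^ 2 := by
          rw [e]
          refine (norm_add_le _ _).trans (add_le_add ?_ ?_)
          · rw [Complex.norm_real, Real.norm_eq_abs]
          · rw [norm_mul, Complex.norm_real, Real.norm_of_nonneg (sq_nonneg t)]
            exact mul_le_mul_of_nonneg_right h2.le (sq_nonneg t)
      _ = 1 - σ ^ 2 / 4 * t ^ 2 := by
          rw [abs_of_nonneg (by linarith)]; ring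
      _ ≤ _ := by
          have := Real.add_one_le_exp (-(σ ^ 2 / 4) * t ^ 2)
          linarith
  obtain ⟨δ, hδ, hnear⟩ := h1
  have hcpt : IsCompact ({t : ℝ | δ ≤ |t|} ∩ Icc (-π) π) :=
    isCompact_Icc.inter_left (isClosed_le continuous_const continuous_abs)
  have hfar : ∃ ρ : ℝ, 0 < ρ ∧ ρ < 1 ∧ ∀ t : ℝ, δ ≤ |t| → |t| ≤ π → ‖gwPhi η t‖ ≤ ρ := by
    rcases ({t : ℝ | δ ≤ |t|} ∩ Icc (-π) π).eq_empty_or_nonempty with hE | hE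
    · refine ⟨1 / 2, by norm_num, by norm_num, fun t h1 h2 => ?_⟩
      have : t ∈ ({t : ℝ | δ ≤ |t|} ∩ Icc (-π) π) := ⟨h1, abs_le.1 h2⟩
      rw [hE] at this; exact absurd this (notMem_empty t)
    · obtain ⟨t0, ht0, hmax⟩ := hcpt.exists_isMaxOn hE
        (gwPhi_continuous h0 hs).norm.continuousOn
      have hlt : ‖gwPhi η t0‖ < 1 := by
        apply gwPhi_norm_lt h0 hs haper _ (abs_le.2 ht0.2)
        rintro rfl
        have := ht0.1
        simp at this
        linarith
      refine ⟨max (1 / 2) ‖gwPhi η t0‖, by positivity, max_lt (by norm_num) hlt, fun t h1 h2 => ?_⟩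
      exact (hmax ⟨h1, abs_le.1 h2⟩).trans (le_max_right _ _)
  obtain ⟨ρ, hρ0, hρ1, hfar⟩ := hfar
  have hlog : 0 < -Real.log ρ := by
    have := Real.log_neg hρ0 hρ1; linarith
  refine ⟨min (σ ^ 2 / 4) (-Real.log ρ / π ^ 2), lt_min (by positivity) (by positivity), ?_⟩
  intro t ht
  have ht2 := sq_nonneg t
  rcases lt_or_ge |t| δ with h | h
  · refine (hnear t h).trans (Real.exp_le_exp.2 ?_)
    have := min_le_left (σ ^ 2 / 4) (-Real.log ρ / π ^ 2)
    nlinarith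
  · refine (hfar t h ht).trans ?_
    rw [← Real.log_le_iff_le_exp hρ0]
    have h1 := min_le_right (σ ^ 2 / 4) (-Real.log ρ / π ^ 2)
    have h2 : t ^ 2 ≤ π ^ 2 := by
      rw [← sq_abs t]; exact pow_le_pow_left₀ (abs_nonneg t) ht 2
    have h3 : min (σ ^ 2 / 4) (-Real.log ρ / π ^ 2) * t ^ 2 ≤ -Real.log ρ / π ^ 2 * π ^ 2 := by
      apply mul_le_mul h1 h2 ht2 (by positivity)
    rw [div_mul_cancel₀ _ (by positivity)] at h3
    linarith

/-- Local limit theorem. -/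
lemma gwQ_llt {η : ℕ → ℝ} (h0 : ∀ i, 0 ≤ η i) (hs : HasSum η 1)
    (hmean : HasSum (fun i : ℕ => (i : ℝ) * η i) 1) {σ : ℝ} (hσ : 0 < σ)
    (hvar : HasSum (fun i : ℕ => ((i : ℝ) - 1) ^ 2 * η i) (σ ^ 2))
    (haper : ¬ ∃ (a : ℤ) (d : ℤ), 2 ≤ d ∧ ∀ i : ℕ, η i ≠ 0 → d ∣ ((i : ℤ) - 1 - a)) :
    Tendsto (fun n : ℕ => √(n : ℝ) * gwQ η n (n - 1)) atTop (nhds (1 / (σ * √(2 * π)))) := by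
  obtain ⟨c, hc, hbd⟩ := gwPhi_gauss h0 hs hmean hσ hvar haper
  have hcont := gwPhi_continuous h0 hs
  let F : ℕ → ℝ → ℂ := fun n => (Ioc (-π * √(n : ℝ)) (π * √(n : ℝ))).indicator
    (fun x : ℝ => gwPhi η (x / √(n : ℝ)) ^ n * Complex.exp (((x / √(n : ℝ) : ℝ) : ℂ) * Complex.I))
  have hF : ∀ n : ℕ, 1 ≤ n → ∫ x, F n x = ((2 * π * (√(n : ℝ) * gwQ η n (n - 1)) : ℝ) : ℂ) := by
    intro n hn
    have hn' : (0 : ℝ) < √(n : ℝ) := Real.sqrt_pos.2 (by exact_mod_cast hn)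
    have e1 : ∫ x, F n x = ∫ x in (-π * √(n : ℝ))..(π * √(n : ℝ)),
        (fun y : ℝ => gwPhi η y ^ n * Complex.exp ((y : ℂ) * Complex.I)) (x / √(n : ℝ)) := by
      rw [intervalIntegral.integral_of_le (by nlinarith [Real.pi_pos]),
        ← integral_indicator measurableSet_Ioc]
    rw [e1, intervalIntegral.integral_comp_div
      (fun y : ℝ => gwPhi η y ^ n * Complex.exp ((y : ℂ) * Complex.I)) hn'.ne', mul_div_cancel_right₀ _ hn'.ne',
      mul_div_cancel_right₀ _ hn'.ne', gwQ_integral h0 hs n hn, Complex.real_smul]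
    push_cast
    ring
  have hlim : Tendsto (fun n : ℕ => ∫ x, F n x) atTop
      (nhds (∫ x : ℝ, ((Real.exp (-(σ ^ 2 / 2) * x ^ 2) : ℝ) : ℂ))) := by
    refine tendsto_integral_of_dominated_convergence
      (fun x => max 1 (Real.exp (-c * x ^ 2)) * 0 + Real.exp (-c * x ^ 2)) ?_ ?_ ?_ ?_
    · intro n
      apply AEStronglyMeasurable.indicator _ measurableSet_Ioc
      apply Continuous.aestronglyMeasurable
      have : Continuous fun x : ℝ => gwPhi η (x / √(n : ℝ)) := hcont.comp (by fun_prop)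
      fun_prop
    · simpa using integrable_exp_neg_mul_sq hc
    · intro n
      refine ae_of_all _ fun x => ?_
      simp only [mul_zero, zero_add]
      by_cases hx : x ∈ Ioc (-π * √(n : ℝ)) (π * √(n : ℝ))
      · have hn' : (0 : ℝ) < √(n : ℝ) := by
          by_contra hcon
          have : √(n : ℝ) = 0 := le_antisymm (not_lt.1 hcon) (Real.sqrt_nonneg _)
          rw [this] at hx; simp at hx
        have hn0 : (0 : ℝ) < n := Real.sqrt_pos.1 hn'
        simp only [F]
        rw [indicator_of_mem hx, norm_mul, Complex.norm_exp_ofReal_mul_I, mul_one, norm_pow]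
        have habs : |x / √(n : ℝ)| ≤ π := by
          rw [abs_div, abs_of_pos hn', div_le_iff₀ hn', abs_le]
          exact ⟨by linarith [hx.1], hx.2⟩
        calc _ ≤ Real.exp (-c * (x / √(n : ℝ)) ^ 2) ^ n :=
              pow_le_pow_left₀ (norm_nonneg _) (hbd _ habs) n
          _ = Real.exp (-c * x ^ 2) := by
              rw [← Real.exp_nat_mul, div_pow, Real.sq_sqrt hn0.le]
              congr 1
              field_simp
      · simp only [F]
        rw [indicator_of_notMem hx, norm_zero]
        positivity
    · refine ae_of_all _ fun x => ?_
      have h1 := gwPhi_clt h0 hs hmean hvar x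
      have h2 : Tendsto (fun n : ℕ => Complex.exp (((x / √(n : ℝ) : ℝ) : ℂ) * Complex.I)) atTop
          (nhds 1) := by
        have h3 : Tendsto (fun n : ℕ => x / √(n : ℝ)) atTop (nhds 0) :=
          Tendsto.div_atTop tendsto_const_nhds
            (Real.tendsto_sqrt_atTop.comp tendsto_natCast_atTop_atTop)
        have h4 : Continuous fun y : ℝ => Complex.exp ((y : ℂ) * Complex.I) := by fun_prop
        have := (h4.tendsto 0).comp h3
        simp only [Complex.ofReal_zero, zero_mul, Complex.exp_zero] at this
        exact this
      have h5 := h1.mul h2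
      rw [mul_one] at h5
      refine h5.congr' ?_
      have h6 : Tendsto (fun n : ℕ => π * √(n : ℝ)) atTop atTop :=
        (Real.tendsto_sqrt_atTop.comp tendsto_natCast_atTop_atTop).const_mul_atTop Real.pi_pos
      filter_upwards [h6.eventually_gt_atTop |x|] with n hn
      have := abs_lt.1 hn
      simp only [F]
      have hmem : x ∈ Ioc (-π * √(n : ℝ)) (π * √(n : ℝ)) := ⟨by linarith [this.1], this.2.le⟩
      rw [indicator_of_mem hmem]
  have hof : ∫ x : ℝ, ((Real.exp (-(σ ^ 2 / 2) * x ^ 2) : ℝ) : ℂ) = ((√(π / (σ ^ 2 / 2)) : ℝ) : ℂ) := by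
    rw [← integral_gaussian]
    exact integral_ofReal
  rw [hof] at hlim
  have h2 := (Complex.continuous_re.tendsto _).comp hlim
  have h3 : Tendsto (fun n : ℕ => 2 * π * (√(n : ℝ) * gwQ η n (n - 1))) atTop
      (nhds √(π / (σ ^ 2 / 2))) := by
    refine h2.congr' ?_
    filter_upwards [eventually_ge_atTop 1] with n hn
    simp only [Function.comp]
    rw [hF n hn, Complex.ofReal_re]
  have h4 := h3.const_mul (1 / (2 * π))
  have hval : 1 / (2 * π) * √(π / (σ ^ 2 / 2)) = 1 / (σ * √(2 * π)) := by
    have e : π / (σ ^ 2 / 2) = (2 * π) / σ ^ 2 := by field_simp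
    rw [e, Real.sqrt_div (by positivity), Real.sqrt_sq hσ.le]
    have : √(2 * π) ^ 2 = 2 * π := Real.sq_sqrt (by positivity)
    have hp : √(2 * π) ≠ 0 := by positivity
    field_simp
    linarith
  rw [hval] at h4
  refine h4.congr fun n => ?_
  field_simp


lemma gw_ae_ge {Ω : Type*} [MeasurableSpace Ω] (P : Measure Ω) [IsProbabilityMeasure P]
    {η : ℕ → ℝ} (hη0 : ∀ i, 0 ≤ η i) (hηsum : HasSum η 1)
    (X : Ω → ℤ) (hmeas : Measurable X)
    (hlaw : ∀ j : ℕ, P {ω | X ω = (j : ℤ) - 1} = ENNReal.ofReal (η j)) :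
    ∀ᵐ ω ∂P, ∃ j : ℕ, X ω = (j : ℤ) - 1 := by
  have hm : ∀ k : ℤ, MeasurableSet {ω | X ω = k} := fun k => hmeas (measurableSet_singleton k)
  have h1 : P (⋃ j : ℕ, {ω | X ω = (j : ℤ) - 1}) = 1 := by
    rw [measure_iUnion _ fun j => hm _]
    · simp_rw [hlaw]
      rw [← ENNReal.ofReal_tsum_of_nonneg hη0 hηsum.summable, hηsum.tsum_eq, ENNReal.ofReal_one]
    · intro i j hij
      rw [Function.onFun, Set.disjoint_left]
      intro ω h1 h2
      simp only [mem_ofPred_eq] at h1 h2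
      omega
  have h2 := (prob_compl_eq_zero_iff (MeasurableSet.iUnion fun j : ℕ => hm ((j : ℤ) - 1))).2 h1
  rw [ae_iff]
  convert h2 using 2
  ext ω
  simp

lemma gw_law {Ω : Type*} [MeasurableSpace Ω] (P : Measure Ω) [IsProbabilityMeasure P]
    {η : ℕ → ℝ} (hη0 : ∀ i, 0 ≤ η i) (hηsum : HasSum η 1)
    (ξ : ℕ → Ω → ℤ) (hmeas : ∀ i, Measurable (ξ i))
    (hindep : ProbabilityTheory.iIndepFun ξ P)
    (hlaw : ∀ i : ℕ, ∀ j : ℕ, P {ω | ξ i ω = (j : ℤ) - 1} = ENNReal.ofReal (η j)) (n : ℕ) :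
    ∀ m : ℕ, P {ω | (∑ i ∈ Finset.range n, ξ i ω) = (m : ℤ) - n}
      = ENNReal.ofReal (gwQ η n m) := by
  have hae : ∀ i, ∀ᵐ ω ∂P, ∃ j : ℕ, ξ i ω = (j : ℤ) - 1 :=
    fun i => gw_ae_ge P hη0 hηsum (ξ i) (hmeas i) (hlaw i)
  have hSge : ∀ n : ℕ, ∀ᵐ ω ∂P, -(n : ℤ) ≤ ∑ i ∈ Finset.range n, ξ i ω := by
    intro n
    filter_upwards [ae_all_iff.2 hae] with ω hω
    have : ∑ i ∈ Finset.range n, (-1 : ℤ) ≤ ∑ i ∈ Finset.range n, ξ i ω :=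
      Finset.sum_le_sum fun i _ => by obtain ⟨j, hj⟩ := hω i; omega
    simpa using this
  have hSm : ∀ n : ℕ, Measurable fun ω => ∑ i ∈ Finset.range n, ξ i ω :=
    fun n => Finset.measurable_sum _ fun i _ => hmeas i
  induction n with
  | zero =>
    intro m
    rw [gwQ_zero]
    by_cases hm : m = 0
    · simp [hm]
    · have : ¬ ((0 : ℤ) = m) := by omega
      simp [hm, this]
  | succ n ih =>
    intro m
    have hind := ProbabilityTheory.indepFun_iff_measure_inter_preimage_eq_mul.1
      (hindep.indepFun_sum_range_succ hmeas n)
    have hprod : ∀ j : ℕ, P ({ω | ∑ i ∈ Finset.range n, ξ i ω = (m : ℤ) - j - n} ∩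
        {ω | ξ n ω = (j : ℤ) - 1})
        = P {ω | ∑ i ∈ Finset.range n, ξ i ω = (m : ℤ) - j - n} * ENNReal.ofReal (η j) := by
      intro j
      have := hind {(m : ℤ) - j - n} {(j : ℤ) - 1} (measurableSet_singleton _)
        (measurableSet_singleton _)
      rw [← hlaw n j]
      convert this using 2
      · congr 1; ext ω; simp [Finset.sum_apply]
      · congr 1; ext ω; simp [Finset.sum_apply]
      · rfl
    have hU : P {ω | (∑ i ∈ Finset.range (n + 1), ξ i ω) = (m : ℤ) - (n + 1 : ℕ)}
        = P (⋃ j : ℕ, ({ω | ∑ i ∈ Finset.range n, ξ i ω = (m : ℤ) - j - n} ∩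
        {ω | ξ n ω = (j : ℤ) - 1})) := by
      apply measure_congr
      filter_upwards [hae n] with ω hω
      obtain ⟨j, hj⟩ := hω
      apply propext
      change (∑ i ∈ Finset.range (n + 1), ξ i ω = (m : ℤ) - (n + 1 : ℕ)) ↔
        ω ∈ (⋃ j : ℕ, ({ω | ∑ i ∈ Finset.range n, ξ i ω = (m : ℤ) - j - n} ∩
        {ω | ξ n ω = (j : ℤ) - 1}))
      rw [Finset.sum_range_succ, mem_iUnion]
      constructor
      · intro h
        refine ⟨j, ?_, hj⟩
        simp only [mem_ofPred_eq]
        push_cast at h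
        omega
      · rintro ⟨k, hk1, hk2⟩
        simp only [mem_ofPred_eq] at hk1 hk2
        push_cast
        omega
    rw [hU, measure_iUnion]
    · simp_rw [hprod]
      rw [gwQ_succ, Finset.Nat.sum_antidiagonal_eq_sum_range_succ_mk,
        ENNReal.ofReal_sum_of_nonneg fun i _ => mul_nonneg (hη0 _) (gwQ_nonneg hη0 _ _),
        tsum_eq_sum (s := Finset.range (m + 1))]
      · apply Finset.sum_congr rfl
        intro j hj
        rw [Finset.mem_range] at hj
        have := ih (m - j)
        rw [Nat.cast_sub (by omega)] at this
        rw [this, ENNReal.ofReal_mul (hη0 _), mul_comm]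
      · intro j hj
        rw [Finset.mem_range] at hj
        have : P {ω | ∑ i ∈ Finset.range n, ξ i ω = (m : ℤ) - j - n} = 0 := by
          have h := hSge n
          rw [ae_iff] at h
          refine measure_mono_null ?_ h
          intro ω hω
          simp only [mem_ofPred_eq] at hω ⊢
          omega
        rw [this, zero_mul]
    · intro i j hij
      rw [Function.onFun, Set.disjoint_left]
      rintro ω ⟨_, h1⟩ ⟨_, h2⟩
      simp only [mem_ofPred_eq] at h1 h2
      omega
    · intro j
      exact ((hSm n) (measurableSet_singleton _)).inter ((hmeas n) (measurableSet_singleton _))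

lemma gw_w_eq {Ω : Type*} [MeasurableSpace Ω] (P : Measure Ω) [IsProbabilityMeasure P]
    {η : ℕ → ℝ} (hη0 : ∀ i, 0 ≤ η i) (hηsum : HasSum η 1)
    (ξ : ℕ → Ω → ℤ) (hmeas : ∀ i, Measurable (ξ i))
    (hindep : ProbabilityTheory.iIndepFun ξ P)
    (hlaw : ∀ i : ℕ, ∀ j : ℕ, P {ω | ξ i ω = (j : ℤ) - 1} = ENNReal.ofReal (η j))
    (w : ℕ → ℝ)
    (hw : ∀ n : ℕ, w n = (P {ω | (∑ i ∈ Finset.range n, ξ i ω) = -1}).toReal / n) :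
    w = gwh η 1 := by
  funext n
  rw [hw, gwh]
  rcases Nat.eq_zero_or_pos n with rfl | hn
  · simp
  · rw [if_neg (by omega), if_pos (by omega)]
    have := gw_law P hη0 hηsum ξ hmeas hindep hlaw n (n - 1)
    have e : (((n - 1 : ℕ) : ℤ) - n) = -1 := by omega
    rw [e] at this
    rw [this, ENNReal.toReal_ofReal (gwQ_nonneg hη0 _ _)]
    push_cast; ring

/-- All that is needed about the weights. -/
lemma gw_w_facts {η : ℕ → ℝ} (h0 : ∀ i, 0 ≤ η i) (hs : HasSum η 1) (hη1 : η 1 < 1)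
    (hmean : HasSum (fun i : ℕ => (i : ℝ) * η i) 1) {σ : ℝ} (hσ : 0 < σ)
    (hvar : HasSum (fun i : ℕ => ((i : ℝ) - 1) ^ 2 * η i) (σ ^ 2))
    (haper : ¬ ∃ (a : ℤ) (d : ℤ), 2 ≤ d ∧ ∀ i : ℕ, η i ≠ 0 → d ∣ ((i : ℤ) - 1 - a)) :
    (∀ n, 0 ≤ gwh η 1 n) ∧ gwh η 1 0 = 0 ∧ HasSum (gwh η 1) 1 ∧
    Tendsto (fun n : ℕ => √(n : ℝ) * (n * gwh η 1 n)) atTop (nhds (1 / (σ * √(2 * π)))) := by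
  refine ⟨fun n => gwh_nonneg h0 1 n, gwh_of_lt η (by omega), gwh_tsum_one h0 hs hη1 hmean, ?_⟩
  refine (gwQ_llt h0 hs hmean hσ hvar haper).congr' ?_
  filter_upwards [eventually_ge_atTop 1] with n hn
  have : (n : ℝ) ≠ 0 := by positivity
  rw [gwh, if_neg (by omega), if_pos hn]
  push_cast
  field_simp


/-- Multinomial weight of a multiset. -/
noncomputable def gwO (w : ℕ → ℝ) (M : Multiset ℕ) : ℝ :=
  ((Multiset.card M).factorial : ℝ) / (∏ i ∈ M.toFinset, ((M.count i).factorial : ℝ)) * (M.map w).prod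

lemma ms_prod_count {M : Multiset ℕ} {s : Finset ℕ} (h : M.toFinset ⊆ s) :
    ∏ i ∈ M.toFinset, ((M.count i).factorial : ℝ) = ∏ i ∈ s, ((M.count i).factorial : ℝ) := by
  apply Finset.prod_subset h
  intro i _ hi
  rw [Multiset.mem_toFinset] at hi
  rw [Multiset.count_eq_zero_of_notMem hi]; simp

lemma gwO_cons (w : ℕ → ℝ) (a : ℕ) (μ : Multiset ℕ) :
    (((a ::ₘ μ).count a : ℕ) : ℝ) * gwO w (a ::ₘ μ) = ((Multiset.card μ : ℝ) + 1) * w a * gwO w μ := by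
  unfold gwO
  have hs : (a ::ₘ μ).toFinset ⊆ insert a μ.toFinset := by
    rw [Multiset.toFinset_cons]
  have hs2 : μ.toFinset ⊆ insert a μ.toFinset := Finset.subset_insert _ _
  rw [ms_prod_count hs, ms_prod_count hs2, Multiset.card_cons, Multiset.map_cons,
    Multiset.prod_cons, Nat.factorial_succ]
  have ha : a ∈ insert a μ.toFinset := Finset.mem_insert_self _ _
  rw [← Finset.mul_prod_erase _ _ ha, ← Finset.mul_prod_erase _ (fun i => ((μ.count i).factorial : ℝ)) ha]
  have e : ∏ x ∈ (insert a μ.toFinset).erase a, (((a ::ₘ μ).count x).factorial : ℝ)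
      = ∏ x ∈ (insert a μ.toFinset).erase a, ((μ.count x).factorial : ℝ) := by
    apply Finset.prod_congr rfl
    intro x hx
    rw [Multiset.count_cons_of_ne (Finset.ne_of_mem_erase hx)]
  rw [e, Multiset.count_cons_self, Nat.factorial_succ]
  have hp : (∏ x ∈ (insert a μ.toFinset).erase a, ((μ.count x).factorial : ℝ)) ≠ 0 := by
    apply Finset.prod_ne_zero_iff.2
    intro i _
    exact_mod_cast (Nat.factorial_ne_zero _)
  have hc : ((μ.count a).factorial : ℝ) ≠ 0 := by exact_mod_cast (Nat.factorial_ne_zero _)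
  have hc1 : ((μ.count a : ℝ) + 1) ≠ 0 := by positivity
  push_cast
  field_simp

lemma gwO_erase (w : ℕ → ℝ) {a : ℕ} {M : Multiset ℕ} (h : a ∈ M) :
    ((M.count a : ℕ) : ℝ) * gwO w M = (Multiset.card M : ℝ) * w a * gwO w (M.erase a) := by
  have := gwO_cons w a (M.erase a)
  rw [Multiset.cons_erase h] at this
  rw [this, ← Multiset.card_erase_add_one h]
  push_cast; ring

lemma gwO_nonneg {w : ℕ → ℝ} (hw : ∀ n, 0 ≤ w n) (M : Multiset ℕ) : 0 ≤ gwO w M := by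
  unfold gwO
  apply mul_nonneg (by positivity)
  apply Multiset.prod_nonneg
  intro x hx
  rw [Multiset.mem_map] at hx
  obtain ⟨a, _, rfl⟩ := hx
  exact hw a

lemma gwO_zero_mem {w : ℕ → ℝ} (hw : w 0 = 0) {M : Multiset ℕ} (h : 0 ∈ M) : gwO w M = 0 := by
  unfold gwO
  have : (M.map w).prod = 0 := by
    apply Multiset.prod_eq_zero
    rw [Multiset.mem_map]
    exact ⟨0, h, hw⟩
  rw [this, mul_zero]

/-- Marked multisets. -/
def msEquiv : (Σ M : Multiset ℕ, {a // a ∈ M.toFinset}) ≃ ℕ × Multiset ℕ where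
  toFun x := (x.2.1, x.1.erase x.2.1)
  invFun y := ⟨y.1 ::ₘ y.2, y.1, by simp⟩
  left_inv := by
    rintro ⟨M, a, ha⟩
    have ha' : a ∈ M := Multiset.mem_toFinset.1 ha
    have h := Multiset.cons_erase ha'
    simp only
    apply Sigma.ext
    · exact h
    · simp only
      rw [Subtype.heq_iff_coe_eq]
      simp [h]
  right_inv := by
    rintro ⟨a, μ⟩
    simp

lemma ms_hasSum {G : ℕ × Multiset ℕ → ℝ} {s : ℝ} (h : HasSum G s) :
    HasSum (fun M : Multiset ℕ => ∑ a ∈ M.toFinset, G (a, M.erase a)) s := by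
  have h1 := (msEquiv.hasSum_iff).2 h
  have h2 := h1.sigma (fun M => hasSum_fintype _)
  convert! h2 using 2 with M
  rw [← Finset.sum_coe_sort M.toFinset]
  rfl

lemma gwO_mass {w : ℕ → ℝ} (hw : ∀ n, 0 ≤ w n) (hs : HasSum w 1) (p : ℕ) :
    HasSum (fun M : Multiset ℕ => if Multiset.card M = p then gwO w M else 0) 1 := by
  induction p with
  | zero =>
    have : (fun M : Multiset ℕ => if Multiset.card M = 0 then gwO w M else 0)
        = fun M => if M = 0 then (1 : ℝ) else 0 := by
      funext M
      by_cases h : M = 0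
      · simp [h, gwO]
      · simp [h]
    rw [this]
    exact hasSum_ite_eq 0 (1 : ℝ)
  | succ p ih =>
    have hprod : HasSum (fun x : ℕ × Multiset ℕ => w x.1 *
        (if Multiset.card x.2 = p then gwO w x.2 else 0)) (1 * 1) := by
      apply HasSum.mul hs ih
      apply Summable.mul_of_nonneg hs.summable ih.summable hw
      intro M
      simp only [Pi.zero_apply]
      split_ifs
      · exact gwO_nonneg hw M
      · exact le_refl _
    rw [mul_one] at hprod
    have := ms_hasSum hprod
    convert! this using 2 with M
    split_ifs with h
    · have e : ∀ a ∈ M.toFinset, w a * (if Multiset.card (M.erase a) = p then gwO w (M.erase a) else 0)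
          = (M.count a : ℝ) * (gwO w M / (p + 1)) := by
        intro a ha
        rw [Multiset.mem_toFinset] at ha
        have h1 := Multiset.card_erase_add_one ha
        rw [if_pos (by omega)]
        have h2 := gwO_erase w ha
        rw [h] at h2
        push_cast at h2
        have : (p : ℝ) + 1 ≠ 0 := by positivity
        field_simp
        linarith
      rw [Finset.sum_congr rfl e, ← Finset.sum_mul, ← Nat.cast_sum, Multiset.toFinset_sum_count_eq, h]
      push_cast
      have : (p : ℝ) + 1 ≠ 0 := by positivity
      field_simp
    · symm
      apply Finset.sum_eq_zero
      intro a ha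
      rw [Multiset.mem_toFinset] at ha
      have h1 := Multiset.card_erase_add_one ha
      have h3 : ¬ Multiset.card (M.erase a) = p := by omega
      simp only [h3, if_false, mul_zero]

lemma gwO_weighted {w : ℕ → ℝ} (hw : ∀ n, 0 ≤ w n) (hs : HasSum w 1) {g : ℕ → ℝ} {s : ℝ}
    (hg0 : ∀ n, 0 ≤ g n) (hg : HasSum g s) :
    HasSum (fun M : Multiset ℕ => g (Multiset.card M) * gwO w M) s := by
  have hf : ∀ p, HasSum (fun M : Multiset ℕ => g p * (if Multiset.card M = p then gwO w M else 0)) (g p) := by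
    intro p
    simpa using (gwO_mass hw hs p).mul_left (g p)
  have hS : Summable (fun x : ℕ × Multiset ℕ => g x.1 * (if Multiset.card x.2 = x.1 then gwO w x.2 else 0)) := by
    rw [summable_prod_of_nonneg]
    · refine ⟨fun p => (hf p).summable, ?_⟩
      simpa only [(hf _).tsum_eq] using hg.summable
    · intro x
      simp only [Pi.zero_apply]
      apply mul_nonneg (hg0 _)
      split_ifs
      · exact gwO_nonneg hw _
      · exact le_refl _
  have h1 := hS.hasSum.prod_fiberwise hf
  have h2 := h1.unique hg
  have h3 := hS.hasSum
  rw [h2] at h3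
  have h4 := ((Equiv.prodComm _ _).hasSum_iff.2 h3 :
    HasSum ((fun x : ℕ × Multiset ℕ => g x.1 * (if Multiset.card x.2 = x.1 then gwO w x.2 else 0)) ∘
      (Equiv.prodComm (Multiset ℕ) ℕ)) s)
  refine h4.prod_fiberwise (g := fun M : Multiset ℕ => g (Multiset.card M) * gwO w M) ?_
  intro M
  have h5 := hasSum_single (f := fun p : ℕ => g p * (if Multiset.card M = p then gwO w M else 0))
    (Multiset.card M) (by
      intro p hp
      rw [if_neg (Ne.symm hp), mul_zero])
  simpa using h5

/-- Twice the sum of pairwise products. -/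
noncomputable def gwD (M : Multiset ℕ) : ℝ :=
  ∑ a ∈ M.toFinset, ((M.count a : ℝ) * a) *
    ∑ b ∈ (M.erase a).toFinset, (((M.erase a).count b : ℝ) * b)

lemma gwD_eq (M : Multiset ℕ) :
    gwD M = (M.map (fun a : ℕ => (a : ℝ) * ((M.sum : ℝ) - a))).sum := by
  rw [Finset.sum_multiset_map_count]
  unfold gwD
  apply Finset.sum_congr rfl
  intro a ha
  rw [Multiset.mem_toFinset] at ha
  have h1 : ∑ b ∈ (M.erase a).toFinset, (((M.erase a).count b : ℝ) * b) = ((M.erase a).sum : ℝ) := by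
    rw [Finset.sum_multiset_count]
    push_cast
    apply Finset.sum_congr rfl
    intro b _
    simp
  have h2 : a + (M.erase a).sum = M.sum := Multiset.sum_erase ha
  rw [h1, ← h2]
  push_cast
  rw [nsmul_eq_mul]
  ring

lemma gwO_gwD (w : ℕ → ℝ) (M : Multiset ℕ) :
    gwO w M * gwD M = ∑ a ∈ M.toFinset, ∑ b ∈ (M.erase a).toFinset,
      ((Multiset.card ((M.erase a).erase b) : ℝ) + 2) * ((Multiset.card ((M.erase a).erase b) : ℝ) + 1) *
        (a * w a) * (b * w b) * gwO w ((M.erase a).erase b) := by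
  unfold gwD
  rw [Finset.mul_sum]
  apply Finset.sum_congr rfl
  intro a ha
  rw [Multiset.mem_toFinset] at ha
  rw [Finset.mul_sum, Finset.mul_sum]
  apply Finset.sum_congr rfl
  intro b hb
  rw [Multiset.mem_toFinset] at hb
  have h1 := gwO_erase w ha
  have h2 := gwO_erase w hb
  have c1 := Multiset.card_erase_add_one ha
  have c2 := Multiset.card_erase_add_one hb
  rw [← c1, ← c2] at h1
  rw [← c2] at h2
  push_cast at h1 h2
  calc _ = (a * b : ℝ) * ((M.erase a).count b : ℝ) * ((M.count a : ℝ) * gwO w M) := by ring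
    _ = (a * b : ℝ) * (((Multiset.card ((M.erase a).erase b) : ℝ) + 1 + 1) * w a) *
        (((M.erase a).count b : ℝ) * gwO w (M.erase a)) := by rw [h1]; ring
    _ = _ := by rw [h2]; ring


def msEquiv2 : (Σ y : ℕ × Multiset ℕ, {b // b ∈ y.2.toFinset}) ≃ ℕ × ℕ × Multiset ℕ where
  toFun x := (x.1.1, x.2.1, x.1.2.erase x.2.1)
  invFun y := ⟨(y.1, y.2.1 ::ₘ y.2.2), y.2.1, by simp⟩
  left_inv := by
    rintro ⟨⟨c, M⟩, a, ha⟩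
    have ha' : a ∈ M := Multiset.mem_toFinset.1 ha
    have h := Multiset.cons_erase ha'
    simp only
    have key : ∀ (N : Multiset ℕ) (hN : a ∈ N.toFinset) (hh : N = M),
      (⟨(c, N), a, hN⟩ : Σ y : ℕ × Multiset ℕ, {b // b ∈ y.2.toFinset}) = ⟨(c, M), a, ha⟩ := by
      intro N hN hh; subst hh; rfl
    exact key _ _ h
  right_inv := by
    rintro ⟨a, b, M⟩
    simp

lemma ms_hasSum2 {G : ℕ × ℕ × Multiset ℕ → ℝ} {s : ℝ} (h : HasSum G s) :
    HasSum (fun M : Multiset ℕ => ∑ a ∈ M.toFinset, ∑ b ∈ (M.erase a).toFinset,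
      G (a, b, (M.erase a).erase b)) s := by
  have h1 := (msEquiv2.hasSum_iff).2 h
  have h2 := h1.sigma (fun y => hasSum_fintype _)
  have h3 : HasSum (fun y : ℕ × Multiset ℕ => ∑ b ∈ y.2.toFinset, G (y.1, b, y.2.erase b)) s := by
    convert! h2 using 2 with y
    rw [← Finset.sum_coe_sort y.2.toFinset]
    rfl
  have h4 := ms_hasSum (G := (fun y : ℕ × Multiset ℕ => ∑ b ∈ y.2.toFinset, G (y.1, b, y.2.erase b))) h3
  simp only at h4
  exact h4

lemma summable_mul_aux {β γ : Type*} {u : β → ℝ} {G : γ → ℝ} (hus : Summable u) (h1 : Summable G)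
    (hu0 : ∀ n, 0 ≤ u n) (hG : ∀ n, 0 ≤ G n) : Summable (fun y : β × γ => u y.1 * G y.2) :=
  Summable.mul_of_nonneg hus h1 hu0 hG

noncomputable def gwW (η w : ℕ → ℝ) (μ : Multiset ℕ) : ℝ :=
  η (Multiset.card μ + 2) * ((Multiset.card μ : ℝ) + 2) * ((Multiset.card μ : ℝ) + 1) * gwO w μ

noncomputable def gwB (w : ℕ → ℝ) (g : Multiset ℕ → ℝ) (n : ℕ) (μ : Multiset ℕ) : ℝ :=
  if μ.sum ≤ n then ∑ x ∈ Finset.HasAntidiagonal.antidiagonal (n - μ.sum),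
    (x.1 * w x.1) * (x.2 * w x.2) * g (x.1 ::ₘ x.2 ::ₘ μ) else 0

noncomputable def gwH (η w : ℕ → ℝ) (g : Multiset ℕ → ℝ) (n : ℕ) (x : ℕ × ℕ × Multiset ℕ) : ℝ :=
  if x.1 + x.2.1 + x.2.2.sum = n then gwW η w x.2.2 * ((x.1 * w x.1) * (x.2.1 * w x.2.1) *
    g (x.1 ::ₘ x.2.1 ::ₘ x.2.2)) else 0

lemma gwH_summable {η w : ℕ → ℝ} (hη : ∀ n, 0 ≤ η n) (hw : ∀ n, 0 ≤ w n) {g : Multiset ℕ → ℝ} {C : ℝ}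
    (hC : ∀ M, |g M| ≤ C) (hW : Summable (gwW η w)) (n : ℕ) : Summable (gwH η w g n) := by
  have hC0 : 0 ≤ C := (abs_nonneg _).trans (hC 0)
  have hW0 : ∀ μ, 0 ≤ gwW η w μ := by
    intro μ
    unfold gwW
    have := gwO_nonneg hw μ
    have := hη (Multiset.card μ + 2)
    positivity
  set u : ℕ → ℝ := fun a => if a ≤ n then a * w a else 0 with hu
  have hu0 : ∀ a, 0 ≤ u a := by
    intro a; simp only [hu]; split_ifs
    · have := hw a; positivity
    · exact le_refl _
  have hus : Summable u := by
    apply summable_of_ne_finset_zero (s := Finset.range (n+1))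
    intro b hb
    simp only [hu]
    rw [if_neg]; simpa using hb
  have h1 : Summable (fun y : ℕ × Multiset ℕ => u y.1 * (gwW η w y.2 * C)) :=
    summable_mul_aux (G := fun μ => gwW η w μ * C) hus (hW.mul_right C) hu0 (fun μ => mul_nonneg (hW0 μ) hC0)
  have h2 : Summable (fun y : ℕ × ℕ × Multiset ℕ => u y.1 * (u y.2.1 * (gwW η w y.2.2 * C))) :=
    summable_mul_aux (G := fun y : ℕ × Multiset ℕ => u y.1 * (gwW η w y.2 * C)) hus h1 hu0 (fun μ => mul_nonneg (hu0 _) (mul_nonneg (hW0 _) hC0))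
  apply Summable.of_norm_bounded h2
  rintro ⟨a, b, μ⟩
  simp only [gwH]
  split_ifs with h
  · have ea : u a = a * w a := if_pos (by omega)
    have eb : u b = b * w b := if_pos (by omega)
    rw [← ea, ← eb, Real.norm_eq_abs, abs_mul, abs_mul, abs_mul, abs_of_nonneg (hW0 _),
      abs_of_nonneg (hu0 _), abs_of_nonneg (hu0 _)]
    have := mul_le_mul_of_nonneg_left (hC (a ::ₘ b ::ₘ μ)) (mul_nonneg (mul_nonneg (hu0 a) (hu0 b)) (hW0 μ))
    linarith
  · rw [norm_zero]
    exact mul_nonneg (hu0 _) (mul_nonneg (hu0 _) (mul_nonneg (hW0 _) hC0))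

lemma gwH_sum1 {η w : ℕ → ℝ} {g : Multiset ℕ → ℝ} {n : ℕ} {s : ℝ} (h : HasSum (gwH η w g n) s) :
    HasSum (fun μ => gwW η w μ * gwB w g n μ) s := by
  let e : Multiset ℕ × (ℕ × ℕ) ≃ ℕ × ℕ × Multiset ℕ :=
    (Equiv.prodComm _ _).trans (Equiv.prodAssoc _ _ _)
  have h1 := (e.hasSum_iff).2 h
  apply h1.prod_fiberwise
  intro μ
  have he : ∀ c : ℕ × ℕ, (gwH η w g n ∘ e) (μ, c) = if c.1 + c.2 + μ.sum = n then
    gwW η w μ * ((c.1 * w c.1) * (c.2 * w c.2) * g (c.1 ::ₘ c.2 ::ₘ μ)) else 0 := fun c => rfl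
  simp only [he]
  unfold gwB
  split_ifs with hn
  · rw [Finset.mul_sum]
    have : ∀ c ∉ Finset.HasAntidiagonal.antidiagonal (n - μ.sum), (if c.1 + c.2 + μ.sum = n then
      gwW η w μ * ((c.1 * w c.1) * (c.2 * w c.2) * g (c.1 ::ₘ c.2 ::ₘ μ)) else 0) = 0 := by
      intro c hc
      rw [Finset.HasAntidiagonal.mem_antidiagonal] at hc
      rw [if_neg]; omega
    have h2 := hasSum_sum_of_ne_finset_zero (L := SummationFilter.unconditional _) this
    convert! h2 using 1
    apply Finset.sum_congr rfl
    intro c hc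
    rw [Finset.HasAntidiagonal.mem_antidiagonal] at hc
    rw [if_pos]; omega
  · rw [mul_zero]
    convert! hasSum_zero with c
    rw [if_neg]; omega

lemma gwH_sum2 {η w : ℕ → ℝ} (hw0 : w 0 = 0) {g : Multiset ℕ → ℝ} {n : ℕ} {s : ℝ} (h : HasSum (gwH η w g n) s) :
    ∑ lam : Nat.Partition n, η (Multiset.card lam.parts) * (gwO w lam.parts * gwD lam.parts) * g lam.parts = s := by
  have h1 := ms_hasSum2 h
  have h2 : HasSum (fun M : Multiset ℕ => if M.sum = n then
      η (Multiset.card M) * (gwO w M * gwD M) * g M else 0) s := by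
    convert! h1 using 2 with M
    split_ifs with hM
    · rw [gwO_gwD, Finset.mul_sum, Finset.sum_mul]
      apply Finset.sum_congr rfl
      intro a ha
      rw [Finset.mul_sum, Finset.sum_mul]
      apply Finset.sum_congr rfl
      intro b hb
      rw [Multiset.mem_toFinset] at ha hb
      have e1 : a + b + ((M.erase a).erase b).sum = n := by
        rw [← hM, add_assoc, Multiset.sum_erase hb, Multiset.sum_erase ha]
      have e2 := Multiset.card_erase_add_one ha
      have e3 := Multiset.card_erase_add_one hb
      unfold gwH
      simp only [e1, if_true]
      rw [Multiset.cons_erase hb, Multiset.cons_erase ha]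
      unfold gwW
      have e4 : Multiset.card ((M.erase a).erase b) + 2 = Multiset.card M := by omega
      rw [e4]; ring
    · symm
      apply Finset.sum_eq_zero
      intro a ha
      apply Finset.sum_eq_zero
      intro b hb
      rw [Multiset.mem_toFinset] at ha hb
      unfold gwH
      rw [if_neg]
      simp only
      rw [add_assoc, Multiset.sum_erase hb, Multiset.sum_erase ha]
      exact hM
  have hinj : Function.Injective (fun lam : Nat.Partition n => lam.parts) := by
    intro a b hab
    exact Nat.Partition.ext hab
  rw [← hinj.hasSum_iff] at h2
  · have h3 := (hasSum_fintype _).unique h2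
    rw [← h3]
    apply Finset.sum_congr rfl
    intro lam _
    simp only [Function.comp]
    rw [if_pos lam.parts_sum]
  · intro M hM
    by_cases hs : M.sum = n
    · rw [if_pos hs]
      have : 0 ∈ M := by
        by_contra h0
        apply hM
        refine ⟨⟨M, ?_, hs⟩, rfl⟩
        intro i hi
        rcases Nat.eq_zero_or_pos i with h | h
        · subst h; exact absurd hi h0
        · exact h
      rw [gwO_zero_mem hw0 this]; ring
    · rw [if_neg hs]

lemma gw_identity {η w : ℕ → ℝ} (hη : ∀ n, 0 ≤ η n) (hw : ∀ n, 0 ≤ w n) (hw0 : w 0 = 0)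
    {g : Multiset ℕ → ℝ} {C : ℝ}
    (hC : ∀ M, |g M| ≤ C) (hW : Summable (gwW η w)) (n : ℕ) :
    ∑ lam : Nat.Partition n, η (Multiset.card lam.parts) * (gwO w lam.parts * gwD lam.parts) * g lam.parts
      = ∑' μ, gwW η w μ * gwB w g n μ := by
  have h := (gwH_summable hη hw hC hW n).hasSum
  rw [gwH_sum2 hw0 h, (gwH_sum1 h).tsum_eq]

lemma gwW_hasSum {η w : ℕ → ℝ} (hη0 : ∀ n, 0 ≤ η n) (hηsum : HasSum η 1) (hw : ∀ n, 0 ≤ w n) (hs : HasSum w 1)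
    (hmean : HasSum (fun i : ℕ => (i : ℝ) * η i) 1) {σ : ℝ}
    (hvar : HasSum (fun i : ℕ => ((i : ℝ) - 1) ^ 2 * η i) (σ ^ 2)) : HasSum (gwW η w) (σ ^ 2) := by
  have h1 : HasSum (fun i : ℕ => (i : ℝ) * (i - 1) * η i) (σ ^ 2) := by
    have := (hvar.add hmean).sub hηsum
    convert! this using 1
    · funext i; ring
    · ring
  rw [← hasSum_nat_add_iff' 2] at h1
  simp [Finset.sum_range_succ] at h1
  have h2 := gwO_weighted (g := fun p => η (p + 2) * ((p:ℝ)+2) * ((p:ℝ)+1)) (s := σ^2) hw hs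
    (fun p => by have := hη0 (p+2); positivity) (by
      convert! h1 using 2 with p
      ring)
  exact h2


lemma int_floor_sum (φ : ℕ → ℝ) (m : ℕ) :
    IntervalIntegrable (fun y : ℝ => φ ⌊y⌋₊) volume 0 m ∧
    ∫ y in (0:ℝ)..m, φ ⌊y⌋₊ = ∑ a ∈ Finset.range m, φ a := by
  have hae : ∀ a : ℕ, ∀ y ∈ Set.Ioo (a:ℝ) ((a+1 : ℕ) : ℝ), φ ⌊y⌋₊ = φ a := by
    intro a y hy
    have : ⌊y⌋₊ = a := by
      rw [Nat.floor_eq_iff ((Nat.cast_nonneg a).trans hy.1.le)]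
      refine ⟨hy.1.le, ?_⟩
      have := hy.2
      push_cast at this
      exact this
    rw [this]
  have hii : ∀ a : ℕ, IntervalIntegrable (fun y : ℝ => φ ⌊y⌋₊) volume (a:ℝ) ((a+1 : ℕ) : ℝ) := by
    intro a
    have h1 : IntervalIntegrable (fun _ : ℝ => φ a) volume (a:ℝ) ((a+1 : ℕ) : ℝ) := intervalIntegrable_const
    refine h1.congr_ae ?_
    have hle : (a:ℝ) ≤ ((a+1 : ℕ) : ℝ) := by push_cast; linarith
    rw [Set.uIoc_of_le hle, ← Measure.restrict_congr_set (Ioo_ae_eq_Ioc)]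
    filter_upwards [ae_restrict_mem measurableSet_Ioo] with y hy
    exact (hae a y hy).symm
  constructor
  · have := IntervalIntegrable.trans_iterate (f := fun y : ℝ => φ ⌊y⌋₊) (μ := volume)
      (a := fun k : ℕ => (k : ℝ)) (n := m) (fun k _ => hii k)
    simpa using this
  · have := intervalIntegral.sum_integral_adjacent_intervals (f := fun y : ℝ => φ ⌊y⌋₊) (μ := volume)
      (a := fun k : ℕ => (k : ℝ)) (n := m) (fun k _ => hii k)
    rw [Nat.cast_zero] at this
    rw [← this]
    apply Finset.sum_congr rfl
    intro a _
    have hle : (a:ℝ) ≤ ((a+1 : ℕ) : ℝ) := by push_cast; linarith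
    rw [intervalIntegral.integral_of_le hle, ← integral_Ioc_eq_integral_Ioo.symm,
      setIntegral_congr_fun measurableSet_Ioo (hae a)]
    simp

lemma int_floor_sum' (φ : ℕ → ℝ) (m : ℕ) :
    ∫ x in (0:ℝ)..1, (m : ℝ) * φ ⌊(m:ℝ) * x⌋₊ = ∑ a ∈ Finset.range m, φ a := by
  rw [intervalIntegral.integral_const_mul]
  have h := intervalIntegral.mul_integral_comp_mul_left (f := fun y : ℝ => φ ⌊y⌋₊) (a := 0) (b := 1) (c := (m:ℝ))
  rw [h, mul_zero, mul_one, (int_floor_sum φ m).2]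

lemma conv_bound_int : IntervalIntegrable (fun x : ℝ => (√x)⁻¹ + (√(1-x))⁻¹) volume 0 1 := by
  have h1 : IntervalIntegrable (fun x : ℝ => (√x)⁻¹) volume 0 1 := by
    have h := intervalIntegral.intervalIntegrable_rpow' (a := 0) (b := 1) (r := -(1/2:ℝ)) (by norm_num)
    refine h.congr ?_
    intro x hx
    rw [Set.uIoc_of_le zero_le_one] at hx
    simp only
    rw [Real.rpow_neg hx.1.le, Real.sqrt_eq_rpow]
  have h2 := h1.comp_sub_left 1
  simp at h2
  exact h1.add h2.symm
  
lemma conv_sqrt_bound {x : ℝ} (h0 : 0 < x) (h1 : x < 1) :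
    (√(x * (1-x)))⁻¹ ≤ (√x)⁻¹ + (√(1-x))⁻¹ := by
  have hx : 0 < √x := Real.sqrt_pos.2 h0
  have hy : 0 < √(1-x) := Real.sqrt_pos.2 (by linarith)
  rw [Real.sqrt_mul h0.le, inv_add_inv hx.ne' hy.ne', inv_eq_one_div]
  apply div_le_div_of_nonneg_right _ (by positivity)
  have a1 := Real.sq_sqrt h0.le
  have a2 := Real.sq_sqrt (show 0 ≤ 1 - x by linarith)
  nlinarith [mul_pos hx hy]

lemma conv_dom {v : ℕ → ℝ} {K : ℝ} (hv : ∀ n, 0 ≤ v n) (hv0 : v 0 = 0) (hK : ∀ n : ℕ, √(n:ℝ) * v n ≤ K)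
    {m : ℕ} (hm : 0 < m) {x : ℝ} (h0 : 0 < x) (h1 : x < 1) :
    m * (v ⌊(m:ℝ) * x⌋₊ * v (m - ⌊(m:ℝ) * x⌋₊)) ≤ 2 * K ^ 2 * ((√x)⁻¹ + (√(1-x))⁻¹) := by
  have hmR : (0:ℝ) < m := by exact_mod_cast hm
  have hK0 : 0 ≤ K := by simpa using hK 0
  have hB : 0 ≤ (√x)⁻¹ + (√(1-x))⁻¹ := by positivity
  set a := ⌊(m:ℝ) * x⌋₊ with ha
  rcases Nat.eq_zero_or_pos a with h | h
  · rw [h, hv0]; simp; positivity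
  have hx1 : (a:ℝ) ≤ m * x := Nat.floor_le (by positivity)
  have hx2 : m * x < a + 1 := Nat.lt_floor_add_one _
  have ham : a < m := by
    have : (a:ℝ) < m := by nlinarith
    exact_mod_cast this
  have haR : (1:ℝ) ≤ a := by exact_mod_cast h
  set b := m - a with hb
  have hbR : (b:ℝ) = m - a := by rw [hb, Nat.cast_sub ham.le]
  have hb1 : m * (1 - x) ≤ b := by rw [hbR]; linarith
  have ha1 : m * x ≤ 2 * a := by linarith
  have hb0 : 0 < (b:ℝ) := lt_of_lt_of_le (by apply mul_pos hmR; linarith) hb1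
  have hsa : 0 < √(a:ℝ) := Real.sqrt_pos.2 (by linarith)
  have hsb : 0 < √(b:ℝ) := Real.sqrt_pos.2 hb0
  have hxx : 0 < x * (1-x) := mul_pos h0 (by linarith)
  have hsx : 0 < √(x*(1-x)) := Real.sqrt_pos.2 hxx
  have key : m * √(x*(1-x)) ≤ 2 * (√(a:ℝ) * √(b:ℝ)) := by
    rw [← Real.sqrt_mul (by linarith)]
    have e1 : m * √(x*(1-x)) = √((m * x) * (m*(1-x))) := by
      rw [show (m * x) * (m*(1-x)) = (m:ℝ)^2 * (x*(1-x)) by ring, Real.sqrt_mul (sq_nonneg (m:ℝ)), Real.sqrt_sq hmR.le]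
    have e2 : 2 * √((a:ℝ) * b) = √((2*a) * (2 * b)) := by
      rw [show (2*(a:ℝ)) * (2 * b) = 2^2 * (a*b) by ring, Real.sqrt_mul (sq_nonneg (2:ℝ)), Real.sqrt_sq (by norm_num)]
    rw [e1, e2]
    apply Real.sqrt_le_sqrt
    apply mul_le_mul ha1 (by linarith) (mul_nonneg hmR.le (by linarith)) (by linarith)
  have hvv : (√(a:ℝ) * √(b:ℝ)) * (v a * v b) ≤ K ^ 2 := by
    have := mul_le_mul (hK a) (hK b) (mul_nonneg hsb.le (hv b)) hK0
    nlinarith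
  have hvn : 0 ≤ v a * v b := mul_nonneg (hv _) (hv _)
  have : m * (v a * v b) ≤ 2 * K^2 * (√(x*(1-x)))⁻¹ := by
    rw [← div_eq_mul_inv, le_div_iff₀ hsx]
    nlinarith
  refine this.trans ?_
  exact mul_le_mul_of_nonneg_left (conv_sqrt_bound h0 h1) (by positivity)

lemma conv_ptwise {v : ℕ → ℝ} {c : ℝ} (hc : Tendsto (fun n : ℕ => √(n:ℝ) * v n) atTop (nhds c))
    {m : ℕ → ℕ} (hm : Tendsto m atTop atTop) {x : ℝ} (h0 : 0 < x) (h1 : x < 1) :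
    Tendsto (fun k => ((m k : ℕ) : ℝ) * (v ⌊(m k:ℝ) * x⌋₊ * v (m k - ⌊(m k:ℝ) * x⌋₊))) atTop
      (nhds (c ^ 2 * (√(x * (1-x)))⁻¹)) := by
  have hmR : Tendsto (fun k => ((m k : ℕ) : ℝ)) atTop atTop := tendsto_natCast_atTop_atTop.comp hm
  set a : ℕ → ℕ := fun k => ⌊(m k:ℝ) * x⌋₊ with ha
  have hale : ∀ k, a k ≤ m k := by
    intro k
    have : (a k:ℝ) ≤ m k * x := Nat.floor_le (by positivity)
    have h2 : (0:ℝ) ≤ m k := Nat.cast_nonneg _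
    have : (a k:ℝ) ≤ m k := by nlinarith
    exact_mod_cast this
  have hta : Tendsto (fun k => (a k : ℝ) / m k) atTop (nhds x) := by
    have := (tendsto_nat_floor_mul_div_atTop h0.le).comp hmR
    refine this.congr ?_
    intro k; simp [ha, mul_comm]
  have htb : Tendsto (fun k => ((m k - a k : ℕ) : ℝ) / m k) atTop (nhds (1 - x)) := by
    have := (tendsto_const_nhds (x := (1:ℝ))).sub hta
    refine this.congr' ?_
    filter_upwards [hmR.eventually_gt_atTop 0] with k hk
    rw [Nat.cast_sub (hale k)]; field_simp
  have htop : ∀ (y : ℕ → ℕ) (z : ℝ), 0 < z → Tendsto (fun k => (y k : ℝ) / m k) atTop (nhds z) →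
      Tendsto y atTop atTop := by
    intro y z hz hy
    have := hy.pos_mul_atTop hz hmR
    rw [← tendsto_natCast_atTop_iff (R := ℝ)]
    refine this.congr' ?_
    filter_upwards [hmR.eventually_gt_atTop 0] with k hk
    field_simp
  have hatop := htop _ _ h0 hta
  have hbtop := htop _ _ (by linarith) htb
  have hA := hc.comp hatop
  have hB := hc.comp hbtop
  have hxx : 0 < x * (1-x) := mul_pos h0 (by linarith)
  have hS : Tendsto (fun k => (√(((a k : ℝ) / m k) * (((m k - a k : ℕ) : ℝ) / m k)))⁻¹) atTop
      (nhds ((√(x * (1-x)))⁻¹)) :=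
    ((hta.mul htb).sqrt).inv₀ (Real.sqrt_pos.2 hxx).ne'
  have := (hA.mul hB).mul hS
  rw [← pow_two] at this
  refine this.congr' ?_
  filter_upwards [hmR.eventually_gt_atTop 0, hatop.eventually_gt_atTop 0, hbtop.eventually_gt_atTop 0] with k hk hak hbk
  have hak' : (0:ℝ) < a k := by exact_mod_cast hak
  have hbk' : (0:ℝ) < ((m k - a k : ℕ) : ℝ) := by exact_mod_cast hbk
  have e : √(((a k : ℝ) / m k) * (((m k - a k : ℕ) : ℝ) / m k)) = √(a k : ℝ) * √((m k - a k : ℕ) : ℝ) / m k := by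
    rw [div_mul_div_comm, Real.sqrt_div (by positivity), Real.sqrt_mul_self hk.le, Real.sqrt_mul hak'.le]
  have s1 := Real.sqrt_pos.2 hak'
  have s2 := Real.sqrt_pos.2 hbk'
  simp only [Function.comp]
  rw [e]
  have ea : ⌊(m k:ℝ) * x⌋₊ = a k := rfl
  rw [ea]
  field_simp

lemma conv_sum_range (φ : ℕ × ℕ → ℝ) (m : ℕ) (h : φ (m, 0) = 0) :
    ∑ x ∈ Finset.HasAntidiagonal.antidiagonal m, φ x = ∑ a ∈ Finset.range m, φ (a, m - a) := by
  rw [Finset.Nat.sum_antidiagonal_eq_sum_range_succ_mk, Finset.sum_range_succ]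
  simp [h]

lemma conv_bdd {v : ℕ → ℝ} {c : ℝ}
    (hc : Tendsto (fun n : ℕ => √(n:ℝ) * v n) atTop (nhds c)) : ∃ K, ∀ n : ℕ, √(n:ℝ) * v n ≤ K := by
  obtain ⟨K, hK⟩ := hc.bddAbove_range
  exact ⟨K, fun n => hK ⟨n, rfl⟩⟩

lemma conv_lim {v : ℕ → ℝ} {c : ℝ} (hv : ∀ n, 0 ≤ v n) (hv0 : v 0 = 0)
    (hc : Tendsto (fun n : ℕ => √(n:ℝ) * v n) atTop (nhds c))
    {m : ℕ → ℕ} (hm : Tendsto m atTop atTop) {G : ℕ → ℕ × ℕ → ℝ} {C : ℝ} (hG : ∀ k y, |G k y| ≤ C)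
    {gh : ℝ → ℝ} (hgh : ∀ x : ℝ, 0 < x → x < 1 → x ≠ 1/2 →
      Tendsto (fun k => G k (⌊(m k:ℝ) * x⌋₊, m k - ⌊(m k:ℝ) * x⌋₊)) atTop (nhds (gh x))) :
    Tendsto (fun k => ∑ x ∈ Finset.HasAntidiagonal.antidiagonal (m k), v x.1 * v x.2 * G k x) atTop
      (nhds (∫ x in (0:ℝ)..1, c ^ 2 * (√(x * (1-x)))⁻¹ * gh x)) := by
  obtain ⟨K, hK⟩ := conv_bdd hc
  have hC0 : 0 ≤ C := (abs_nonneg _).trans (hG 0 0)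
  have key : Tendsto (fun k => ∫ x in (0:ℝ)..1, (m k : ℝ) * ((fun a => v a * v (m k - a) * G k (a, m k - a)) ⌊(m k:ℝ) * x⌋₊))
      atTop (nhds (∫ x in (0:ℝ)..1, c ^ 2 * (√(x * (1-x)))⁻¹ * gh x)) := by
    apply intervalIntegral.tendsto_integral_filter_of_dominated_convergence
      (fun x => 2 * K ^ 2 * ((√x)⁻¹ + (√(1-x))⁻¹) * C)
    · refine Eventually.of_forall fun k => Measurable.aestronglyMeasurable ?_
      apply Measurable.const_mul
      exact (measurable_from_nat (f := fun a => v a * v (m k - a) * G k (a, m k - a))).comp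
        (Nat.measurable_floor.comp (measurable_const_mul _))
    · filter_upwards [hm.eventually_gt_atTop 0] with k hk
      have hne : ∀ᵐ x : ℝ, x ≠ 1 := by
        simp [ae_iff]
      filter_upwards [hne] with x hx1 hx
      rw [Set.uIoc_of_le zero_le_one] at hx
      have h1 : x < 1 := lt_of_le_of_ne hx.2 hx1
      have hd := conv_dom hv hv0 hK hk hx.1 h1
      rw [Real.norm_eq_abs, ← mul_assoc, abs_mul, abs_of_nonneg (by have := hv ⌊(m k:ℝ) * x⌋₊; have := hv (m k - ⌊(m k:ℝ) * x⌋₊); positivity)]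
      have hnn : 0 ≤ 2 * K ^ 2 * ((√x)⁻¹ + (√(1-x))⁻¹) := by positivity
      exact mul_le_mul hd (hG _ _) (abs_nonneg _) hnn
    · exact (conv_bound_int.const_mul (2 * K^2)).mul_const C
    · have hne : ∀ᵐ x : ℝ, x ≠ 1 := by
        simp [ae_iff]
      have hne2 : ∀ᵐ x : ℝ, x ≠ 1/2 := by
        simp [ae_iff]
      filter_upwards [hne, hne2] with x hx1 hx2 hx
      rw [Set.uIoc_of_le zero_le_one] at hx
      have h1 : x < 1 := lt_of_le_of_ne hx.2 hx1
      have := (conv_ptwise hc hm hx.1 h1).mul (hgh x hx.1 h1 hx2)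
      refine this.congr fun k => ?_
      ring
  refine key.congr' ?_
  refine Eventually.of_forall fun k => ?_
  have h1 := int_floor_sum' (fun a => v a * v (m k - a) * G k (a, m k - a)) (m k)
  have h2 := conv_sum_range (fun x => v x.1 * v x.2 * G k x) (m k) (by simp [hv0])
  exact h1.trans h2.symm

lemma conv_unif {v : ℕ → ℝ} {c : ℝ} (hv : ∀ n, 0 ≤ v n) (hv0 : v 0 = 0)
    (hc : Tendsto (fun n : ℕ => √(n:ℝ) * v n) atTop (nhds c)) :
    ∃ K, ∀ m : ℕ, ∑ x ∈ Finset.HasAntidiagonal.antidiagonal m, v x.1 * v x.2 ≤ K := by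
  have := conv_lim hv hv0 hc (m := fun k => k) tendsto_id (G := fun _ _ => 1) (C := 1) (by simp)
    (gh := fun _ => 1) (by intros; exact tendsto_const_nhds)
  obtain ⟨K, hK⟩ := this.bddAbove_range
  refine ⟨K, fun n => ?_⟩
  have := hK ⟨n, rfl⟩
  simpa using this


noncomputable def mvec (n : ℕ) (M : Multiset ℕ) : ℕ → ℝ :=
  fun i => (((M.sort (· ≤ ·)).reverse.getD i 0 : ℕ) : ℝ) / n

lemma mvec_part (n : ℕ) (lam : Nat.Partition n) : partVec n lam = mvec n lam.parts := rfl

lemma sort_rev_perm (M : Multiset ℕ) : ((M.sort (· ≤ ·)).reverse : Multiset ℕ) = M := by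
  rw [Multiset.coe_reverse, Multiset.sort_eq]

lemma sort_rev_pw (M : Multiset ℕ) : (M.sort (· ≤ ·)).reverse.Pairwise (· ≥ ·) := by
  rw [List.pairwise_reverse]
  exact Multiset.pairwise_sort M (· ≤ ·)

lemma sort_rev_eq {M : Multiset ℕ} {l : List ℕ} (hl : l.Pairwise (· ≥ ·)) (h : (l : Multiset ℕ) = M) :
    (M.sort (· ≤ ·)).reverse = l := by
  apply List.Perm.eq_of_pairwise (le := (· ≥ ·)) _ (sort_rev_pw M) hl
  · rw [← Multiset.coe_eq_coe, sort_rev_perm, h]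
  · intro a b _ _ h1 h2
    exact le_antisymm h2 h1

lemma list_hasSum_getD (l : List ℕ) : HasSum (fun i => ((l.getD i 0 : ℕ) : ℝ)) (l.sum : ℝ) := by
  have h : ∀ i ∉ Finset.range l.length, ((l.getD i 0 : ℕ) : ℝ) = 0 := by
    intro i hi
    rw [Finset.mem_range, not_lt] at hi
    rw [List.getD_eq_default _ _ hi]; simp
  have := hasSum_sum_of_ne_finset_zero (L := SummationFilter.unconditional _) h
  convert! this using 1
  clear this h
  induction l with
  | nil => simp
  | cons a l ih =>
    rw [List.length_cons, Finset.sum_range_succ']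
    simp only [List.getD_cons_succ, List.getD_cons_zero, List.sum_cons]
    rw [← ih]; push_cast; ring

lemma list_getD_anti {l : List ℕ} (hl : l.Pairwise (· ≥ ·)) {i j : ℕ} (hij : i ≤ j) : l.getD j 0 ≤ l.getD i 0 := by
  rcases lt_or_ge j l.length with h | h
  · rw [List.getD_eq_getElem _ _ h, List.getD_eq_getElem _ _ (by omega)]
    rcases Nat.eq_or_lt_of_le hij with h2 | h2
    · subst h2; exact le_refl _
    · exact (List.pairwise_iff_getElem.1 hl) i j (by omega) h h2
  · rw [List.getD_eq_default _ _ h]; exact Nat.zero_le _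

lemma mvec_mem {n : ℕ} (hn : 0 < n) {M : Multiset ℕ} (hM : M.sum = n) : mvec n M ∈ Sdown := by
  have hnR : (0:ℝ) < n := by exact_mod_cast hn
  refine ⟨fun i => by unfold mvec; positivity, fun i j hij => ?_, ?_⟩
  · unfold mvec
    apply div_le_div_of_nonneg_right _ hnR.le
    exact_mod_cast list_getD_anti (sort_rev_pw M) hij
  · have h := (list_hasSum_getD (M.sort (· ≤ ·)).reverse).div_const (n:ℝ)
    have e : (M.sort (· ≤ ·)).reverse.sum = n := by
      rw [← hM, ← Multiset.sum_coe, sort_rev_perm]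
    rw [e, div_self hnR.ne'] at h
    exact h

lemma pairSeq_mem {x : ℝ} (h0 : 1/2 ≤ x) (h1 : x ≤ 1) : pairSeq x ∈ Sdown := by
  refine ⟨fun i => ?_, fun i j hij => ?_, ?_⟩
  · unfold pairSeq; split_ifs <;> linarith
  · unfold pairSeq; split_ifs <;> first | linarith | omega
  · have h : ∀ i ∉ Finset.range 2, pairSeq x i = 0 := by
      intro i hi
      rw [Finset.mem_range, not_lt] at hi
      unfold pairSeq
      rw [if_neg (by omega), if_neg (by omega)]
    have := hasSum_sum_of_ne_finset_zero (L := SummationFilter.unconditional _) h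
    convert! this using 1
    simp [Finset.sum_range_succ, pairSeq]

lemma toSdown_tendsto {s : ℕ → ℕ → ℝ} {t : ℕ → ℝ} (hs : ∀ᶠ n in atTop, s n ∈ Sdown) (ht : t ∈ Sdown)
    (h : ∀ i, Tendsto (fun n => s n i) atTop (nhds (t i))) :
    Tendsto (fun n => toSdown (s n)) atTop (nhds (toSdown t)) := by
  rw [tendsto_subtype_rng, tendsto_pi_nhds]
  intro i
  have e : (toSdown t).1 = t := by unfold toSdown; rw [dif_pos ht]
  rw [e]
  refine (h i).congr' ?_
  filter_upwards [hs] with n hn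
  unfold toSdown; rw [dif_pos hn]

lemma sort_rev_cons2 {a b : ℕ} {μ : Multiset ℕ} (hab : b ≤ a) (hb : ∀ c ∈ μ, c ≤ b) :
    ((a ::ₘ b ::ₘ μ).sort (· ≤ ·)).reverse = a :: b :: (μ.sort (· ≤ ·)).reverse := by
  apply sort_rev_eq
  · rw [List.pairwise_cons, List.pairwise_cons]
    have hmem : ∀ c ∈ (μ.sort (· ≤ ·)).reverse, c ≤ b := by
      intro c hc
      apply hb
      simpa using hc
    refine ⟨?_, hmem, sort_rev_pw μ⟩
    intro c hc
    rcases List.mem_cons.1 hc with h | h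
    · rw [h]; exact hab
    · exact (hmem c h).trans hab
  · rw [← Multiset.cons_coe, ← Multiset.cons_coe, sort_rev_perm]

/-- the sequences `a_n, b_n` -/
lemma mvec_tendsto {a b : ℕ → ℕ} {μ : Multiset ℕ} {x : ℝ} (hx : 1/2 < x) (hx1 : x < 1)
    (ha : Tendsto (fun n => (a n : ℝ) / n) atTop (nhds x))
    (hb : Tendsto (fun n => (b n : ℝ) / n) atTop (nhds (1 - x)))
    (hsum : ∀ᶠ n in atTop, (a n ::ₘ b n ::ₘ μ).sum = n) :
    Tendsto (fun n => mvec n (a n ::ₘ b n ::ₘ μ) 0) atTop (nhds x) ∧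
    Tendsto (fun n => toSdown (mvec n (a n ::ₘ b n ::ₘ μ))) atTop (nhds (toSdown (pairSeq x))) := by
  have hab : ∀ᶠ n in atTop, b n ≤ a n := by
    filter_upwards [hb.eventually_lt ha (by linarith), eventually_gt_atTop 0] with n hn h0
    have : (0:ℝ) < n := by exact_mod_cast h0
    rw [div_lt_div_iff_of_pos_right this] at hn
    exact_mod_cast hn.le
  have hbtop : Tendsto (fun n => (b n : ℝ)) atTop atTop := by
    have := hb.pos_mul_atTop (by linarith) (tendsto_natCast_atTop_atTop (R := ℝ))
    refine this.congr' ?_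
    filter_upwards [eventually_gt_atTop 0] with n h0
    have : (0:ℝ) < n := by exact_mod_cast h0
    field_simp
  have hbμ : ∀ᶠ n in atTop, ∀ c ∈ μ, c ≤ b n := by
    filter_upwards [hbtop.eventually_ge_atTop ((μ.sum : ℕ):ℝ)] with n hn c hc
    exact (Multiset.le_sum_of_mem hc).trans (by exact_mod_cast hn)
  have hev : ∀ᶠ n in atTop, ∀ i, mvec n (a n ::ₘ b n ::ₘ μ) i =
      (((a n :: b n :: (μ.sort (· ≤ ·)).reverse).getD i 0 : ℕ) : ℝ) / n := by
    filter_upwards [hab, hbμ] with n h1 h2 i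
    unfold mvec
    rw [sort_rev_cons2 h1 h2]
  have hlim : ∀ i, Tendsto (fun n => mvec n (a n ::ₘ b n ::ₘ μ) i) atTop (nhds (pairSeq x i)) := by
    intro i
    have : Tendsto (fun n => (((a n :: b n :: (μ.sort (· ≤ ·)).reverse).getD i 0 : ℕ) : ℝ) / n) atTop
        (nhds (pairSeq x i)) := by
      match i with
      | 0 => simpa [pairSeq] using ha
      | 1 => simpa [pairSeq] using hb
      | i + 2 =>
        simp only [List.getD_cons_succ]
        have e : pairSeq x (i+2) = 0 := by simp [pairSeq]
        rw [e]
        exact tendsto_const_nhds.div_atTop tendsto_natCast_atTop_atTop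
    refine this.congr' ?_
    filter_upwards [hev] with n hn
    exact (hn i).symm
  refine ⟨by simpa [pairSeq] using hlim 0, ?_⟩
  apply toSdown_tendsto _ (pairSeq_mem hx.le hx1.le) hlim
  filter_upwards [hsum, eventually_gt_atTop 0] with n h1 h0
  exact mvec_mem h0 h1

lemma gwD_tendsto {a b : ℕ → ℕ} {μ : Multiset ℕ} {x : ℝ}
    (ha : Tendsto (fun n => (a n : ℝ) / n) atTop (nhds x))
    (hb : Tendsto (fun n => (b n : ℝ) / n) atTop (nhds (1 - x)))
    (hsum : ∀ᶠ n in atTop, (a n ::ₘ b n ::ₘ μ).sum = n) :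
    Tendsto (fun n : ℕ => gwD (a n ::ₘ b n ::ₘ μ) / (n:ℝ)^2) atTop (nhds (2 * (x * (1-x)))) := by
  set q : ℝ := (μ.map (fun c : ℕ => (c:ℝ)^2)).sum with hq
  have hμ : ∀ n : ℝ, (μ.map (fun c : ℕ => (c:ℝ) * (n - c))).sum = (μ.sum : ℝ) * n - q := by
    intro n
    have e1 : (μ.map (fun c : ℕ => (c:ℝ) * (n - c))) = μ.map (fun c : ℕ => (c:ℝ) * n - (c:ℝ)^2) := by
      apply Multiset.map_congr rfl; intros; ring
    rw [e1, Multiset.sum_map_sub, Multiset.sum_map_mul_right, Nat.cast_multiset_sum]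
  have h1 : Tendsto (fun n : ℕ => ((a n : ℝ) / n) * (1 - (a n : ℝ) / n) + ((b n : ℝ) / n) * (1 - (b n : ℝ) / n)
      + ((μ.sum : ℝ) / n - q / n / n)) atTop (nhds (x * (1 - x) + (1 - x) * (1 - (1 - x)) + (0 - 0))) := by
    apply Tendsto.add
    · exact (ha.mul (tendsto_const_nhds.sub ha)).add (hb.mul (tendsto_const_nhds.sub hb))
    · apply Tendsto.sub
      · exact tendsto_const_nhds.div_atTop tendsto_natCast_atTop_atTop
      · exact (tendsto_const_nhds.div_atTop tendsto_natCast_atTop_atTop).div_atTop tendsto_natCast_atTop_atTop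
  have e : x * (1 - x) + (1 - x) * (1 - (1 - x)) + (0 - 0) = 2 * (x * (1-x)) := by ring
  rw [e] at h1
  refine h1.congr' ?_
  filter_upwards [hsum, eventually_gt_atTop 0] with n hn h0
  have : (0:ℝ) < n := by exact_mod_cast h0
  rw [gwD_eq, hn, Multiset.map_cons, Multiset.map_cons, Multiset.sum_cons, Multiset.sum_cons, hμ]
  field_simp
  ring

noncomputable def gwF (f : ↥Sdown → ℝ) (n : ℕ) (M : Multiset ℕ) : ℝ :=
  (1 - mvec n M 0) * f (toSdown (mvec n M))

noncomputable def gwg (f : ↥Sdown → ℝ) (n : ℕ) (M : Multiset ℕ) : ℝ :=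
  if M.sum = n then (n:ℝ)^2 * gwF f n M / gwD M else 0

lemma mvec_zero_bound {n : ℕ} (hn : 0 < n) {M : Multiset ℕ} (hM : M.sum = n) :
    0 ≤ 1 - mvec n M 0 ∧ (n:ℝ)^2 * (1 - mvec n M 0) ≤ gwD M := by
  have hnR : (0:ℝ) < n := by exact_mod_cast hn
  set X : ℕ := (M.sort (· ≤ ·)).reverse.getD 0 0 with hX
  have hm : mvec n M 0 = X / n := rfl
  have hmax : ∀ c ∈ M, c ≤ X := by
    intro c hc
    have hc' : c ∈ (M.sort (· ≤ ·)).reverse := by simpa using hc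
    obtain ⟨i, hi, rfl⟩ := List.getElem_of_mem hc'
    have := list_getD_anti (sort_rev_pw M) (Nat.zero_le i)
    rw [List.getD_eq_getElem _ _ hi] at this
    exact this
  have hXn : X ≤ n := by
    have h := mvec_mem hn hM
    have := le_hasSum h.2.2 0 (fun j _ => h.1 j)
    rw [hm, div_le_one hnR] at this
    exact_mod_cast this
  have hXR : (X:ℝ) ≤ n := by exact_mod_cast hXn
  constructor
  · rw [hm]
    have : (X:ℝ)/n ≤ 1 := by rw [div_le_one hnR]; exact hXR
    linarith
  · have e : (n:ℝ)^2 * (1 - mvec n M 0) = (M.map (fun c : ℕ => (c:ℝ) * ((n:ℝ) - X))).sum := by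
      rw [Multiset.sum_map_mul_right]
      have : (M.map (fun c : ℕ => (c:ℝ))).sum = n := by
        rw [← hM, Nat.cast_multiset_sum]
      rw [this, hm]; field_simp
    rw [e, gwD_eq, hM]
    apply Multiset.sum_map_le_sum_map
    intro c hc
    apply mul_le_mul_of_nonneg_left _ (Nat.cast_nonneg c)
    have : (c:ℝ) ≤ X := by exact_mod_cast hmax c hc
    linarith

lemma gwg_bound {f : ↥Sdown → ℝ} {C : ℝ} (hf : ∀ s, |f s| ≤ C) {n : ℕ} (hn : 0 < n) (M : Multiset ℕ) :
    |gwg f n M| ≤ C := by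
  have hC0 : 0 ≤ C := (abs_nonneg _).trans (hf ⟨oneSeq, oneSeq_mem_Sdown⟩)
  unfold gwg
  split_ifs with h
  · obtain ⟨h1, h2⟩ := mvec_zero_bound hn h
    have h3 : 0 ≤ (n:ℝ)^2 * (1 - mvec n M 0) := by positivity
    have hD : 0 ≤ gwD M := h3.trans h2
    rcases hD.eq_or_lt with h4 | h4
    · rw [← h4]; simpa using hC0
    · rw [abs_div, abs_of_pos h4, div_le_iff₀ h4]
      unfold gwF
      rw [← mul_assoc, abs_mul, abs_of_nonneg h3, mul_comm]
      exact mul_le_mul (hf _) h2 h3 hC0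
  · simpa using hC0

lemma gwg_mul {f : ↥Sdown → ℝ} {n : ℕ} (hn : 0 < n) {M : Multiset ℕ} (hM : M.sum = n) :
    gwD M * gwg f n M = (n:ℝ)^2 * gwF f n M := by
  unfold gwg
  rw [if_pos hM]
  obtain ⟨h1, h2⟩ := mvec_zero_bound hn hM
  have hnR : (0:ℝ) < n := by exact_mod_cast hn
  by_cases h : gwD M = 0
  · rw [h] at h2
    have : (n:ℝ)^2 * (1 - mvec n M 0) = 0 := le_antisymm h2 (by positivity)
    unfold gwF
    rw [h, ← mul_assoc, this]; simp
  · field_simp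

/-- limit profile -/
noncomputable def gwgh (f : ↥Sdown → ℝ) (x : ℝ) : ℝ :=
  (1 - max x (1-x)) * f (toSdown (pairSeq (max x (1-x)))) / (2 * (x * (1-x)))

lemma gwg_tendsto {f : ↥Sdown → ℝ} (hf : Continuous f) {a b : ℕ → ℕ} {μ : Multiset ℕ} {x : ℝ}
    (hx0 : 0 < x) (hx1 : x < 1) (hx2 : x ≠ 1/2)
    (ha : Tendsto (fun n => (a n : ℝ) / n) atTop (nhds x))
    (hb : Tendsto (fun n => (b n : ℝ) / n) atTop (nhds (1 - x)))
    (hsum : ∀ᶠ n in atTop, (a n ::ₘ b n ::ₘ μ).sum = n) :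
    Tendsto (fun n : ℕ => gwg f n (a n ::ₘ b n ::ₘ μ)) atTop (nhds (gwgh f x)) := by
  have hD := gwD_tendsto ha hb hsum
  have hpos : 0 < 2 * (x * (1-x)) := by
    have := mul_pos hx0 (sub_pos.2 hx1); linarith
  have hF : Tendsto (fun n : ℕ => gwF f n (a n ::ₘ b n ::ₘ μ)) atTop
      (nhds ((1 - max x (1-x)) * f (toSdown (pairSeq (max x (1-x)))))) := by
    unfold gwF
    rcases lt_or_gt_of_ne hx2 with h | h
    · rw [max_eq_right (by linarith)]
      have hb' : Tendsto (fun n => (a n : ℝ) / n) atTop (nhds (1 - (1 - x))) := by simpa using ha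
      have hsw : ∀ n, (a n ::ₘ b n ::ₘ μ) = (b n ::ₘ a n ::ₘ μ) := fun n => Multiset.cons_swap _ _ _
      simp only [hsw] at hsum ⊢
      obtain ⟨h1, h2⟩ := mvec_tendsto (x := 1 - x) (by linarith) (by linarith) hb hb' hsum
      exact (tendsto_const_nhds.sub h1).mul ((hf.tendsto _).comp h2)
    · rw [max_eq_left (by linarith)]
      obtain ⟨h1, h2⟩ := mvec_tendsto h hx1 ha hb hsum
      exact (tendsto_const_nhds.sub h1).mul ((hf.tendsto _).comp h2)
  have := hF.div hD hpos.ne'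
  unfold gwgh
  refine this.congr' ?_
  filter_upwards [hsum, eventually_gt_atTop 0] with n hn h0
  have : (0:ℝ) < n := by exact_mod_cast h0
  unfold gwg
  rw [if_pos hn]
  simp only [Pi.div_apply]
  rw [div_div_eq_mul_div, mul_comm]


lemma pair_continuousOn : ContinuousOn (fun x : ℝ => toSdown (pairSeq (max x (1-x)))) (Set.Ioo 0 1) := by
  rw [continuousOn_iff_continuous_domRestrict]
  have hmem : ∀ x : Set.Ioo (0:ℝ) 1, pairSeq (max x.1 (1-x.1)) ∈ Sdown := by
    rintro ⟨x, h0, h1⟩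
    apply pairSeq_mem
    · rcases le_total x (1/2) with h | h
      · exact le_max_of_le_right (by linarith)
      · exact le_max_of_le_left h
    · exact max_le h1.le (by linarith)
  have e : (Set.Ioo (0:ℝ) 1).domRestrict (fun x : ℝ => toSdown (pairSeq (max x (1-x)))) =
      fun x => ⟨pairSeq (max x.1 (1-x.1)), hmem x⟩ := by
    funext x
    simp only [Set.domRestrict_apply]
    unfold toSdown
    rw [dif_pos (hmem x)]
  rw [e]
  apply Continuous.subtype_mk
  apply continuous_pi
  intro i
  unfold pairSeq
  split_ifs <;> fun_prop

noncomputable def gwh0 (f : ↥Sdown → ℝ) (x : ℝ) : ℝ := (√(x * (1-x)))⁻¹ * gwgh f x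

lemma gwh0_symm (f : ↥Sdown → ℝ) (x : ℝ) : gwh0 f (1 - x) = gwh0 f x := by
  unfold gwh0 gwgh
  rw [sub_sub_cancel, max_comm, mul_comm (1-x) x]

lemma gwh0_cont {f : ↥Sdown → ℝ} (hf : Continuous f) : ContinuousOn (gwh0 f) (Set.Ioo 0 1) := by
  unfold gwh0 gwgh
  have hp : ∀ x ∈ Set.Ioo (0:ℝ) 1, 0 < x * (1-x) := fun x hx => mul_pos hx.1 (by linarith [hx.2])
  apply ContinuousOn.mul
  · apply ContinuousOn.inv₀ (by fun_prop)
    intro x hx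
    exact (Real.sqrt_pos.2 (hp x hx)).ne'
  · apply ContinuousOn.div
    · apply ContinuousOn.mul (by fun_prop)
      exact hf.comp_continuousOn pair_continuousOn
    · fun_prop
    · intro x hx
      have := hp x hx
      positivity

lemma gwh0_bound {f : ↥Sdown → ℝ} {C : ℝ} (hC : ∀ s, |f s| ≤ C) {x : ℝ} (h0 : 0 < x) (h1 : x < 1) :
    |gwh0 f x| ≤ C * ((√x)⁻¹ + (√(1-x))⁻¹) := by
  have hC0 : 0 ≤ C := (abs_nonneg _).trans (hC ⟨oneSeq, oneSeq_mem_Sdown⟩)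
  have hp : 0 < x * (1-x) := mul_pos h0 (by linarith)
  have hg : |gwgh f x| ≤ C := by
    unfold gwgh
    rw [abs_div, abs_of_pos (show 0 < 2 * (x*(1-x)) by linarith), div_le_iff₀ (by linarith), abs_mul]
    have a1 : |1 - max x (1-x)| ≤ 2 * (x*(1-x)) := by
      rcases le_total x (1/2) with h | h
      · rw [max_eq_right (by linarith), abs_of_nonneg (by linarith)]; nlinarith
      · rw [max_eq_left (by linarith), abs_of_nonneg (by linarith)]; nlinarith
    rw [mul_comm]
    exact mul_le_mul (hC _) a1 (abs_nonneg _) hC0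
  unfold gwh0
  rw [abs_mul, abs_of_nonneg (by positivity), mul_comm]
  exact mul_le_mul hg (conv_sqrt_bound h0 h1) (by positivity) hC0

lemma gwh0_int {f : ↥Sdown → ℝ} (hf : Continuous f) {C : ℝ} (hC : ∀ s, |f s| ≤ C) :
    IntervalIntegrable (gwh0 f) volume 0 1 := by
  have hb := conv_bound_int.const_mul C
  rw [intervalIntegrable_iff_integrableOn_Ioo_of_le zero_le_one] at hb ⊢
  apply Integrable.mono' hb
  · exact (gwh0_cont hf).aestronglyMeasurable measurableSet_Ioo
  · filter_upwards [ae_restrict_mem measurableSet_Ioo] with x hx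
    exact gwh0_bound hC hx.1 hx.2

lemma gw_integral {f : ↥Sdown → ℝ} (hf : Continuous f) {C : ℝ} (hC : ∀ s, |f s| ≤ C) :
    ∫ x in (0:ℝ)..1, gwh0 f x = ∫ x in Set.Ioc (1/2 : ℝ) 1,
            (1 - x) * f (toSdown (pairSeq x)) * x ^ (-(3:ℝ)/2) * (1 - x) ^ (-(3:ℝ)/2) := by
  have hi := gwh0_int hf hC
  have i1 : IntervalIntegrable (gwh0 f) volume 0 (1/2) := hi.mono_set (by
    rw [Set.uIcc_of_le (by norm_num), Set.uIcc_of_le (by norm_num)]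
    apply Set.Icc_subset_Icc_right; norm_num)
  have i2 : IntervalIntegrable (gwh0 f) volume (1/2) 1 := hi.mono_set (by
    rw [Set.uIcc_of_le (by norm_num), Set.uIcc_of_le (by norm_num)]
    apply Set.Icc_subset_Icc_left; norm_num)
  rw [← intervalIntegral.integral_add_adjacent_intervals i1 i2]
  have hs : ∫ x in (0:ℝ)..(1/2), gwh0 f x = ∫ x in (1/2:ℝ)..1, gwh0 f x := by
    have := intervalIntegral.integral_comp_sub_left (a := (0:ℝ)) (b := 1/2) (gwh0 f) 1
    simp only [gwh0_symm] at this
    rw [this]; norm_num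
  rw [hs, ← two_mul, ← intervalIntegral.integral_const_mul, intervalIntegral.integral_of_le (by norm_num),
    ← integral_Ioc_eq_integral_Ioo.symm, ← integral_Ioc_eq_integral_Ioo.symm]
  apply setIntegral_congr_fun measurableSet_Ioo
  intro x hx
  have h0 : 0 < x := by linarith [hx.1]
  have h1 : 0 < 1 - x := by linarith [hx.2]
  simp only
  unfold gwh0 gwgh
  rw [max_eq_left (by linarith [hx.1])]
  have e : ∀ y : ℝ, 0 < y → y ^ (-(3:ℝ)/2) = y⁻¹ * (√y)⁻¹ := by
    intro y hy
    rw [Real.sqrt_eq_rpow, ← Real.rpow_neg hy.le, ← Real.rpow_neg_one y, ← Real.rpow_add hy]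
    norm_num
  rw [e x h0, e _ h1, Real.sqrt_mul h0.le]
  have s0 := Real.sqrt_pos.2 h0
  have s1 := Real.sqrt_pos.2 h1
  field_simp

lemma gwg_bound' {f : ↥Sdown → ℝ} {C : ℝ} (hf : ∀ s, |f s| ≤ C) (n : ℕ) (M : Multiset ℕ) :
    |gwg f n M| ≤ C := by
  have hC0 : 0 ≤ C := (abs_nonneg _).trans (hf ⟨oneSeq, oneSeq_mem_Sdown⟩)
  rcases Nat.eq_zero_or_pos n with h | h
  · subst h
    unfold gwg
    split_ifs <;> simpa using hC0
  · exact gwg_bound hf h M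

lemma gwB_tendsto {w : ℕ → ℝ} {c : ℝ} (hw : ∀ n, 0 ≤ w n)
    (hc : Tendsto (fun n : ℕ => √(n:ℝ) * (n * w n)) atTop (nhds c))
    {f : ↥Sdown → ℝ} (hf : Continuous f) {C : ℝ} (hC : ∀ s, |f s| ≤ C) (μ : Multiset ℕ) :
    Tendsto (fun n => gwB w (gwg f n) n μ) atTop (nhds (c ^ 2 * ∫ x in (0:ℝ)..1, gwh0 f x)) := by
  set m : ℕ → ℕ := fun n => n - μ.sum with hm
  have hmt : Tendsto m atTop atTop := tendsto_sub_atTop_nat _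
  have key := conv_lim (v := fun n => (n:ℝ) * w n) (c := c) (fun n => mul_nonneg (Nat.cast_nonneg n) (hw n)) (by simp) hc hmt
    (G := fun n y => gwg f n (y.1 ::ₘ y.2 ::ₘ μ)) (C := C) (fun n y => gwg_bound' hC n _) (gh := gwgh f) (by
      intro x h0 h1 h2
      have hle : ∀ k, ⌊(m k:ℝ) * x⌋₊ ≤ m k := by
        intro k
        have h3 : ((⌊(m k:ℝ) * x⌋₊ : ℕ) : ℝ) ≤ m k * x := Nat.floor_le (by positivity)
        have h4 : (0:ℝ) ≤ m k := Nat.cast_nonneg _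
        have : ((⌊(m k:ℝ) * x⌋₊ : ℕ) : ℝ) ≤ m k := by nlinarith
        exact_mod_cast this
      have hmn : Tendsto (fun n => (m n : ℝ) / n) atTop (nhds 1) := by
        have : Tendsto (fun n : ℕ => 1 - (μ.sum : ℝ) / n) atTop (nhds (1 - 0)) :=
          tendsto_const_nhds.sub (tendsto_const_nhds.div_atTop tendsto_natCast_atTop_atTop)
        rw [sub_zero] at this
        refine this.congr' ?_
        filter_upwards [eventually_ge_atTop μ.sum, eventually_gt_atTop 0] with n hn hn0
        have : (0:ℝ) < n := by exact_mod_cast hn0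
        simp only [hm]
        rw [Nat.cast_sub hn]; field_simp
      have hmR : Tendsto (fun k => ((m k : ℕ) : ℝ)) atTop atTop := tendsto_natCast_atTop_atTop.comp hmt
      have hta : Tendsto (fun k => ((⌊(m k:ℝ) * x⌋₊ : ℕ) : ℝ) / m k) atTop (nhds x) := by
        have := (tendsto_nat_floor_mul_div_atTop h0.le).comp hmR
        refine this.congr ?_
        intro k; simp [mul_comm]
      have hA : Tendsto (fun k : ℕ => ((⌊(m k:ℝ) * x⌋₊ : ℕ) : ℝ) / k) atTop (nhds x) := by
        have := hta.mul hmn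
        rw [mul_one] at this
        refine this.congr' ?_
        filter_upwards [hmR.eventually_gt_atTop 0] with k hk
        field_simp
      apply gwg_tendsto hf h0 h1 h2 hA
      · refine (hmn.sub hA).congr ?_
        intro k
        rw [Nat.cast_sub (hle k)]; ring
      · filter_upwards [eventually_ge_atTop μ.sum] with n hn
        rw [Multiset.sum_cons, Multiset.sum_cons]
        have := hle n
        have e : m n + μ.sum = n := by simp only [hm]; omega
        omega)
  have e : ∫ x in (0:ℝ)..1, c ^ 2 * (√(x * (1-x)))⁻¹ * gwgh f x = c ^ 2 * ∫ x in (0:ℝ)..1, gwh0 f x := by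
    rw [← intervalIntegral.integral_const_mul]
    congr 1
    funext x
    unfold gwh0; ring
  rw [e] at key
  refine key.congr' ?_
  filter_upwards [eventually_ge_atTop μ.sum] with n hn
  unfold gwB
  rw [if_pos hn]

lemma gwB_bound {w : ℕ → ℝ} {c : ℝ} (hw : ∀ n, 0 ≤ w n)
    (hc : Tendsto (fun n : ℕ => √(n:ℝ) * (n * w n)) atTop (nhds c))
    {f : ↥Sdown → ℝ} {C : ℝ} (hC : ∀ s, |f s| ≤ C) :
    ∃ K, ∀ n μ, |gwB w (gwg f n) n μ| ≤ K := by
  have hC0 : 0 ≤ C := (abs_nonneg _).trans (hC ⟨oneSeq, oneSeq_mem_Sdown⟩)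
  have hv : ∀ n : ℕ, 0 ≤ (n:ℝ) * w n := fun n => mul_nonneg (Nat.cast_nonneg n) (hw n)
  obtain ⟨K, hK⟩ := conv_unif (v := fun n => (n:ℝ) * w n) hv (by simp) hc
  refine ⟨K * C, fun n μ => ?_⟩
  have hK0 : 0 ≤ K := by simpa using hK 0
  unfold gwB
  split_ifs
  · refine (Finset.abs_sum_le_sum_abs _ _).trans ?_
    refine le_trans (Finset.sum_le_sum (g := fun x : ℕ × ℕ => ((x.1:ℝ) * w x.1) * (x.2 * w x.2) * C) ?_) ?_
    · intro x _
      rw [abs_mul, abs_of_nonneg (mul_nonneg (hv _) (hv _))]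
      exact mul_le_mul_of_nonneg_left (gwg_bound' hC n _) (mul_nonneg (hv _) (hv _))
    · rw [← Finset.sum_mul]
      exact mul_le_mul_of_nonneg_right (hK _) hC0
  · rw [abs_zero]; positivity

lemma gw_tsum_tendsto {η w : ℕ → ℝ} {c σ : ℝ} (hη : ∀ n, 0 ≤ η n) (hw : ∀ n, 0 ≤ w n)
    (hW : HasSum (gwW η w) (σ^2))
    (hc : Tendsto (fun n : ℕ => √(n:ℝ) * (n * w n)) atTop (nhds c))
    {f : ↥Sdown → ℝ} (hf : Continuous f) {C : ℝ} (hC : ∀ s, |f s| ≤ C) :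
    Tendsto (fun n => ∑' μ, gwW η w μ * gwB w (gwg f n) n μ) atTop
      (nhds (σ^2 * (c ^ 2 * ∫ x in (0:ℝ)..1, gwh0 f x))) := by
  obtain ⟨K, hK⟩ := gwB_bound hw hc hC
  have hW0 : ∀ μ, 0 ≤ gwW η w μ := by
    intro μ
    unfold gwW
    have := gwO_nonneg hw μ
    have := hη (Multiset.card μ + 2)
    positivity
  have hlim : ∑' μ, gwW η w μ * (c ^ 2 * ∫ x in (0:ℝ)..1, gwh0 f x) = σ^2 * (c ^ 2 * ∫ x in (0:ℝ)..1, gwh0 f x) :=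
    (hW.mul_right _).tsum_eq
  rw [← hlim]
  apply tendsto_tsum_of_dominated_convergence (bound := fun μ => gwW η w μ * K) (hW.summable.mul_right K)
  · intro μ
    exact (gwB_tendsto hw hc hf hC μ).const_mul _
  · refine Eventually.of_forall fun n μ => ?_
    rw [Real.norm_eq_abs, abs_mul, abs_of_nonneg (hW0 μ)]
    exact mul_le_mul_of_nonneg_left (hK n μ) (hW0 μ)

lemma gw_scale {w : ℕ → ℝ} {c : ℝ} (hc0 : 0 < c)
    (hc : Tendsto (fun n : ℕ => √(n:ℝ) * (n * w n)) atTop (nhds c)) :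
    (∀ᶠ n : ℕ in atTop, 0 < w (n+1)) ∧
    Tendsto (fun n : ℕ => √(n:ℝ) / ((n:ℝ)^2 * w (n+1))) atTop (nhds c⁻¹) := by
  have h1 : Tendsto (fun n : ℕ => √((n+1 : ℕ):ℝ) * (((n+1 : ℕ):ℝ) * w (n+1))) atTop (nhds c) :=
    hc.comp (tendsto_add_atTop_nat 1)
  have hpos : ∀ᶠ n : ℕ in atTop, 0 < w (n+1) := by
    filter_upwards [h1.eventually_const_lt hc0] with n hn
    by_contra h
    push Not at h
    have a1 : 0 ≤ √((n+1 : ℕ):ℝ) * ((n+1 : ℕ):ℝ) := by positivity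
    nlinarith
  refine ⟨hpos, ?_⟩
  have h2 : Tendsto (fun n : ℕ => (n:ℝ) / ((n+1 : ℕ):ℝ)) atTop (nhds 1) := by
    have := tendsto_natCast_div_add_atTop (1:ℝ)
    simpa using this
  have h3 := h2.sqrt
  rw [Real.sqrt_one] at h3
  have h4 := ((h1.mul h2).mul h3)
  rw [mul_one, mul_one] at h4
  refine (h4.inv₀ hc0.ne').congr' ?_
  filter_upwards [hpos, eventually_gt_atTop 0] with n hn h0
  have hnR : (0:ℝ) < n := by exact_mod_cast h0
  have hn1 : (0:ℝ) < ((n+1 : ℕ):ℝ) := by positivity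
  rw [Real.sqrt_div hnR.le]
  have s0 := Real.sqrt_pos.2 hnR
  have s1 := Real.sqrt_pos.2 hn1
  have hsq : (√(n:ℝ))^2 = n := Real.sq_sqrt hnR.le
  have hn' := hn.ne'
  field_simp
  rw [hsq]

lemma gw_final {η w : ℕ → ℝ} {c σ : ℝ} (hη : ∀ n, 0 ≤ η n) (hw : ∀ n, 0 ≤ w n) (hw0 : w 0 = 0)
    (hW : HasSum (gwW η w) (σ^2)) (hc0 : 0 < c)
    (hc : Tendsto (fun n : ℕ => √(n:ℝ) * (n * w n)) atTop (nhds c))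
    (p : ∀ n, Nat.Partition n → ℝ)
    (hp : ∀ n : ℕ, 0 < w (n + 1) → ∀ lam : Nat.Partition n,
      p n lam = η (Multiset.card lam.parts) *
        ((Nat.factorial (Multiset.card lam.parts) : ℝ) /
          ∏ i ∈ Finset.range (n + 1), (Nat.factorial (lam.parts.count i) : ℝ)) *
        (lam.parts.map w).prod / w (n + 1))
    {f : ↥Sdown → ℝ} (hf : Continuous f) {C : ℝ} (hC : ∀ s, |f s| ≤ C) :
    Tendsto (fun n : ℕ => Real.sqrt n * ∑ lam : Nat.Partition n,
          p n lam * (1 - partVec n lam 0) * f (toSdown (partVec n lam)))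
        atTop (nhds (c⁻¹ * (σ^2 * (c ^ 2 * ∫ x in (0:ℝ)..1, gwh0 f x)))) := by
  obtain ⟨hpos, hsc⟩ := gw_scale hc0 hc
  refine (hsc.mul (gw_tsum_tendsto hη hw hW hc hf hC)).congr' ?_
  filter_upwards [hpos, eventually_gt_atTop 0] with n hn h0
  have hnR : (0:ℝ) < n := by exact_mod_cast h0
  rw [← gw_identity hη hw hw0 (gwg_bound' hC n) hW.summable n, Finset.mul_sum, Finset.mul_sum]
  apply Finset.sum_congr rfl
  intro lam _
  have hg := gwg_mul (f := f) h0 lam.parts_sum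
  have hsub : lam.parts.toFinset ⊆ Finset.range (n+1) := by
    intro i hi
    rw [Multiset.mem_toFinset] at hi
    rw [Finset.mem_range]
    have := Multiset.le_sum_of_mem hi
    rw [lam.parts_sum] at this
    omega
  have hO : p n lam = η (Multiset.card lam.parts) * gwO w lam.parts / w (n+1) := by
    rw [hp n hn lam]
    unfold gwO
    rw [ms_prod_count hsub]; ring
  rw [hO, mvec_part]
  have e : η (Multiset.card lam.parts) * (gwO w lam.parts * gwD lam.parts) * gwg f n lam.parts =
    η (Multiset.card lam.parts) * gwO w lam.parts * ((n:ℝ)^2 * gwF f n lam.parts) := by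
    rw [← hg]; ring
  rw [e]
  unfold gwF
  field_simp


/-- Lemma for Aldous' theorem via Markov-Branching trees: let `η` be a
critical offspring distribution with variance `σ² ∈ (0,∞)`, aperiodic, with `η(1) < 1`;
let `w(n) = (1/n)·ℙ(Sₙ = −1)` (the probability that a `η`-Galton–Watson tree has `n`
vertices, by the Otter–Dwass formula), and let `(pₙ)` be the splitting distributions
`pₙ(λ) = η(p(λ))·(p(λ)!/∏ᵢ mᵢ(λ)!)·(∏ⱼ w(λⱼ))/w(n+1)`. Then `(pₙ)` satisfies
Hypothesis (H) with `γ = 1/2` and `ν = (σ/2)·ν_Br`: for every bounded continuous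
`f : 𝒮↓ → ℝ`, `√n·Σ_{λ∈𝒫ₙ} pₙ(λ)(1−λ₁/n)f(λ/n)` converges to
`(σ/2)·(√2/√π)·∫_{1/2}^{1}(1−x)·f((x,1−x,0,…))·x^{−3/2}(1−x)^{−3/2} dx`. -/
theorem stmt11 {Ω : Type*} [MeasurableSpace Ω] (P : Measure Ω) [IsProbabilityMeasure P]
    (η : ℕ → ℝ) (hη0 : ∀ i, 0 ≤ η i) (hηsum : HasSum η 1) (hη1 : η 1 < 1)
    (hmean : HasSum (fun i : ℕ => (i : ℝ) * η i) 1)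
    (σ : ℝ) (hσ : 0 < σ)
    (hvar : HasSum (fun i : ℕ => ((i : ℝ) - 1) ^ 2 * η i) (σ ^ 2))
    (haper : ¬ ∃ (a : ℤ) (d : ℤ), 2 ≤ d ∧ ∀ i : ℕ, η i ≠ 0 → d ∣ ((i : ℤ) - 1 - a))
    (ξ : ℕ → Ω → ℤ) (hmeas : ∀ i, Measurable (ξ i))
    (hindep : ProbabilityTheory.iIndepFun ξ P)
    (hlaw : ∀ i : ℕ, ∀ j : ℕ, P {ω | ξ i ω = (j : ℤ) - 1} = ENNReal.ofReal (η j))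
    (w : ℕ → ℝ)
    (hw : ∀ n : ℕ, w n = (P {ω | (∑ i ∈ Finset.range n, ξ i ω) = -1}).toReal / n)
    (p : ∀ n, Nat.Partition n → ℝ)
    (hp : ∀ n : ℕ, 0 < w (n + 1) → ∀ lam : Nat.Partition n,
      p n lam = η (Multiset.card lam.parts) *
        ((Nat.factorial (Multiset.card lam.parts) : ℝ) /
          ∏ i ∈ Finset.range (n + 1), (Nat.factorial (lam.parts.count i) : ℝ)) *
        (lam.parts.map w).prod / w (n + 1)) :
    ∀ f : ↥Sdown → ℝ, Continuous f → (∃ C, ∀ s, |f s| ≤ C) →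
      Tendsto (fun n : ℕ => Real.sqrt n * ∑ lam : Nat.Partition n,
          p n lam * (1 - partVec n lam 0) * f (toSdown (partVec n lam)))
        atTop
        (nhds ((σ / 2) * (Real.sqrt 2 / Real.sqrt π) *
          ∫ x in Set.Ioc (1/2 : ℝ) 1,
            (1 - x) * f (toSdown (pairSeq x)) * x ^ (-(3:ℝ)/2) * (1 - x) ^ (-(3:ℝ)/2))) := by
  intro f hf hC
  obtain ⟨C, hC⟩ := hC
  have hweq := gw_w_eq P hη0 hηsum ξ hmeas hindep hlaw w hw
  obtain ⟨h1, h2, h3, h4⟩ := gw_w_facts hη0 hηsum hη1 hmean hσ hvar haper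
  rw [← hweq] at h1 h2 h3 h4
  have hW := gwW_hasSum hη0 hηsum h1 h3 hmean hvar
  have hpi : 0 < √(2 * π) := Real.sqrt_pos.2 (by positivity)
  have hc0 : 0 < 1 / (σ * √(2 * π)) := by positivity
  have key := gw_final hη0 h1 h2 hW hc0 h4 p hp hf hC
  rw [gw_integral hf hC] at key
  convert! key using 2
  rw [← mul_assoc, ← mul_assoc]
  congr 1
  rw [Real.sqrt_mul (by norm_num)]
  have s1 : 0 < √(2:ℝ) := Real.sqrt_pos.2 (by norm_num)
  have s2 : 0 < √π := Real.sqrt_pos.2 Real.pi_pos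
  have e : √(2:ℝ) ^ 2 = 2 := Real.sq_sqrt (by norm_num)
  field_simp
  try rw [e]
end
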